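/- arXiv:math/0301178 — 2 statements merged into one kernel-verified Lean document; each statement's English description precedes it below -/
import Mathlib

section
/- Let S = (n₁,…,n_k) be a tuple of pairwise coprime integers n_i ≥ 2 with k ≥ 1, and let φ : Γ(S) → ℤ^k be the surjective homomorphism with φ(a_i) = e_i and φ(b) = 0. Then the kernel of φ is not finitely generated. In particular, Γ(S) is a finitely presented solvable group that is not polycyclic. -/
/-- The relators for the group
`Γ(n₁,…,n_k) = ⟨a₁,…,a_k, b ∣ aᵢ⁻¹ b aᵢ = b^{nᵢ}, aᵢaⱼ = aⱼaᵢ (i ≠ j)⟩`.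
The generator `aᵢ` is `Sum.inl i` and `b` is `Sum.inr ()`. -/
def gammaRels {k : ℕ} (n : Fin k → ℕ) : Set (FreeGroup (Fin k ⊕ Unit)) :=
  {r | (∃ i : Fin k,
        r = (FreeGroup.of (Sum.inl i))⁻¹ * FreeGroup.of (Sum.inr ()) *
            FreeGroup.of (Sum.inl i) * (FreeGroup.of (Sum.inr ()) ^ (n i))⁻¹) ∨
      (∃ i j : Fin k, i ≠ j ∧
        r = FreeGroup.of (Sum.inl i) * FreeGroup.of (Sum.inl j) *
            (FreeGroup.of (Sum.inl i))⁻¹ * (FreeGroup.of (Sum.inl j))⁻¹)}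

/-- The group `Γ(n₁,…,n_k)` given by the presentation
`⟨a₁,…,a_k, b ∣ aᵢ⁻¹ b aᵢ = b^{nᵢ}, aᵢaⱼ = aⱼaᵢ (i ≠ j)⟩`. -/
def GammaGroup {k : ℕ} (n : Fin k → ℕ) : Type := PresentedGroup (gammaRels n)

instance {k : ℕ} (n : Fin k → ℕ) : Group (GammaGroup n) := by
  unfold GammaGroup; infer_instance

/-- The generator `aᵢ` of `Γ(n₁,…,n_k)`. -/
def gammaA {k : ℕ} (n : Fin k → ℕ) (i : Fin k) : GammaGroup n :=
  PresentedGroup.of (rels := gammaRels n) (Sum.inl i)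

/-- The generator `b` of `Γ(n₁,…,n_k)`. -/
def gammaB {k : ℕ} (n : Fin k → ℕ) : GammaGroup n :=
  PresentedGroup.of (rels := gammaRels n) (Sum.inr ())

/-- The solvable Baumslag–Solitar group `BS(1,n) = ⟨a, b ∣ a b a⁻¹ = bⁿ⟩`.
The generator `a` is `true` and `b` is `false`. -/
def BS (n : ℕ) : Type :=
  PresentedGroup {FreeGroup.of true * FreeGroup.of false * (FreeGroup.of true)⁻¹ *
    (FreeGroup.of false ^ n)⁻¹}

instance (n : ℕ) : Group (BS n) := by unfold BS; infer_instance

/-- A group is polycyclic if it has a subnormal series with cyclic quotients. -/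
def IsPolycyclic (G : Type*) [Group G] : Prop :=
  ∃ (m : ℕ) (s : Fin (m + 1) → Subgroup G), s 0 = ⊥ ∧ s (Fin.last m) = ⊤ ∧
    ∀ i : Fin m, s i.castSucc ≤ s i.succ ∧
      ∃ hN : ((s i.castSucc).subgroupOf (s i.succ)).Normal,
        (by haveI := hN; exact
          IsCyclic (↥(s i.succ) ⧸ (s i.castSucc).subgroupOf (s i.succ)) : Prop)

/-- A group is finitely presented if it is isomorphic to a group presented by
finitely many generators and finitely many relators. -/
def FinitelyPresentedGroup (G : Type*) [Group G] : Prop :=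
  ∃ (m : ℕ) (rels : Finset (FreeGroup (Fin m))),
    Nonempty (G ≃* PresentedGroup (rels : Set (FreeGroup (Fin m))))

/-! ### helper lemmas -/

theorem gamma_conj {k : ℕ} (n : Fin k → ℕ) (i : Fin k) :
    (gammaA n i)⁻¹ * gammaB n * gammaA n i = gammaB n ^ n i := by
  have h : (PresentedGroup.mk (gammaRels n)) ((FreeGroup.of (Sum.inl i))⁻¹ *
      FreeGroup.of (Sum.inr ()) *
      FreeGroup.of (Sum.inl i) * (FreeGroup.of (Sum.inr ()) ^ (n i))⁻¹) = 1 :=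
    PresentedGroup.one_of_mem (Or.inl ⟨i, rfl⟩)
  simp only [map_mul, map_inv, map_pow] at h
  exact mul_inv_eq_one.mp h

theorem gamma_comm {k : ℕ} (n : Fin k → ℕ) (i j : Fin k) :
    gammaA n i * gammaA n j = gammaA n j * gammaA n i := by
  by_cases hij : i = j
  · rw [hij]
  have h : (PresentedGroup.mk (gammaRels n)) (FreeGroup.of (Sum.inl i) *
      FreeGroup.of (Sum.inl j) *
      (FreeGroup.of (Sum.inl i))⁻¹ * (FreeGroup.of (Sum.inl j))⁻¹) = 1 :=
    PresentedGroup.one_of_mem (Or.inr ⟨i, j, hij, rfl⟩)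
  simp only [map_mul, map_inv] at h
  have h2 := mul_inv_eq_iff_eq_mul.mp (mul_inv_eq_one.mp h)
  exact h2

theorem gamma_closure {k : ℕ} (n : Fin k → ℕ) :
    Subgroup.closure (Set.range (gammaA n) ∪ {gammaB n}) = (⊤ : Subgroup (GammaGroup n)) := by
  have h : Subgroup.closure (Set.range (PresentedGroup.of (rels := gammaRels n))) = ⊤ :=
    PresentedGroup.closure_range_of _
  refine top_le_iff.mp (le_trans (le_of_eq h.symm) (Subgroup.closure_mono ?_))
  rintro _ ⟨(i | u), rfl⟩
  · exact Or.inl ⟨i, rfl⟩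
  · exact Or.inr rfl

/-- The submonoid of positive words in the `aᵢ`. -/
def gammaPos {k : ℕ} (n : Fin k → ℕ) : Submonoid (GammaGroup n) :=
  Submonoid.closure (Set.range (gammaA n))

theorem gammaPos_comm {k : ℕ} (n : Fin k → ℕ) (v w : GammaGroup n)
    (hv : v ∈ gammaPos n) (hw : w ∈ gammaPos n) : v * w = w * v := by
  have h1 : ∀ i, ∀ w ∈ gammaPos n, Commute (gammaA n i) w := by
    intro i w hw
    induction hw using Submonoid.closure_induction with
    | mem x hx => obtain ⟨j, rfl⟩ := hx; exact gamma_comm n i j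
    | one => exact Commute.one_right _
    | mul x y _ _ hx hy => exact hx.mul_right hy
  have h2 : Commute v w := by
    induction hv using Submonoid.closure_induction with
    | mem x hx => obtain ⟨j, rfl⟩ := hx; exact h1 j w hw
    | one => exact Commute.one_left _
    | mul x y _ _ hx hy => exact hx.mul_left hy
  exact h2

theorem gammaPos_conj {k : ℕ} (n : Fin k → ℕ) (w : GammaGroup n)
    (hw : w ∈ gammaPos n) : ∃ M : ℤ, ∀ j : ℤ, w⁻¹ * gammaB n ^ j * w = gammaB n ^ (M * j) := by
  suffices h : ∃ M : ℤ, w⁻¹ * gammaB n * w = gammaB n ^ M by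
    obtain ⟨M, hM⟩ := h
    refine ⟨M, fun j => ?_⟩
    rw [zpow_mul, ← hM]
    have := conj_zpow (i := j) (a := w⁻¹) (b := gammaB n)
    rw [inv_inv] at this
    exact this.symm
  induction hw using Submonoid.closure_induction with
  | mem x hx => obtain ⟨j, rfl⟩ := hx; exact ⟨n j, by rw [gamma_conj, zpow_natCast]⟩
  | one => exact ⟨1, by simp⟩
  | mul x y _ _ hx hy =>
    obtain ⟨M, hM⟩ := hx
    obtain ⟨M', hM'⟩ := hy
    refine ⟨M' * M, ?_⟩
    have := conj_zpow (i := M) (a := y⁻¹) (b := gammaB n)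
    rw [inv_inv] at this
    rw [zpow_mul, ← hM', this, ← hM]
    group

theorem gamma_common {k : ℕ} (n : Fin k → ℕ) {x y : GammaGroup n}
    (hx : ∃ w ∈ gammaPos n, ∃ j : ℤ, w⁻¹ * x * w = gammaB n ^ j)
    (hy : ∃ w ∈ gammaPos n, ∃ j : ℤ, w⁻¹ * y * w = gammaB n ^ j) :
    ∃ w ∈ gammaPos n, ∃ i j : ℤ, x = w * gammaB n ^ i * w⁻¹ ∧ y = w * gammaB n ^ j * w⁻¹ := by
  obtain ⟨v, hv, i, hi⟩ := hx
  obtain ⟨w, hw, j, hj⟩ := hy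
  obtain ⟨M, hM⟩ := gammaPos_conj n v hv
  obtain ⟨L, hL⟩ := gammaPos_conj n w hw
  refine ⟨v * w, mul_mem hv hw, L * i, M * j, ?_, ?_⟩
  · rw [← hL, ← hi]; group
  · rw [gammaPos_comm n v w hv hw, ← hM, ← hj]; group

/-- The normal closure of `b`, described explicitly. -/
def gammaK {k : ℕ} (n : Fin k → ℕ) : Subgroup (GammaGroup n) where
  carrier := {x | ∃ w ∈ gammaPos n, ∃ j : ℤ, w⁻¹ * x * w = gammaB n ^ j}
  one_mem' := ⟨1, one_mem _, 0, by simp⟩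
  mul_mem' := by
    intro x y hx hy
    obtain ⟨w, hw, i, j, rfl, rfl⟩ := gamma_common n hx hy
    refine ⟨w, hw, i + j, ?_⟩
    rw [zpow_add]; group
  inv_mem' := by
    rintro x ⟨w, hw, j, hj⟩
    refine ⟨w, hw, -j, ?_⟩
    rw [zpow_neg, ← hj]; group

theorem gammaB_mem {k : ℕ} (n : Fin k → ℕ) : gammaB n ∈ gammaK n :=
  ⟨1, one_mem _, 1, by simp⟩

theorem gammaK_comm {k : ℕ} (n : Fin k → ℕ) (x y : GammaGroup n)
    (hx : x ∈ gammaK n) (hy : y ∈ gammaK n) : x * y = y * x := by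
  obtain ⟨w, hw, i, j, rfl, rfl⟩ := gamma_common n hx hy
  calc _ = w * (gammaB n ^ i * gammaB n ^ j) * w⁻¹ := by group
    _ = w * (gammaB n ^ j * gammaB n ^ i) * w⁻¹ := by rw [← zpow_add, ← zpow_add, add_comm]
    _ = _ := by group

theorem gammaK_normal {k : ℕ} (n : Fin k → ℕ) : (gammaK n).Normal := by
  have key : ∀ g : GammaGroup n, ∀ x, (x ∈ gammaK n → g * x * g⁻¹ ∈ gammaK n) ∧
      (x ∈ gammaK n → g⁻¹ * x * g ∈ gammaK n) := by
    intro g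
    have hg : g ∈ Subgroup.closure (Set.range (gammaA n) ∪ {gammaB n}) := by
      rw [gamma_closure]; trivial
    induction hg using Subgroup.closure_induction with
    | mem g hg =>
      rcases hg with ⟨i, rfl⟩ | rfl
      · have hp : gammaA n i ∈ gammaPos n := Submonoid.subset_closure ⟨i, rfl⟩
        intro x
        constructor
        · rintro ⟨w, hw, j, hj⟩
          refine ⟨gammaA n i * w, mul_mem hp hw, j, ?_⟩
          rw [← hj]; group
        · rintro ⟨w, hw, j, hj⟩
          obtain ⟨M, hM⟩ := gammaPos_conj n _ hp
          refine ⟨w, hw, M * j, ?_⟩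
          rw [← hM, ← hj]
          have h1 := gammaPos_comm n _ _ hp hw
          calc _ = (gammaA n i * w)⁻¹ * x * (gammaA n i * w) := by group
            _ = (w * gammaA n i)⁻¹ * x * (w * gammaA n i) := by rw [h1]
            _ = _ := by group
      · intro x
        have hb := gammaB_mem n
        exact ⟨fun hx => mul_mem (mul_mem hb hx) (inv_mem hb),
          fun hx => mul_mem (mul_mem (inv_mem hb) hx) hb⟩
    | one => intro x; simp
    | mul g h _ _ ihg ihh =>
      intro x
      refine ⟨fun hx => ?_, fun hx => ?_⟩
      · have := (ihg _).1 ((ihh _).1 hx)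
        convert this using 1; group
      · have := (ihh _).2 ((ihg _).2 hx)
        convert this using 1; group
    | inv g _ ih => intro x; rw [inv_inv]; exact (ih x).symm
  exact ⟨fun x hx g => (key g x).1 hx⟩

theorem gamma_solvable {k : ℕ} (n : Fin k → ℕ) : Group.IsSolvable (GammaGroup n) := by
  haveI := gammaK_normal n
  have hc : ∀ x y : GammaGroup n ⧸ gammaK n, x * y = y * x := by
    have hgen : ∀ g ∈ Set.range (gammaA n) ∪ {gammaB n}, ∀ h ∈ Set.range (gammaA n) ∪ {gammaB n},
        Commute (QuotientGroup.mk' (gammaK n) g) (QuotientGroup.mk' (gammaK n) h) := by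
      have hb : QuotientGroup.mk' (gammaK n) (gammaB n) = 1 :=
        (QuotientGroup.eq_one_iff _).2 (gammaB_mem n)
      rintro g (⟨i, rfl⟩ | rfl) h (⟨j, rfl⟩ | rfl)
      · rw [commute_iff_eq, ← map_mul, gamma_comm, map_mul]
      · rw [hb]; exact Commute.one_right _
      · rw [hb]; exact Commute.one_left _
      · exact Commute.refl _
    have hall : ∀ h : GammaGroup n, h ∈ Subgroup.closure (Set.range (gammaA n) ∪ {gammaB n}) := by
      intro h; rw [gamma_closure]; trivial
    have h1 : ∀ g ∈ Set.range (gammaA n) ∪ {gammaB n}, ∀ h,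
        Commute (QuotientGroup.mk' (gammaK n) g) (QuotientGroup.mk' (gammaK n) h) := by
      intro g hg h
      induction hall h using Subgroup.closure_induction with
      | mem h hh => exact hgen g hg h hh
      | one => rw [map_one]; exact Commute.one_right _
      | mul x y _ _ hx hy => rw [map_mul]; exact hx.mul_right hy
      | inv x _ hx => rw [map_inv]; exact hx.inv_right
    have h2 : ∀ g h,
        Commute (QuotientGroup.mk' (gammaK n) g) (QuotientGroup.mk' (gammaK n) h) := by
      intro g h
      induction hall g using Subgroup.closure_induction with
      | mem g hg => exact h1 g hg h
      | one => rw [map_one]; exact Commute.one_left _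
      | mul x y _ _ hx hy => rw [map_mul]; exact hx.mul_left hy
      | inv x _ hx => rw [map_inv]; exact hx.inv_left
    intro x y
    obtain ⟨g, rfl⟩ := QuotientGroup.mk'_surjective _ x
    obtain ⟨h, rfl⟩ := QuotientGroup.mk'_surjective _ y
    exact h2 g h
  haveI : Group.IsSolvable (GammaGroup n ⧸ gammaK n) := Group.isSolvable_of_comm hc
  haveI : Group.IsSolvable (gammaK n) := Group.isSolvable_of_comm
    (fun x y => Subtype.ext (gammaK_comm n x y x.2 y.2))
  refine Group.isSolvable_of_ker_le_range (gammaK n).subtype (QuotientGroup.mk' (gammaK n)) ?_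
  simp

theorem gamma_fp {k : ℕ} (n : Fin k → ℕ) : FinitelyPresentedGroup (GammaGroup n) := by
  classical
  have hfin : (gammaRels n).Finite := by
    have : gammaRels n ⊆ (Set.range fun i : Fin k =>
        (FreeGroup.of (Sum.inl i))⁻¹ * FreeGroup.of (Sum.inr ()) *
            FreeGroup.of (Sum.inl i) * (FreeGroup.of (Sum.inr ()) ^ (n i))⁻¹) ∪
        (Set.range fun p : Fin k × Fin k =>
        FreeGroup.of (Sum.inl p.1) * FreeGroup.of (Sum.inl p.2) *
            (FreeGroup.of (Sum.inl p.1))⁻¹ * (FreeGroup.of (Sum.inl p.2))⁻¹) := by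
      rintro r (⟨i, rfl⟩ | ⟨i, j, _, rfl⟩)
      · exact Or.inl ⟨i, rfl⟩
      · exact Or.inr ⟨(i, j), rfl⟩
    exact ((Set.finite_range _).union (Set.finite_range _)).subset this
  let e : Fin k ⊕ Unit ≃ Fin (k + 1) :=
    (Equiv.sumCongr (Equiv.refl _) (Equiv.equivPUnit (Fin 1)).symm).trans finSumFinEquiv
  refine ⟨k + 1, (hfin.image (FreeGroup.freeGroupCongr e)).toFinset, ?_⟩
  rw [Set.Finite.coe_toFinset]
  exact ⟨PresentedGroup.equivPresentedGroup (gammaRels n) e⟩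

theorem subgroup_fg_step {G : Type*} [Group G] (H A B : Subgroup G) (hAB : A ≤ B)
    (hN : (A.subgroupOf B).Normal) (hc : IsCyclic (B ⧸ A.subgroupOf B))
    (hA : (H ⊓ A).FG) : (H ⊓ B).FG := by
  classical
  let f : B →* B ⧸ A.subgroupOf B := QuotientGroup.mk' _
  obtain ⟨q, hq⟩ := (Subgroup.isCyclic_iff_exists_zpowers_eq_top
    ((H.subgroupOf B).map f)).1 inferInstance
  have hqm : q ∈ (H.subgroupOf B).map f := by rw [← hq]; exact Subgroup.mem_zpowers q
  obtain ⟨h, hh, rfl⟩ := hqm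
  have hH : (h : G) ∈ H := Subgroup.mem_subgroupOf.1 hh
  obtain ⟨S, hS⟩ := hA
  refine ⟨insert (h : G) S, le_antisymm ?_ ?_⟩
  · rw [Subgroup.closure_le]
    intro x hx
    rw [Finset.coe_insert] at hx
    rcases hx with rfl | hx
    · exact ⟨hH, h.2⟩
    · have : x ∈ H ⊓ A := hS ▸ Subgroup.subset_closure hx
      exact ⟨this.1, hAB this.2⟩
  · rintro x ⟨hxH, hxB⟩
    have h1 : f ⟨x, hxB⟩ ∈ (H.subgroupOf B).map f :=
      ⟨⟨x, hxB⟩, Subgroup.mem_subgroupOf.2 hxH, rfl⟩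
    rw [← hq] at h1
    obtain ⟨m, hm⟩ := h1
    have hm' : f (h ^ m) = f ⟨x, hxB⟩ := by rw [map_zpow]; exact hm
    have h2 : (h ^ m)⁻¹ * ⟨x, hxB⟩ ∈ A.subgroupOf B := QuotientGroup.eq.1 hm'
    have h3 : ((h : G) ^ m)⁻¹ * x ∈ A := by simpa [Subgroup.mem_subgroupOf] using h2
    have h4 : ((h : G) ^ m)⁻¹ * x ∈ H ⊓ A :=
      ⟨H.mul_mem (H.inv_mem (H.zpow_mem hH m)) hxH, h3⟩
    rw [← hS] at h4
    have hle : Subgroup.closure (S : Set G) ≤ Subgroup.closure (insert (h : G) S : Finset G) :=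
      Subgroup.closure_mono (by simp)
    have h5 : (h : G) ∈ Subgroup.closure ((insert (h : G) S : Finset G) : Set G) :=
      Subgroup.subset_closure (by simp)
    have := mul_mem (zpow_mem h5 m) (hle h4)
    simpa using this

theorem polycyclic_fg {G : Type*} [Group G] (hG : IsPolycyclic G) (H : Subgroup G) : H.FG := by
  obtain ⟨m, s, h0, hl, hs⟩ := hG
  have key : ∀ i : Fin (m + 1), (H ⊓ s i).FG := by
    intro i
    induction i using Fin.induction with
    | zero => rw [h0, inf_bot_eq]; exact ⟨∅, by simp⟩
    | succ i ih =>
      obtain ⟨hle, hN, hc⟩ := hs i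
      exact subgroup_fg_step H _ _ hle hN hc ih
  have := key (Fin.last m)
  rwa [hl, inf_top_eq] at this

/-- The images of the generators in the permutations of `ℚ`. -/
def gammaPerm {k : ℕ} (n : Fin k → ℕ) (hn : ∀ i, (n i : ℚ) ≠ 0) :
    Fin k ⊕ Unit → Equiv.Perm ℚ
  | Sum.inl i => Equiv.mulLeft₀ ((n i : ℚ)⁻¹) (inv_ne_zero (hn i))
  | Sum.inr _ => Equiv.addRight 1

theorem perm_apply_inv_self (f : Equiv.Perm ℚ) (x : ℚ) : f (f⁻¹ x) = x :=
  f.apply_symm_apply x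

theorem addRight_pow_apply (m : ℕ) (x : ℚ) :
    ((Equiv.addRight (1 : ℚ) : Equiv.Perm ℚ) ^ m) x = x + m := by
  induction m generalizing x with
  | zero => simp
  | succ m ih =>
    rw [pow_succ, Equiv.Perm.mul_apply, ih]
    simp only [Equiv.coe_addRight]
    push_cast; ring

theorem gammaPerm_rels {k : ℕ} (n : Fin k → ℕ) (hn : ∀ i, (n i : ℚ) ≠ 0) :
    ∀ r ∈ gammaRels n, FreeGroup.lift (gammaPerm n hn) r = 1 := by
  rintro r (⟨i, rfl⟩ | ⟨i, j, _, rfl⟩)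
  · simp only [map_mul, map_inv, map_pow, FreeGroup.lift_apply_of]
    rw [mul_inv_eq_one, mul_assoc, inv_mul_eq_iff_eq_mul]
    ext x
    simp only [gammaPerm, Equiv.Perm.mul_apply, addRight_pow_apply]
    simp only [Equiv.coe_addRight, Equiv.mulLeft₀_apply]
    field_simp [hn i]
  · simp only [map_mul, map_inv, FreeGroup.lift_apply_of]
    rw [mul_inv_eq_one, mul_inv_eq_iff_eq_mul]
    ext x
    simp only [gammaPerm, Equiv.Perm.mul_apply, Equiv.mulLeft₀_apply]
    ring

/-- The affine action of `Γ` on `ℚ`. -/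
def gammaRep {k : ℕ} (n : Fin k → ℕ) (hn : ∀ i, (n i : ℚ) ≠ 0) :
    GammaGroup n →* Equiv.Perm ℚ :=
  PresentedGroup.toGroup (gammaPerm_rels n hn)

theorem gammaRep_A {k : ℕ} (n : Fin k → ℕ) (hn : ∀ i, (n i : ℚ) ≠ 0) (i : Fin k) (x : ℚ) :
    gammaRep n hn (gammaA n i) x = (n i : ℚ)⁻¹ * x := by
  have : gammaRep n hn (gammaA n i) = gammaPerm n hn (Sum.inl i) :=
    PresentedGroup.toGroup.of (gammaPerm_rels n hn)
  rw [this]; rfl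

theorem gammaRep_B {k : ℕ} (n : Fin k → ℕ) (hn : ∀ i, (n i : ℚ) ≠ 0) (x : ℚ) :
    gammaRep n hn (gammaB n) x = x + 1 := by
  have : gammaRep n hn (gammaB n) = gammaPerm n hn (Sum.inr ()) :=
    PresentedGroup.toGroup.of (gammaPerm_rels n hn)
  rw [this]; rfl

theorem gammaRep_slope {k : ℕ} (n : Fin k → ℕ) (hn : ∀ i, (n i : ℚ) ≠ 0)
    (φ : GammaGroup n →* Multiplicative (Fin k → ℤ))
    (hA : ∀ i : Fin k, φ (gammaA n i) = Multiplicative.ofAdd (Pi.single i 1))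
    (hB : φ (gammaB n) = 1) (g : GammaGroup n) (x y : ℚ) :
    gammaRep n hn g x - gammaRep n hn g y =
      (∏ i, (n i : ℚ) ^ (-(Multiplicative.toAdd (φ g) i))) * (x - y) := by
  have hg : g ∈ Subgroup.closure (Set.range (gammaA n) ∪ {gammaB n}) := by
    rw [gamma_closure]; trivial
  induction hg using Subgroup.closure_induction generalizing x y with
  | mem g hg =>
    rcases hg with ⟨i, rfl⟩ | rfl
    · rw [hA, gammaRep_A, gammaRep_A, Finset.prod_eq_single i]
      · simp; ring
      · intro j _ hj; simp [Pi.single_eq_of_ne hj]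
      · simp
    · rw [hB, gammaRep_B, gammaRep_B]; simp
  | one => simp
  | mul g h _ _ ihg ihh =>
    rw [map_mul, Equiv.Perm.mul_apply, Equiv.Perm.mul_apply, ihg, ihh, ← mul_assoc,
      ← Finset.prod_mul_distrib]
    congr 1
    refine Finset.prod_congr rfl fun i _ => ?_
    rw [← zpow_add₀ (hn i), map_mul, toAdd_mul, Pi.add_apply, neg_add]
  | inv g _ ih =>
    have h := ih ((gammaRep n hn g)⁻¹ x) ((gammaRep n hn g)⁻¹ y)
    rw [perm_apply_inv_self, perm_apply_inv_self] at h
    rw [map_inv, h, ← mul_assoc, ← Finset.prod_mul_distrib]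
    rw [Finset.prod_eq_one, one_mul]
    intro i _
    rw [← zpow_add₀ (hn i), map_inv, toAdd_inv, Pi.neg_apply]
    simp

theorem gamma_ker_not_fg {k : ℕ} (n : Fin k → ℕ) (hk : 1 ≤ k)
    (hn2 : ∀ i, 2 ≤ n i)
    (φ : GammaGroup n →* Multiplicative (Fin k → ℤ))
    (hA : ∀ i : Fin k, φ (gammaA n i) = Multiplicative.ofAdd (Pi.single i 1))
    (hB : φ (gammaB n) = 1) : ¬ (MonoidHom.ker φ).FG := by
  have hn : ∀ i, (n i : ℚ) ≠ 0 := fun i => by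
    have := hn2 i
    exact_mod_cast (by omega : n i ≠ 0)
  rintro ⟨S, hS⟩
  have htr : ∀ g ∈ MonoidHom.ker φ, ∀ x, gammaRep n hn g x = x + gammaRep n hn g 0 := by
    intro g hg x
    have h := gammaRep_slope n hn φ hA hB g x 0
    rw [MonoidHom.mem_ker.1 hg] at h
    simp at h
    linarith
  -- a common denominator
  let D : ℕ := ∏ g ∈ S, (gammaRep n hn g 0).den
  have hD : D ≠ 0 := Finset.prod_ne_zero_iff.2 fun g _ => (gammaRep n hn g 0).den_nz
  have hint : ∀ g ∈ MonoidHom.ker φ, ∃ z : ℤ, (D : ℚ) * gammaRep n hn g 0 = z := by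
    intro g hg
    rw [← hS] at hg
    induction hg using Subgroup.closure_induction with
    | mem g hg =>
      obtain ⟨c, hc⟩ : (gammaRep n hn g 0).den ∣ D :=
        Finset.dvd_prod_of_mem (fun g => (gammaRep n hn g 0).den) (Finset.mem_coe.1 hg)
      refine ⟨c * (gammaRep n hn g 0).num, ?_⟩
      rw [hc]
      push_cast
      have := Rat.den_mul_eq_num (gammaRep n hn g 0)
      linear_combination (c : ℚ) * this
    | one => exact ⟨0, by simp⟩
    | mul g h hg hh ihg ihh =>
      rw [hS] at hg hh
      obtain ⟨a, ha⟩ := ihg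
      obtain ⟨b, hb⟩ := ihh
      refine ⟨a + b, ?_⟩
      rw [map_mul, Equiv.Perm.mul_apply, htr g hg]
      push_cast
      linear_combination ha + hb
    | inv g hg ih =>
      rw [hS] at hg
      obtain ⟨a, ha⟩ := ih
      refine ⟨-a, ?_⟩
      have h := htr g hg ((gammaRep n hn g)⁻¹ 0)
      rw [perm_apply_inv_self] at h
      rw [map_inv]
      push_cast
      linear_combination -ha - (D : ℚ) * h
  let i0 : Fin k := ⟨0, hk⟩
  have hconj : ∀ m : ℕ, gammaRep n hn (gammaA n i0 ^ m * gammaB n * (gammaA n i0 ^ m)⁻¹) 0 =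
      ((n i0 : ℚ)⁻¹) ^ m := by
    intro m
    have hp : ∀ (m : ℕ) (x : ℚ), gammaRep n hn (gammaA n i0 ^ m) x = ((n i0 : ℚ)⁻¹) ^ m * x := by
      intro m
      induction m with
      | zero => intro x; simp
      | succ m ih => intro x; rw [pow_succ, map_mul, Equiv.Perm.mul_apply, ih, gammaRep_A]; ring
    have h0 : (gammaRep n hn (gammaA n i0 ^ m))⁻¹ 0 = 0 := by
      rw [Equiv.Perm.inv_eq_iff_eq, hp, mul_zero]
    rw [map_mul, map_mul, map_inv, Equiv.Perm.mul_apply, Equiv.Perm.mul_apply, h0, gammaRep_B, hp]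
    simp
  have hmem : gammaA n i0 ^ D * gammaB n * (gammaA n i0 ^ D)⁻¹ ∈ MonoidHom.ker φ := by
    rw [MonoidHom.mem_ker, map_mul, map_mul, hB, map_inv]; simp
  obtain ⟨z, hz⟩ := hint _ hmem
  rw [hconj, inv_pow] at hz
  have hz2 : (D : ℚ) = z * (n i0 : ℚ) ^ D := by
    rw [← hz, mul_assoc, inv_mul_cancel₀ (pow_ne_zero _ (hn i0)), mul_one]
  have hz3 : (D : ℤ) = z * (n i0 : ℤ) ^ D := by exact_mod_cast hz2
  have hdvd : n i0 ^ D ∣ D := by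
    have : ((n i0 ^ D : ℕ) : ℤ) ∣ (D : ℤ) := ⟨z, by push_cast; rw [mul_comm]; exact hz3⟩
    exact_mod_cast this
  have h1 := Nat.le_of_dvd (Nat.pos_of_ne_zero hD) hdvd
  have h2 : D < n i0 ^ D := Nat.lt_pow_self (hn2 i0)
  omega

/-- The kernel of the projection `φ : Γ(S) → ℤ^k` is not finitely generated;
in particular `Γ(S)` is a finitely presented solvable group which is not
polycyclic. -/
theorem gammaGroup_ker_not_fg {k : ℕ} (n : Fin k → ℕ) (hk : 1 ≤ k)
    (hn2 : ∀ i, 2 ≤ n i) (hcop : ∀ i j, i ≠ j → Nat.Coprime (n i) (n j))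
    (φ : GammaGroup n →* Multiplicative (Fin k → ℤ))
    (hsurj : Function.Surjective φ)
    (hA : ∀ i : Fin k, φ (gammaA n i) = Multiplicative.ofAdd (Pi.single i 1))
    (hB : φ (gammaB n) = 1) :
    ¬ Group.FG (MonoidHom.ker φ) ∧
      FinitelyPresentedGroup (GammaGroup n) ∧
      IsSolvable (GammaGroup n) ∧
      ¬ IsPolycyclic (GammaGroup n) := by
  have hfg := gamma_ker_not_fg n hk hn2 φ hA hB
  refine ⟨fun h => hfg ((Group.fg_iff_subgroup_fg _).1 h), gamma_fp n, gamma_solvable n,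
    fun h => hfg (polycyclic_fg h _)⟩
end

section
/- Let T be a bounded valence, bushy tree with its graph metric, and suppose a group G quasi-acts on T, i.e. there is an assignment g ↦ A_g of (K,C)-quasi-isometries of T with uniform constants K, C such that A_identity is within uniformly bounded sup-distance of the identity map and, for all g, h ∈ G, A_{gh} is within uniformly bounded sup-distance of A_g ∘ A_h. Then there exist a bounded valence, bushy tree T', an isometric action of G on T' by graph automorphisms, and a quasi-isometry f : T' → T which intertwines the action of G on T' with the quasi-action of G on T to within a uniformly bounded distance, i.e. sup over g ∈ G and x ∈ T' of d(f(g·x), A_g(f(x))) is finite. -/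
def IsQI {X Y : Type*} (K C : ℝ) (dX : X → X → ℝ) (dY : Y → Y → ℝ)
    (f : X → Y) : Prop :=
  (∀ x₁ x₂ : X, dX x₁ x₂ / K - C ≤ dY (f x₁) (f x₂)) ∧
  (∀ x₁ x₂ : X, dY (f x₁) (f x₂) ≤ K * dX x₁ x₂ + C) ∧
  (∀ y : Y, ∃ x : X, dY (f x) y ≤ C)

/-- The graph (shortest path) metric of a graph, with values in `ℝ`. -/
noncomputable def gdist {V : Type*} (T : SimpleGraph V) (u v : V) : ℝ :=
  (T.dist u v : ℝ)

/-- A graph has bounded valence if all vertex degrees are uniformly bounded. -/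
def BoundedValence {V : Type*} (T : SimpleGraph V) : Prop :=
  ∃ D : ℕ, ∀ v : V, (T.neighborSet v).Finite ∧ (T.neighborSet v).ncard ≤ D

/-- A tree is bushy if every vertex is a uniformly bounded distance from a
vertex whose removal leaves at least three unbounded connected components. -/
def Bushy {V : Type*} (T : SimpleGraph V) : Prop :=
  ∃ β : ℕ, ∀ v : V, ∃ w : V, T.dist v w ≤ β ∧
    ∃ c : Fin 3 → (T.induce ({w}ᶜ : Set V)).ConnectedComponent,
      Function.Injective c ∧
      ∀ (i : Fin 3) (R : ℕ), ∃ u : ({w}ᶜ : Set V),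
        (T.induce ({w}ᶜ : Set V)).connectedComponentMk u = c i ∧ R ≤ T.dist w u


namespace QT

set_option linter.unusedVariables false
open scoped Pointwise

section TreeMetric

variable {V : Type} {T : SimpleGraph V}

/-- the shadow of `x` seen from `v`. -/
def Sh (T : SimpleGraph V) (v x : V) : Set V :=
  {z | T.dist v z = T.dist v x + T.dist x z}

theorem tri (hT : T.IsTree) (a b c : V) : T.dist a c ≤ T.dist a b + T.dist b c :=
  hT.connected.dist_triangle

theorem dz (hT : T.IsTree) {a b : V} : T.dist a b = 0 ↔ a = b :=
  hT.connected.dist_eq_zero_iff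

theorem adj_step (hT : T.IsTree) (v : V) {x y : V} (h : T.Adj x y) :
    T.dist v x = T.dist v y + 1 ∨ T.dist v y = T.dist v x + 1 := by
  have h1 := hT.dist_ne_of_adj v h
  have h2 := tri hT v x y
  have h3 := tri hT v y x
  have h4 : T.dist x y = 1 := SimpleGraph.dist_eq_one_iff_adj.mpr h
  have h5 : T.dist y x = 1 := SimpleGraph.dist_eq_one_iff_adj.mpr h.symm
  omega

theorem exists_parent (hT : T.IsTree) {v x : V} (h : v ≠ x) :
    ∃ p, T.Adj p x ∧ T.dist v x = T.dist v p + 1 := by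
  obtain ⟨w, hw⟩ := hT.connected.exists_walk_length_eq_dist x v
  cases w with
  | nil => exact absurd rfl h
  | @cons _ p _ hadj q =>
    refine ⟨p, hadj.symm, ?_⟩
    have h1 : T.dist p v ≤ q.length := SimpleGraph.dist_le q
    have h2 := adj_step hT v hadj
    have h3 := T.dist_comm (u := p) (v := v)
    have h4 := T.dist_comm (u := x) (v := v)
    simp only [SimpleGraph.Walk.length_cons] at hw
    omega

theorem parent_unique (hT : T.IsTree) {v x p q : V} (hp : T.Adj p x) (hq : T.Adj q x)
    (hp' : T.dist v x = T.dist v p + 1) (hq' : T.dist v x = T.dist v q + 1) : p = q := by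
  obtain ⟨w, hw⟩ := hT.connected.exists_walk_length_eq_dist p v
  obtain ⟨w', hw'⟩ := hT.connected.exists_walk_length_eq_dist q v
  have h4 := T.dist_comm (u := x) (v := v)
  have h5 := T.dist_comm (u := p) (v := v)
  have h6 := T.dist_comm (u := q) (v := v)
  have e1 : (SimpleGraph.Walk.cons hp.symm w).IsPath := by
    apply SimpleGraph.Walk.isPath_of_length_eq_dist
    simp only [SimpleGraph.Walk.length_cons]; omega
  have e2 : (SimpleGraph.Walk.cons hq.symm w').IsPath := by
    apply SimpleGraph.Walk.isPath_of_length_eq_dist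
    simp only [SimpleGraph.Walk.length_cons]; omega
  have := (hT.existsUnique_path x v).unique e1 e2
  have h := congrArg SimpleGraph.Walk.snd this
  simpa using h

theorem self_mem_Sh (v x : V) : x ∈ Sh T v x := by simp [Sh]

theorem Sh_self (v : V) : Sh T v v = Set.univ := by ext; simp [Sh]

theorem mem_Sh {v x z : V} : z ∈ Sh T v x ↔ T.dist v z = T.dist v x + T.dist x z := Iff.rfl

/-- children stay in the shadow -/
theorem Sh_child (hT : T.IsTree) {v x z w : V} (hz : z ∈ Sh T v x) (h : T.Adj z w)
    (hd : T.dist v w = T.dist v z + 1) : w ∈ Sh T v x := by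
  have h1 := tri hT v x w
  have h2 := tri hT x z w
  have h4 : T.dist z w = 1 := SimpleGraph.dist_eq_one_iff_adj.mpr h
  rw [mem_Sh] at *
  omega

/-- parents stay in the shadow -/
theorem Sh_parent (hT : T.IsTree) {v x z p : V} (hz : z ∈ Sh T v x) (hne : z ≠ x) (h : T.Adj p z)
    (hd : T.dist v z = T.dist v p + 1) : p ∈ Sh T v x ∧ T.dist x z = T.dist x p + 1 := by
  obtain ⟨p', hp', hd'⟩ := exists_parent hT (Ne.symm hne)
  have h1 := tri hT v x p'
  have h2 := adj_step hT v hp'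
  rw [mem_Sh] at hz
  have : p' = p := parent_unique hT hp' h (v := v) (by omega) hd
  subst this
  rw [mem_Sh]
  constructor <;> omega

/-- shadow membership is locally constant away from the edge at `x`. -/
theorem Sh_adj (hT : T.IsTree) {v x z w : V} (h : T.Adj z w) (hz : z ≠ x) (hw : w ≠ x) :
    z ∈ Sh T v x ↔ w ∈ Sh T v x := by
  rcases adj_step hT v h with h1 | h1
  · exact ⟨fun hz' => (Sh_parent hT hz' hz h.symm h1).1, fun hw' => Sh_child hT hw' h.symm h1⟩
  · exact ⟨fun hz' => Sh_child hT hz' h h1, fun hw' => (Sh_parent hT hw' hw h h1).1⟩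

theorem Sh_compl (hT : T.IsTree) {p q : V} (h : T.Adj p q) : (Sh T p q)ᶜ = Sh T q p := by
  ext z
  have h4 : T.dist p q = 1 := SimpleGraph.dist_eq_one_iff_adj.mpr h
  have h5 : T.dist q p = 1 := SimpleGraph.dist_eq_one_iff_adj.mpr h.symm
  have h6 := adj_step hT z h
  have h7 := T.dist_comm (u := p) (v := z)
  have h8 := T.dist_comm (u := q) (v := z)
  rw [Set.mem_compl_iff, mem_Sh, mem_Sh]
  omega

theorem Sh_eq_of_parent (hT : T.IsTree) {v p q : V} (h : T.Adj p q)
    (hd : T.dist v q = T.dist v p + 1) : Sh T v q = Sh T p q := by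
  have h4 : T.dist p q = 1 := SimpleGraph.dist_eq_one_iff_adj.mpr h
  apply Set.Subset.antisymm
  · intro z hz
    have h1 := tri hT v p z
    have h2 := tri hT p q z
    rw [mem_Sh] at *
    omega
  · intro z
    induction hn : T.dist q z using Nat.strong_induction_on generalizing z with
    | _ n ih =>
      intro hz
      by_cases hqz : q = z
      · subst hqz; exact self_mem_Sh _ _
      obtain ⟨z', hz', hd'⟩ := exists_parent hT hqz
      have hz'' : z' ∈ Sh T p q := by
        have h1 := tri hT p z' z
        have h2 := tri hT p q z'
        have h3 : T.dist z' z = 1 := SimpleGraph.dist_eq_one_iff_adj.mpr hz'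
        rw [mem_Sh] at *
        omega
      have hm := ih _ (by omega) rfl hz''
      rcases adj_step hT v hz' with h5 | h5
      · exfalso
        by_cases hq' : z' = q
        · subst hq'
          have : z = p := parent_unique hT hz'.symm h (v := v) (by omega) hd
          subst this
          rw [mem_Sh] at hz
          simp at hz
          omega
        · have := (Sh_parent hT hm hq' hz'.symm (by omega)).2
          omega
      · exact Sh_child hT hm hz' h5

theorem Sh_trans (hT : T.IsTree) {v x z : V} (h : z ∈ Sh T v x) : Sh T v z ⊆ Sh T v x := by
  intro y hy
  have h1 := tri hT x z y
  have h2 := tri hT v x y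
  rw [mem_Sh] at *
  omega

/-- ancestors at a given level are unique -/
theorem anc_unique (hT : T.IsTree) {v x x' z : V} (h : z ∈ Sh T v x) (h' : z ∈ Sh T v x')
    (hd : T.dist v x = T.dist v x') : x = x' := by
  induction hn : T.dist x z generalizing z with
  | zero =>
    rw [mem_Sh] at *
    have h1 : x = z := (dz hT).1 hn
    have h2 : x' = z := (dz hT).1 (by omega)
    rw [h1, h2]
  | succ n ih =>
    have hxz : z ≠ x := by rintro rfl; simp at hn
    have hxz' : z ≠ x' := by
      rintro rfl
      rw [mem_Sh] at *; simp at *; omega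
    have hvz : v ≠ z := by
      rintro rfl
      rw [mem_Sh] at *; simp at *; omega
    obtain ⟨p, hp, hpd⟩ := exists_parent hT hvz
    have a := Sh_parent hT h hxz hp hpd
    have b := Sh_parent hT h' hxz' hp hpd
    exact ih a.1 b.1 (by omega)

theorem anc_exists (hT : T.IsTree) (v z : V) (t : ℕ) (ht : t ≤ T.dist v z) :
    ∃ x, T.dist v x = t ∧ z ∈ Sh T v x := by
  obtain ⟨k, hk⟩ := Nat.exists_eq_add_of_le ht
  induction k generalizing z with
  | zero => exact ⟨z, by omega, self_mem_Sh _ _⟩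
  | succ k ih =>
    have hvz : v ≠ z := by rintro rfl; simp at hk
    obtain ⟨p, hp, hpd⟩ := exists_parent hT hvz
    obtain ⟨x, hx, hm⟩ := ih p (by omega) (by omega)
    exact ⟨x, hx, Sh_child hT hm hp hpd⟩

/-- if `w ∉ Sh v x`, the shadows of `x` from `v` and from `w` agree. -/
theorem Sh_change (hT : T.IsTree) {v w x : V} (hv : v ≠ x) (hw : w ∉ Sh T v x) :
    Sh T v x = Sh T w x := by
  obtain ⟨p, hp, hpd⟩ := exists_parent hT hv
  rw [Sh_eq_of_parent hT hp hpd] at hw ⊢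
  have : w ∈ Sh T x p := by rw [← Sh_compl hT hp]; exact hw
  refine (Sh_eq_of_parent hT hp ?_).symm
  rw [mem_Sh] at this
  have h4 : T.dist x p = 1 := SimpleGraph.dist_eq_one_iff_adj.mpr hp.symm
  have h7 := T.dist_comm (u := p) (v := w)
  have h8 := T.dist_comm (u := x) (v := w)
  omega

/-- medians -/
theorem exists_median (hT : T.IsTree) (v w y : V) : ∃ m, T.dist v w = T.dist v m + T.dist m w ∧
    T.dist v y = T.dist v m + T.dist m y ∧ T.dist w y = T.dist w m + T.dist m y := by
  induction hn : T.dist v w generalizing w with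
  | zero =>
    have : v = w := (dz hT).1 hn
    subst this
    exact ⟨v, by simp⟩
  | succ n ih =>
    have hvw : v ≠ w := by rintro rfl; simp at hn
    obtain ⟨w', hw', hd⟩ := exists_parent hT hvw
    obtain ⟨m, h1, h2, h3⟩ := ih w' (by omega)
    have hmw : T.dist m w = T.dist m w' + 1 := by
      have a := tri hT v m w
      have b := adj_step hT m hw'
      omega
    have c1 := T.dist_comm (u := w) (v := y)
    have c2 := T.dist_comm (u := w') (v := y)
    have c3 := T.dist_comm (u := w) (v := m)
    have c4 := T.dist_comm (u := w') (v := m)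
    have c5 := T.dist_comm (u := m) (v := y)
    rcases adj_step hT y hw' with h5 | h5
    · by_cases hm : w' = m
      · subst hm
        refine ⟨w, ?_, ?_, ?_⟩ <;> simp at * <;> omega
      · exfalso
        obtain ⟨q, hq, hqd⟩ := exists_parent hT (Ne.symm hm)
        have a := tri hT y m q
        have b := adj_step hT y hq
        have : w = q := parent_unique hT hw'.symm hq (v := y) (by omega) (by omega)
        subst this
        omega
    · exact ⟨m, by omega, by omega, by omega⟩

/-- bounded spheres -/
theorem sphere_bound (hT : T.IsTree) {D : ℕ}
    (hD : ∀ v : V, (T.neighborSet v).Finite ∧ (T.neighborSet v).ncard ≤ D) (v : V) (t : ℕ) :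
    ∃ S : Finset V, S.card ≤ D ^ t ∧ ∀ x, T.dist v x = t → x ∈ S := by
  classical
  induction t with
  | zero =>
    refine ⟨{v}, by simp, fun x hx => ?_⟩
    rw [(dz hT).1 hx]; simp
  | succ t ih =>
    obtain ⟨S, hS, hm⟩ := ih
    refine ⟨S.biUnion fun y => (hD y).1.toFinset, ?_, ?_⟩
    · refine (Finset.card_biUnion_le_card_mul S _ D fun y _ => ?_).trans ?_
      · rw [← Set.ncard_eq_toFinset_card _ (hD y).1]; exact (hD y).2
      · rw [pow_succ]; gcongr
    · intro x hx
      have : v ≠ x := by rintro rfl; simp at hx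
      obtain ⟨p, hp, hpd⟩ := exists_parent hT this
      rw [Finset.mem_biUnion]
      exact ⟨p, hm p (by omega), by simpa using hp⟩

theorem ball_finite (hT : T.IsTree) {D : ℕ}
    (hD : ∀ v : V, (T.neighborSet v).Finite ∧ (T.neighborSet v).ncard ≤ D) (v : V) (t : ℕ) :
    {x | T.dist v x ≤ t}.Finite := by
  classical
  have : {x | T.dist v x ≤ t} = ⋃ i ∈ Set.Iic t, {x | T.dist v x = i} := by
    ext x; simp
  rw [this]
  refine Set.Finite.biUnion (Set.finite_Iic t) fun i _ => ?_
  obtain ⟨S, _, hS⟩ := sphere_bound hT hD v i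
  exact S.finite_toSet.subset fun x hx => hS x hx

end TreeMetric

end QT

namespace QT

set_option linter.unusedVariables false
open scoped Pointwise
variable {V : Type} {T : SimpleGraph V}

/-- `U` has its coboundary inside the ball of radius `r` about `v`. -/
def CobIn (T : SimpleGraph V) (U : Set V) (v : V) (r : ℕ) : Prop :=
  ∀ x y, T.Adj x y → r < T.dist v x → r < T.dist v y → (x ∈ U ↔ y ∈ U)

def BC (T : SimpleGraph V) (U : Set V) : Prop := ∃ v r, CobIn T U v r

theorem CobIn.move (hT : T.IsTree) {U : Set V} {v w : V} {r r' : ℕ} (h : CobIn T U v r)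
    (hr : r + T.dist v w ≤ r') : CobIn T U w r' := by
  intro x y hxy hx hy
  have h1 := tri hT w v x
  have h2 := tri hT w v y
  rw [T.dist_comm (u := w) (v := v)] at h1 h2
  exact h x y hxy (by omega) (by omega)

theorem CobIn.compl {U : Set V} {v : V} {r : ℕ} (h : CobIn T U v r) : CobIn T Uᶜ v r := by
  intro x y hxy hx hy
  simp only [Set.mem_compl_iff, h x y hxy hx hy]

theorem CobIn.inter {U W : Set V} {v : V} {r : ℕ} (h : CobIn T U v r) (h' : CobIn T W v r) :
    CobIn T (U ∩ W) v r := by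
  intro x y hxy hx hy
  simp only [Set.mem_inter_iff, h x y hxy hx hy, h' x y hxy hx hy]

theorem BC.compl {U : Set V} (h : BC T U) : BC T Uᶜ := by
  obtain ⟨v, r, h⟩ := h; exact ⟨v, r, h.compl⟩

theorem BC.inter (hT : T.IsTree) {U W : Set V} (h : BC T U) (h' : BC T W) : BC T (U ∩ W) := by
  obtain ⟨v, r, h⟩ := h
  obtain ⟨w, s, h'⟩ := h'
  exact ⟨v, max r (s + T.dist w v), CobIn.inter (h.move hT (by simp)) (h'.move hT (by simp))⟩

theorem CobIn.const (hT : T.IsTree) {U : Set V} {v a b : V} {r : ℕ} (h : CobIn T U v r)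
    (hd : r + T.dist a b < T.dist v a) : a ∈ U ↔ b ∈ U := by
  induction hn : T.dist a b generalizing b with
  | zero => rw [(dz hT).1 hn]
  | succ n ih =>
    have hne : a ≠ b := by rintro rfl; simp at hn
    obtain ⟨p, hp, hpd⟩ := exists_parent hT hne
    rw [ih (b := p) (by omega) (by omega)]
    have h1 := tri hT v p a
    have h2 := tri hT v b a
    rw [T.dist_comm (u := p)] at h1
    rw [T.dist_comm (u := b)] at h2
    exact h p b hp (by omega) (by omega)

/-- constant on shadows -/
theorem CobIn.const_Sh (hT : T.IsTree) {U : Set V} {v x z : V} {r : ℕ} (h : CobIn T U v r)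
    (hd : r < T.dist v x) (hz : z ∈ Sh T v x) : x ∈ U ↔ z ∈ U := by
  induction hn : T.dist x z generalizing z with
  | zero => rw [(dz hT).1 hn]
  | succ n ih =>
    have hne : x ≠ z := by rintro rfl; simp at hn
    rw [mem_Sh] at hz
    obtain ⟨p, hp, hpd⟩ := exists_parent hT (v := v) (x := z) (by rintro rfl; simp at hz; omega)
    obtain ⟨h1, h2⟩ := Sh_parent hT hz (Ne.symm hne) hp hpd
    rw [ih h1 (by omega)]
    rw [mem_Sh] at h1
    exact h p z hp (by omega) (by omega)

theorem cobIn_Sh (hT : T.IsTree) (v x : V) : CobIn T (Sh T v x) v (T.dist v x) := by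
  intro a b hab ha hb
  exact Sh_adj hT hab (by rintro rfl; omega) (by rintro rfl; omega)

theorem bc_Sh (hT : T.IsTree) (v x : V) : BC T (Sh T v x) := ⟨_, _, cobIn_Sh hT v x⟩

/-- Ends of the tree. -/
@[ext] structure Pt (T : SimpleGraph V) where
  s : Set (Set V)
  bc : ∀ U ∈ s, BC T U
  inter : ∀ U ∈ s, ∀ W ∈ s, U ∩ W ∈ s
  compl : ∀ U, BC T U → (Uᶜ ∈ s ↔ U ∉ s)
  fin : ∀ U : Set V, U.Finite → U ∉ s

theorem Pt.mono (P : Pt T) {U W : Set V} (hU : U ∈ P.s) (hW : BC T W) (h : U ⊆ W) : W ∈ P.s := by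
  by_contra hc
  have h1 := (P.compl W hW).2 hc
  have h2 := P.inter _ hU _ h1
  refine P.fin _ ?_ h2
  have : U ∩ Wᶜ = ∅ := by
    ext x; simp; exact fun hx => h hx
  rw [this]; exact Set.finite_empty

theorem Pt.mono_fin (P : Pt T) {U W : Set V} (hU : U ∈ P.s) (hW : BC T W) (h : (U \ W).Finite) :
    W ∈ P.s := by
  by_contra hc
  have h1 := (P.compl W hW).2 hc
  have h2 := P.inter _ hU _ h1
  exact P.fin _ h h2

theorem Pt.inter_iff (hT : T.IsTree) (P : Pt T) {U W : Set V} (hU : BC T U) (hW : BC T W) :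
    U ∩ W ∈ P.s ↔ U ∈ P.s ∧ W ∈ P.s :=
  ⟨fun h => ⟨P.mono h hU Set.inter_subset_left, P.mono h hW Set.inter_subset_right⟩,
   fun h => P.inter _ h.1 _ h.2⟩

def hat (T : SimpleGraph V) (U : Set V) : Set (Pt T) := {P | U ∈ P.s}

theorem mem_hat {U : Set V} {P : Pt T} : P ∈ hat T U ↔ U ∈ P.s := Iff.rfl

theorem hat_compl {U : Set V} (hU : BC T U) : hat T Uᶜ = (hat T U)ᶜ := by
  ext P; exact P.compl U hU

theorem hat_mono {U W : Set V} (hW : BC T W) (h : U ⊆ W) : hat T U ⊆ hat T W :=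
  fun P hP => P.mono hP hW h

theorem hat_inter (hT : T.IsTree) {U W : Set V} (hU : BC T U) (hW : BC T W) :
    hat T (U ∩ W) = hat T U ∩ hat T W := by
  ext P; exact P.inter_iff hT hU hW

theorem hat_nonempty (hT : T.IsTree) {U : Set V} (hU : BC T U) (hinf : U.Infinite) :
    (hat T U).Nonempty := by
  have hne : (Filter.cofinite ⊓ Filter.principal U).NeBot := by
    exact Filter.frequently_mem_iff_neBot.1 (Filter.frequently_cofinite_mem_iff_infinite.2 hinf)
  obtain ⟨ω, hω⟩ := Filter.exists_ultrafilter_le (Filter.cofinite ⊓ Filter.principal U)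
  have hω1 : (ω : Filter V) ≤ Filter.cofinite := hω.trans inf_le_left
  have hω2 : U ∈ ω := by
    have := hω.trans inf_le_right
    exact Filter.le_principal_iff.1 this
  refine ⟨⟨{W | BC T W ∧ W ∈ ω}, fun W h => h.1, fun W h W' h' =>
    ⟨h.1.inter hT h'.1, Filter.inter_mem h.2 h'.2⟩, fun W hW => ?_, fun W hW h => ?_⟩, ⟨hU, hω2⟩⟩
  · constructor
    · rintro ⟨-, h⟩ ⟨-, h'⟩
      exact (Ultrafilter.compl_mem_iff_notMem.1 h) h'
    · intro h
      refine ⟨hW.compl, Ultrafilter.compl_mem_iff_notMem.2 fun h' => h ⟨hW, h'⟩⟩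
  · have : Wᶜ ∈ ω := hω1 hW.compl_mem_cofinite
    exact (Ultrafilter.compl_mem_iff_notMem.1 this) h.2

theorem hat_empty_of_finite {U : Set V} (h : U.Finite) : hat T U = ∅ := by
  ext P; simp [hat]; exact P.fin U h

/-- basic clopen sets -/
def hs (T : SimpleGraph V) (v x : V) : Set (Pt T) := hat T (Sh T v x)

/-- Standing assumptions on the tree. -/
structure TB (T : SimpleGraph V) (D : ℕ) : Prop where
  tree : T.IsTree
  deg : ∀ v : V, (T.neighborSet v).Finite ∧ (T.neighborSet v).ncard ≤ D

theorem Pt.univ_mem (P : Pt T) [Nonempty V] : Set.univ ∈ P.s := by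
  have h : BC T (∅ : Set V) := ⟨Classical.arbitrary V, 0, fun x y _ _ _ => Iff.rfl⟩
  have := (P.compl ∅ h).2 (P.fin _ Set.finite_empty)
  simpa using this

theorem hs_self (v : V) : hs T v v = Set.univ := by
  have : Nonempty V := ⟨v⟩
  ext P; simp [hs, Sh_self, mem_hat, P.univ_mem]

theorem hs_trans (hT : T.IsTree) {v x z : V} (h : z ∈ Sh T v x) : hs T v z ⊆ hs T v x :=
  hat_mono (bc_Sh hT v x) (Sh_trans hT h)

theorem hs_compl (hT : T.IsTree) {p q : V} (h : T.Adj p q) : (hs T p q)ᶜ = hs T q p := by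
  rw [hs, ← hat_compl (bc_Sh hT p q), Sh_compl hT h]; rfl

theorem hs_change (hT : T.IsTree) {v w x : V} (hv : v ≠ x) (hw : w ∉ Sh T v x) :
    hs T v x = hs T w x := by rw [hs, Sh_change hT hv hw]; rfl

theorem hs_eq_of_parent (hT : T.IsTree) {v p q : V} (h : T.Adj p q)
    (hd : T.dist v q = T.dist v p + 1) : hs T v q = hs T p q := by
  rw [hs, Sh_eq_of_parent hT h hd]; rfl

/-- disjointness / uniqueness -/
theorem hs_unique (hT : T.IsTree) {v x x' : V} {P : Pt T} (h : P ∈ hs T v x) (h' : P ∈ hs T v x')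
    (hd : T.dist v x = T.dist v x') : x = x' := by
  have h1 := P.inter _ h _ h'
  by_contra hne
  refine P.fin _ ?_ h1
  have : Sh T v x ∩ Sh T v x' = ∅ := by
    ext z; simp only [Set.mem_inter_iff, Set.mem_empty_iff_false, iff_false]
    rintro ⟨h2, h3⟩
    exact hne (anc_unique hT h2 h3 hd)
  rw [this]; exact Set.finite_empty

/-- If two shadows meet with x closer, then nested. -/
theorem mem_Sh_of_hs (hT : T.IsTree) {v x z : V} {P : Pt T} (h : P ∈ hs T v x) (h' : P ∈ hs T v z)
    (hd : T.dist v x ≤ T.dist v z) : z ∈ Sh T v x := by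
  obtain ⟨y, hy, hz⟩ := anc_exists hT v z _ hd
  have := hs_unique hT h (hs_trans hT hz h') hy.symm
  rwa [this]

theorem Pt.union (P : Pt T) {ι : Type} (S : Finset ι) (U : ι → Set V) (hU : ∀ i ∈ S, BC T (U i))
    {F : Set V} (hF : F.Finite) (hT : T.IsTree) (W : Set V) (hW : W ∈ P.s)
    (hc : W ⊆ F ∪ ⋃ i ∈ S, U i) :
    ∃ i ∈ S, U i ∈ P.s := by
  classical
  induction S using Finset.induction_on generalizing W with
  | empty => exact absurd hW (P.fin _ (hF.subset (by simpa using hc)))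
  | insert a S ha ih =>
    by_cases h : U a ∈ P.s
    · exact ⟨a, by simp, h⟩
    · have h1 := (P.compl _ (hU a (by simp))).2 h
      obtain ⟨i, hi, h2⟩ := ih (fun i hi => hU i (by simp [hi])) (W ∩ (U a)ᶜ) (P.inter _ hW _ h1) (by
        rintro x ⟨hx, hxa⟩
        have := hc hx
        simp only [Set.mem_union, Set.mem_iUnion, Finset.mem_insert] at this ⊢
        rcases this with h3 | ⟨i, rfl | hi, h3⟩
        · exact Or.inl h3
        · exact absurd h3 hxa
        · exact Or.inr ⟨i, hi, h3⟩)
      exact ⟨i, by simp [hi], h2⟩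

theorem exists_hs {D : ℕ} (hB : TB T D) (P : Pt T) (v : V) (t : ℕ) :
    ∃ x, T.dist v x = t ∧ P ∈ hs T v x := by
  classical
  have hT := hB.tree
  have : Nonempty V := ⟨v⟩
  obtain ⟨S, -, hS⟩ := sphere_bound hT hB.deg v t
  obtain ⟨x, hx, h⟩ := P.union (S.filter fun x => T.dist v x = t) (fun x => Sh T v x)
    (fun x _ => bc_Sh hT v x) (ball_finite hT hB.deg v t) hT Set.univ P.univ_mem (by
      intro z _
      by_cases hz : T.dist v z ≤ t
      · exact Or.inl hz
      · obtain ⟨x, hx, hzx⟩ := anc_exists hT v z t (by omega)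
        refine Or.inr ?_
        simp only [Set.mem_iUnion, Finset.mem_filter]
        exact ⟨x, ⟨hS x hx, hx⟩, hzx⟩)
  exact ⟨x, (Finset.mem_filter.1 hx).2, h⟩

end QT

namespace QT

set_option linter.unusedVariables false
open scoped Pointwise
variable {V : Type} {T : SimpleGraph V}

/-- bushiness in terms of shadows -/
def Bu0 (T : SimpleGraph V) (β : ℕ) : Prop :=
  ∀ v, ∃ w, T.dist v w ≤ β ∧ ∃ n : Fin 3 → V, Function.Injective n ∧
    ∀ i, T.Adj w (n i) ∧ (Sh T w (n i)).Infinite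

theorem reach_of_Sh (hT : T.IsTree) {w n : V} (h : T.Adj w n) {z : V} (hz : z ∈ Sh T w n)
    (hn : n ∈ ({w}ᶜ : Set V)) (hz' : z ∈ ({w}ᶜ : Set V)) :
    (T.induce ({w}ᶜ : Set V)).Reachable ⟨n, hn⟩ ⟨z, hz'⟩ := by
  induction hd : T.dist n z generalizing z with
  | zero =>
    have := (dz hT).1 hd
    subst this
    exact SimpleGraph.Reachable.refl _
  | succ k ih =>
    obtain ⟨p, hp, hpd⟩ := exists_parent hT (v := w) (x := z) (fun h => hz' h.symm)
    obtain ⟨h1, h2⟩ := Sh_parent hT hz (by rintro rfl; simp at hd) hp hpd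
    have hpw : p ∈ ({w}ᶜ : Set V) := by
      intro h3
      rw [Set.mem_singleton_iff] at h3
      subst h3
      rw [mem_Sh] at h1
      have := SimpleGraph.dist_eq_one_iff_adj.mpr h
      simp at h1
      omega
    refine (ih h1 hpw (by omega)).trans (SimpleGraph.Adj.reachable ?_)
    simpa using hp

theorem Sh_of_reach (hT : T.IsTree) {w n : V} (h : T.Adj w n) {a b : ({w}ᶜ : Set V)}
    (hr : (T.induce ({w}ᶜ : Set V)).Reachable a b) (ha : (a : V) ∈ Sh T w n) :
    (b : V) ∈ Sh T w n := by
  obtain ⟨W⟩ := hr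
  induction W with
  | nil => exact ha
  | cons hadj p ih =>
    apply ih
    rw [← Sh_compl hT h.symm] at ha ⊢
    simp only [SimpleGraph.comap_adj, Function.Embedding.subtype_apply] at hadj
    rename_i u v w'
    intro hc
    exact ha ((Sh_adj hT hadj u.2 v.2).2 hc)

theorem bu0_of_bushy (hT : T.IsTree) {β : ℕ} (hb : ∀ v : V, ∃ w : V, T.dist v w ≤ β ∧
    ∃ c : Fin 3 → (T.induce ({w}ᶜ : Set V)).ConnectedComponent,
      Function.Injective c ∧
      ∀ (i : Fin 3) (R : ℕ), ∃ u : ({w}ᶜ : Set V),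
        (T.induce ({w}ᶜ : Set V)).connectedComponentMk u = c i ∧ R ≤ T.dist w u) : Bu0 T β := by
  intro v
  obtain ⟨w, hw, c, hc, hu⟩ := hb v
  refine ⟨w, hw, ?_⟩
  have key : ∀ i, ∃ n, ∃ (hn : n ∈ ({w}ᶜ : Set V)), T.Adj w n ∧
      (T.induce ({w}ᶜ : Set V)).connectedComponentMk ⟨n, hn⟩ = c i := by
    intro i
    obtain ⟨u, hu1, hu2⟩ := hu i 0
    have hne : (w : V) ≠ u := fun h => u.2 h.symm
    have : T.dist w u ≠ 0 := fun h => hne ((dz hT).1 h)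
    obtain ⟨n, hn1, hn2⟩ := anc_exists hT w u 1 (by omega)
    have hadj := SimpleGraph.dist_eq_one_iff_adj.1 hn1
    refine ⟨n, hadj.ne', hadj, ?_⟩
    rw [← hu1]
    exact SimpleGraph.ConnectedComponent.sound (reach_of_Sh hT hadj hn2 _ u.2)
  choose n hn hadj hcomp using key
  refine ⟨n, ?_, fun i => ⟨hadj i, ?_⟩⟩
  · intro i j hij
    apply hc
    rw [← hcomp i, ← hcomp j]
    congr 1
    exact Subtype.ext hij
  · intro hfin
    have : BddAbove ((fun z => T.dist w z) '' Sh T w (n i)) := (hfin.image _).bddAbove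
    obtain ⟨R, hR⟩ := this
    obtain ⟨u, hu1, hu2⟩ := hu i (R+1)
    have := hR ⟨u, Sh_of_reach hT (hadj i) (a := ⟨n i, hn i⟩) (b := u)
      (SimpleGraph.ConnectedComponent.exact ((hcomp i).trans hu1.symm)) (self_mem_Sh _ _), rfl⟩
    simp at this
    omega

theorem cobIn_Sh' (hT : T.IsTree) (v x : V) : CobIn T (Sh T v x) x 0 := by
  intro a b hab ha hb
  exact Sh_adj hT hab (by rintro rfl; simp at ha) (by rintro rfl; simp at hb)

/-- third branch -/
theorem third_branch (hT : T.IsTree) {w : V} {n : Fin 3 → V} (hinj : Function.Injective n)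
    (hadj : ∀ i, T.Adj w (n i)) (a b : V) : ∃ i, a ∉ Sh T w (n i) ∧ b ∉ Sh T w (n i) := by
  have h1 : ∀ a i j, a ∈ Sh T w (n i) → a ∈ Sh T w (n j) → i = j := by
    intro a i j hi hj
    apply hinj
    apply anc_unique hT hi hj
    rw [SimpleGraph.dist_eq_one_iff_adj.2 (hadj i), SimpleGraph.dist_eq_one_iff_adj.2 (hadj j)]
  by_contra! hc
  have hab : ∀ i, a ∈ Sh T w (n i) ∨ b ∈ Sh T w (n i) := by
    intro i
    by_cases h : a ∈ Sh T w (n i)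
    · exact Or.inl h
    · exact Or.inr (hc i h)
  have e01 : (0 : Fin 3) ≠ 1 := by decide
  have e02 : (0 : Fin 3) ≠ 2 := by decide
  have e12 : (1 : Fin 3) ≠ 2 := by decide
  rcases hab 0 with h0 | h0 <;> rcases hab 1 with h1' | h1' <;> rcases hab 2 with h2 | h2
  · exact e01 (h1 a _ _ h0 h1')
  · exact e01 (h1 a _ _ h0 h1')
  · exact e02 (h1 a _ _ h0 h2)
  · exact e12 (h1 b _ _ h1' h2)
  · exact e12 (h1 a _ _ h1' h2)
  · exact e02 (h1 b _ _ h0 h2)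
  · exact e01 (h1 b _ _ h0 h1')
  · exact e01 (h1 b _ _ h0 h1')

theorem bu {β : ℕ} (hT : T.IsTree) (hb : Bu0 T β) {v x z : V} (hz : z ∈ Sh T v x)
    (hd : 2 * β + 2 ≤ T.dist x z) : (hs T v x \ hs T v z).Nonempty := by
  obtain ⟨m, hm, hmz⟩ := anc_exists hT v z (T.dist v x + (β + 1)) (by rw [mem_Sh] at hz; omega)
  have hmx : m ∈ Sh T v x := by
    obtain ⟨x', hx', hmx'⟩ := anc_exists hT v m (T.dist v x) (by omega)
    have := anc_unique hT hz (Sh_trans hT hmx' hmz) hx'.symm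
    rwa [this]
  obtain ⟨w, hw, n, hinj, hn⟩ := hb m
  obtain ⟨i, hvi, hzi⟩ := third_branch hT hinj (fun i => (hn i).1) v z
  obtain ⟨P, hP⟩ := hat_nonempty hT (bc_Sh hT w (n i)) (hn i).2
  have hmz' := mem_Sh.1 hmz
  have hmx' := mem_Sh.1 hmx
  have hz' := mem_Sh.1 hz
  have hwx : w ∈ Sh T v x := by
    rw [← (cobIn_Sh' hT v x).const hT (a := m) (b := w) (by omega)]
    exact hmx
  have hadj := (hn i).1
  have hchild : T.dist v (n i) = T.dist v w + 1 := by
    have : v ∈ Sh T (n i) w := by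
      rw [← Sh_compl hT hadj]; exact hvi
    rw [mem_Sh, SimpleGraph.dist_eq_one_iff_adj.2 hadj.symm] at this
    rw [T.dist_comm, this, T.dist_comm]; omega
  have hSh : Sh T v (n i) = Sh T w (n i) := Sh_eq_of_parent hT hadj hchild
  have hnw : n i ∈ Sh T v x := Sh_child hT hwx hadj hchild
  refine ⟨P, hs_trans hT hnw ?_, fun hc => ?_⟩
  · rw [hs, mem_hat, hSh]; exact hP
  · have hP' : P ∈ hs T v (n i) := by rw [hs, mem_hat, hSh]; exact hP
    rcases le_total (T.dist v (n i)) (T.dist v z) with hle | hle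
    · have := mem_Sh_of_hs hT hP' hc hle
      rw [hSh] at this
      exact hzi this
    · have h1 := mem_Sh_of_hs hT hc hP' hle
      have h2 := (Sh_parent hT h1 (by intro h; rw [← h] at hzi; exact hzi (self_mem_Sh _ _)) hadj hchild).1
      rw [mem_Sh] at h2
      have := tri hT v m w
      omega

end QT

namespace QT

set_option linter.unusedVariables false
open scoped Pointwise
variable {V : Type} {T : SimpleGraph V}

def Loc (T : SimpleGraph V) (u : Set (Pt T)) (v : V) (r : ℕ) : Prop :=
  ∀ x, r < T.dist v x → hs T v x ⊆ u ∨ hs T v x ⊆ uᶜ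

/-- all four corners are nonempty -/
def Cr {α : Type} (u w : Set α) : Prop :=
  (u ∩ w).Nonempty ∧ (u ∩ wᶜ).Nonempty ∧ (uᶜ ∩ w).Nonempty ∧ (uᶜ ∩ wᶜ).Nonempty

def Nt {α : Type} (u : Set α) : Prop := u.Nonempty ∧ uᶜ.Nonempty

theorem Loc.compl {u : Set (Pt T)} {v : V} {r : ℕ} (h : Loc T u v r) : Loc T uᶜ v r := by
  intro x hx
  rw [compl_compl]; exact (h x hx).symm

theorem loc_compl {u : Set (Pt T)} {v : V} {r : ℕ} : Loc T uᶜ v r ↔ Loc T u v r :=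
  ⟨fun h => by simpa using h.compl, Loc.compl⟩

theorem Loc.inter {u w : Set (Pt T)} {v : V} {r : ℕ} (h : Loc T u v r) (h' : Loc T w v r) :
    Loc T (u ∩ w) v r := by
  intro x hx
  rcases h x hx with h1 | h1
  · rcases h' x hx with h2 | h2
    · exact Or.inl fun P hP => ⟨h1 hP, h2 hP⟩
    · exact Or.inr fun P hP hc => h2 hP hc.2
  · exact Or.inr fun P hP hc => h1 hP hc.1

theorem Loc.move (hT : T.IsTree) {u : Set (Pt T)} {v w : V} {r r' : ℕ} (h : Loc T u v r)
    (hr : r + T.dist v w ≤ r') : Loc T u w r' := by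
  intro x hx
  have h1 : v ∉ Sh T w x := by
    intro hc
    rw [mem_Sh, T.dist_comm (u := w) (v := v)] at hc
    omega
  have h2 : w ≠ x := by rintro rfl; simp at hx
  rw [hs_change hT h2 h1]
  apply h
  have := tri hT w v x
  rw [T.dist_comm (u := w) (v := v)] at this
  omega

theorem Loc.mono (hT : T.IsTree) {u : Set (Pt T)} {v : V} {r r' : ℕ} (h : Loc T u v r)
    (hr : r ≤ r') : Loc T u v r' := h.move hT (by simpa using hr)

theorem loc_hat (hT : T.IsTree) {U : Set V} {v : V} {r : ℕ} (h : CobIn T U v r) :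
    Loc T (hat T U) v r := by
  intro x hx
  have hU : BC T U := ⟨v, r, h⟩
  by_cases hxU : x ∈ U
  · exact Or.inl (hat_mono hU fun z hz => (h.const_Sh hT hx hz).1 hxU)
  · refine Or.inr ?_
    rw [← hat_compl hU]
    exact hat_mono hU.compl fun z hz hc => hxU ((h.const_Sh hT hx hz).2 hc)

theorem loc_hs (hT : T.IsTree) (v x : V) : Loc T (hs T v x) x 0 := loc_hat hT (cobIn_Sh' hT v x)

theorem loc_rep {D : ℕ} (hB : TB T D) {u : Set (Pt T)} {v : V} {r : ℕ} (h : Loc T u v r) :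
    ∃ U, u = hat T U ∧ CobIn T U v r := by
  have hT := hB.tree
  set U : Set V := {x | ∃ q, T.dist v q = r + 1 ∧ x ∈ Sh T v q ∧ hs T v q ⊆ u} with hUdef
  have hcob : CobIn T U v r := by
    have key : ∀ x y, T.Adj x y → r < T.dist v x → r < T.dist v y → x ∈ U → y ∈ U := by
      rintro x y hxy hx hy ⟨q, hq, hxq, hqu⟩
      refine ⟨q, hq, ?_, hqu⟩
      rcases adj_step hT v hxy with h1 | h1
      · exact (Sh_parent hT hxq (by rintro rfl; omega) hxy.symm h1).1
      · exact Sh_child hT hxq hxy h1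
    exact fun x y hxy hx hy => ⟨key x y hxy hx hy, key y x hxy.symm hy hx⟩
  have hbc : BC T U := ⟨v, r, hcob⟩
  refine ⟨U, ?_, hcob⟩
  ext P
  obtain ⟨q, hq, hP⟩ := exists_hs hB P v (r+1)
  constructor
  · intro hPu
    have hqu : hs T v q ⊆ u := by
      rcases h q (by omega) with h1 | h1
      · exact h1
      · exact absurd hPu (h1 hP)
    exact P.mono hP hbc fun z hz => ⟨q, hq, hz, hqu⟩
  · intro hPU
    rcases h q (by omega) with h1 | h1
    · exact h1 hP
    · exfalso
      refine P.fin _ ?_ (P.inter _ hP _ hPU)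
      have : Sh T v q ∩ U = ∅ := by
        ext z
        simp only [Set.mem_inter_iff, Set.mem_empty_iff_false, iff_false]
        rintro ⟨h2, q', hq', hzq', hq'u⟩
        have := anc_unique hT h2 hzq' (by omega)
        subst this
        exact h1 hP (hq'u hP)
      rw [this]; exact Set.finite_empty

theorem loc_count {D : ℕ} (hB : TB T D) (r : ℕ) : ∃ N : ℕ, ∀ v,
    {u | Loc T u v r}.Finite ∧ {u | Loc T u v r}.ncard ≤ N := by
  classical
  have hT := hB.tree
  refine ⟨2 ^ D ^ (r + 1), fun v => ?_⟩
  obtain ⟨S, hS, hS'⟩ := sphere_bound hT hB.deg v (r + 1)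
  let f : Set (Pt T) → Finset V := fun u => S.filter fun x => T.dist v x = r + 1 ∧ hs T v x ⊆ u
  have hmaps : ∀ u ∈ {u | Loc T u v r}, f u ∈ (S.powerset : Set (Finset V)) := by
    intro u _
    exact Finset.mem_coe.2 (Finset.mem_powerset.2 (Finset.filter_subset _ _))
  have key : ∀ u ∈ {u | Loc T u v r}, ∀ u' : Set (Pt T), f u = f u' → u ⊆ u' := by
    intro u hu u' hf P hP
    obtain ⟨x, hx, hPx⟩ := exists_hs hB P v (r+1)
    have h1 : hs T v x ⊆ u := by
      rcases hu x (by omega) with h1 | h1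
      · exact h1
      · exact absurd hP (h1 hPx)
    have h2 : x ∈ f u := Finset.mem_filter.2 ⟨hS' x hx, hx, h1⟩
    rw [hf] at h2
    exact (Finset.mem_filter.1 h2).2.2 hPx
  have hinj : Set.InjOn f {u | Loc T u v r} := fun u hu u' hu' hf =>
    Set.Subset.antisymm (key u hu u' hf) (key u' hu' u hf.symm)
  refine ⟨Set.Finite.of_injOn hmaps hinj (Finset.finite_toSet _), ?_⟩
  refine (Set.ncard_le_ncard_of_injOn f hmaps hinj (Finset.finite_toSet _)).trans ?_
  rw [Set.ncard_coe_finset, Finset.card_powerset]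
  exact Nat.pow_le_pow_right (by norm_num) hS

/-- complement of a shadow set, seen from the other side -/
theorem hs_compl_far (hT : T.IsTree) {v w x : V} (hvx : v ≠ x) (hx : w ∈ Sh T v x) :
    ∃ p, (hs T v x)ᶜ = hs T w p ∧ T.dist w p = T.dist w x + 1 := by
  obtain ⟨p, hp, hpd⟩ := exists_parent hT hvx
  have h1 : T.dist w p = T.dist w x + 1 := by
    have h2 := tri hT v p w
    have h3 := tri hT w x p
    rw [SimpleGraph.dist_eq_one_iff_adj.2 hp.symm] at h3
    rw [mem_Sh, T.dist_comm (u := x)] at hx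
    rw [T.dist_comm (u := p)] at h2
    omega
  refine ⟨p, ?_, h1⟩
  rw [hs_eq_of_parent hT hp hpd, hs_compl hT hp, hs_eq_of_parent hT hp.symm h1]

theorem sep_region (hT : T.IsTree) {v w : V} {r s : ℕ} (hd : r + s < T.dist v w) :
    ∃ A : Set (Pt T), (∀ u, Loc T u v r → A ⊆ u ∨ A ⊆ uᶜ) ∧
      (∀ u, Loc T u w s → Aᶜ ⊆ u ∨ Aᶜ ⊆ uᶜ) := by
  obtain ⟨x, hx, hw⟩ := anc_exists hT v w (r + 1) (by omega)
  obtain ⟨p, hp, hpd⟩ := hs_compl_far hT (by rintro rfl; simp at hx) hw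
  refine ⟨hs T v x, fun u hu => hu x (by omega), fun u hu => ?_⟩
  rw [hp]
  refine hu p ?_
  rw [mem_Sh, T.dist_comm (u := x)] at hw
  omega

theorem not_cr_of_region {α : Type} {A u w : Set α} (h : A ⊆ u ∨ A ⊆ uᶜ) (h' : Aᶜ ⊆ w ∨ Aᶜ ⊆ wᶜ) :
    ¬ Cr u w := by
  rintro ⟨⟨a, ha, ha'⟩, ⟨b, hb, hb'⟩, ⟨c, hc, hc'⟩, ⟨d, hd, hd'⟩⟩
  have e : ∀ x, x ∈ A ∨ x ∈ Aᶜ := fun x => Classical.em _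
  rcases h with h | h <;> rcases h' with h' | h'
  · rcases e d with k | k
    exacts [hd (h k), hd' (h' k)]
  · rcases e c with k | k
    exacts [hc (h k), h' k hc']
  · rcases e b with k | k
    exacts [h k hb, hb' (h' k)]
  · rcases e a with k | k
    exacts [h k ha, h' k ha']

theorem not_cr_of_far (hT : T.IsTree) {v w : V} {r s : ℕ} {u u' : Set (Pt T)} (hu : Loc T u v r)
    (hu' : Loc T u' w s) (hd : r + s < T.dist v w) : ¬ Cr u u' := by
  obtain ⟨A, h1, h2⟩ := sep_region hT hd
  exact not_cr_of_region (h1 u hu) (h2 u' hu')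

theorem loc_close (hT : T.IsTree) {β : ℕ} (hb : Bu0 T β) {v w : V} {r s : ℕ} {u : Set (Pt T)}
    (hn : Nt u) (hu : Loc T u v r) (hu' : Loc T u w s) :
    T.dist v w ≤ r + s + (2 * β + 2) := by
  by_contra hc
  push Not at hc
  obtain ⟨z, hz, hw⟩ := anc_exists hT v w (r + 1 + (2 * β + 2)) (by omega)
  obtain ⟨x, hx, hzx⟩ := anc_exists hT v z (r + 1) (by omega)
  obtain ⟨p, hp, hpd⟩ := hs_compl_far hT (by rintro rfl; simp at hz) hw
  rw [mem_Sh] at hw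
  obtain ⟨P, hP1, hP2⟩ := bu hT hb hzx (by rw [mem_Sh] at hzx; omega)
  have h1 := hu x (by omega)
  have h2 := hu' p (by rw [hpd, T.dist_comm]; omega)
  rw [← hp] at h2
  have hsub := hs_trans hT hzx
  obtain ⟨⟨a, ha⟩, ⟨b, hb⟩⟩ := hn
  have e : ∀ y, y ∈ hs T v z ∨ y ∈ (hs T v z)ᶜ := fun x => Classical.em _
  rcases h1 with h1 | h1 <;> rcases h2 with h2 | h2
  · rcases e b with k | k
    exacts [hb (h1 (hsub k)), hb (h2 k)]
  · exact h2 hP2 (h1 hP1)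
  · exact h1 hP1 (h2 hP2)
  · rcases e a with k | k
    exacts [h1 (hsub k) ha, h2 k ha]

theorem loc_between (hT : T.IsTree) {v w y : V} {r : ℕ} {U X F : Set (Pt T)} (hUX : U ⊆ X)
    (hXF : X ⊆ F) (hU : U.Nonempty) (hF : Fᶜ.Nonempty) (hlU : Loc T U v r) (hlF : Loc T F w r)
    (hlX : Loc T X y r) :
    ∃ m, T.dist v w = T.dist v m + T.dist m w ∧ Loc T X m (3 * r + 1) := by
  obtain ⟨m, h1, h2, h3⟩ := exists_median hT v w y
  by_cases hd : T.dist y m ≤ 2 * r + 1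
  · exact ⟨m, h1, hlX.move hT (by omega)⟩
  have hym : T.dist y m = T.dist m y := T.dist_comm
  obtain ⟨x, hx, hyx⟩ := anc_exists hT v y (T.dist v m + (r + 1)) (by omega)
  have hyx' := mem_Sh.1 hyx
  have hvx : v ≠ x := by rintro rfl; simp at hx
  obtain ⟨p, hp, hpd⟩ := hs_compl_far hT hvx hyx
  have hxy : T.dist x y = T.dist y x := T.dist_comm
  have hwx : w ∉ Sh T v x := by
    intro hc
    rw [mem_Sh] at hc
    have := tri hT w x y
    have h5 := T.dist_comm (u := w) (v := x)
    have h6 := T.dist_comm (u := w) (v := m)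
    omega
  have hA := hlU x (by omega)
  have hA' := hlF x (by
    have h5 := tri hT w x y
    have h6 := tri hT y x m
    omega)
  rw [← hs_change hT hvx hwx] at hA'
  have hAc := hlX p (by omega)
  rw [← hp] at hAc
  obtain ⟨a, ha⟩ := hU
  obtain ⟨b, hb⟩ := hF
  have e : ∀ y, y ∈ hs T v x ∨ y ∈ (hs T v x)ᶜ := fun x => Classical.em _
  rcases hAc with h | h
  · have hbA : b ∈ hs T v x := by
      rcases e b with k | k
      exacts [k, absurd (hXF (h k)) hb]
    have hA'' : hs T v x ⊆ Fᶜ := by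
      rcases hA' with k | k
      exacts [absurd (k hbA) hb, k]
    have : X = F := by
      apply Set.Subset.antisymm hXF
      intro P hP
      rcases e P with k | k
      exacts [absurd hP (hA'' k), h k]
    subst this
    exact ⟨w, by simp, hlF.mono hT (by omega)⟩
  · have haA : a ∈ hs T v x := by
      rcases e a with k | k
      exacts [k, absurd (hUX ha) (h k)]
    have hA'' : hs T v x ⊆ U := by
      rcases hA with k | k
      exacts [k, absurd ha (k haA)]
    have : X = U := by
      apply Set.Subset.antisymm _ hUX
      intro P hP
      rcases e P with k | k
      exacts [hA'' k, absurd hP (h k)]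
    subst this
    exact ⟨v, by simp, hlU.mono hT (by omega)⟩

end QT

namespace QT

set_option linter.unusedVariables false
open scoped Pointwise
variable {V : Type} {T : SimpleGraph V}

structure QA {G : Type} [Group G] (T : SimpleGraph V) (A : G → V → V) (κ : ℕ) : Prop where
  up : ∀ g x y, T.dist (A g x) (A g y) ≤ κ * T.dist x y + κ
  lo : ∀ g x y, T.dist x y ≤ κ * T.dist (A g x) (A g y) + κ
  comp : ∀ g h x, T.dist (A (g * h) x) (A g (A h x)) ≤ κ
  one : ∀ x, T.dist (A 1 x) x ≤ κ

variable {G : Type} [Group G] {A : G → V → V} {κ D : ℕ}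

theorem QA.cob (hT : T.IsTree) (hA : QA T A κ) (g : G) {U : Set V} {w : V} {r : ℕ}
    (h : CobIn T U (A g w) r) : CobIn T (A g ⁻¹' U) w (κ * (r + 2 * κ) + κ) := by
  intro x y hxy hx hy
  apply h.const hT (a := A g x) (b := A g y)
  have h1 := hA.up g x y
  rw [SimpleGraph.dist_eq_one_iff_adj.2 hxy] at h1
  have h2 := hA.lo g w x
  by_contra hc
  have h3 : T.dist (A g w) (A g x) ≤ r + 2 * κ := by omega
  have := Nat.mul_le_mul_left κ h3
  omega

theorem QA.bc (hT : T.IsTree) (hA : QA T A κ) (g : G) {U : Set V} (h : BC T U) :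
    BC T (A g ⁻¹' U) := by
  obtain ⟨v, r, h⟩ := h
  exact ⟨v, _, hA.cob hT g (h.move hT (w := A g v) le_rfl)⟩

theorem QA.fin (hB : TB T D) (hA : QA T A κ) (g : G) {U : Set V} (h : U.Finite) :
    (A g ⁻¹' U).Finite := by
  refine h.preimage' fun b _ => ?_
  by_cases hne : (A g ⁻¹' {b}).Nonempty
  · obtain ⟨x, hx⟩ := hne
    refine (ball_finite hB.tree hB.deg x κ).subset fun y hy => ?_
    have := hA.lo g x y
    simp only [Set.mem_preimage, Set.mem_singleton_iff] at hx hy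
    rw [hx, hy] at this
    simpa using this
  · rw [Set.not_nonempty_iff_eq_empty.1 hne]; exact Set.finite_empty

/-- preimages under close maps have finite difference. -/
theorem diff_fin (hB : TB T D) (hA : QA T A κ) (g : G) (f' : V → V)
    (hf : ∀ x, T.dist (A g x) (f' x) ≤ κ) {U : Set V} (h : BC T U) :
    (A g ⁻¹' U \ f' ⁻¹' U).Finite ∧ (f' ⁻¹' U \ A g ⁻¹' U).Finite := by
  obtain ⟨v, r, h⟩ := h
  have hfin := hA.fin hB g (ball_finite hB.tree hB.deg v (r + κ))
  have key : ∀ x, ¬ (A g x ∈ U ↔ f' x ∈ U) → x ∈ A g ⁻¹' {x | T.dist v x ≤ r + κ} := by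
    intro x hx
    by_contra hc
    simp only [Set.mem_preimage, Set.mem_ofPred_eq, not_le] at hc
    have := hf x
    exact hx (h.const hB.tree (by omega))
  constructor
  · exact hfin.subset fun x hx => key x fun hc => hx.2 (hc.1 hx.1)
  · exact hfin.subset fun x hx => key x fun hc => hx.2 (hc.2 hx.1)

theorem close_mem (hB : TB T D) (hA : QA T A κ) (g : G) (f' : V → V)
    (hf : ∀ x, T.dist (A g x) (f' x) ≤ κ) {U : Set V} (h : BC T U) (h' : BC T (f' ⁻¹' U))
    (P : Pt T) : A g ⁻¹' U ∈ P.s ↔ f' ⁻¹' U ∈ P.s :=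
  ⟨fun hh => P.mono_fin hh h' (diff_fin hB hA g f' hf h).1,
   fun hh => P.mono_fin hh (hA.bc hB.tree g h) (diff_fin hB hA g f' hf h).2⟩

def act (hB : TB T D) (hA : QA T A κ) (g : G) (P : Pt T) : Pt T where
  s := {U | BC T U ∧ A g ⁻¹' U ∈ P.s}
  bc := fun U h => h.1
  inter := fun U h W h' => ⟨h.1.inter hB.tree h'.1, P.inter _ h.2 _ h'.2⟩
  compl := fun U h => by
    constructor
    · rintro ⟨h1, h2⟩ ⟨h3, h4⟩
      exact (P.compl _ (hA.bc hB.tree g h)).1 h2 h4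
    · intro h1
      exact ⟨h.compl, (P.compl _ (hA.bc hB.tree g h)).2 fun h2 => h1 ⟨h, h2⟩⟩
  fin := fun U h h' => P.fin _ (hA.fin hB g h) h'.2

@[reducible] def mulAct (hB : TB T D) (hA : QA T A κ) : MulAction G (Pt T) where
  smul g P := act hB hA g P
  one_smul P := by
    apply Pt.ext
    ext U
    constructor
    · rintro ⟨h1, h2⟩
      exact (close_mem hB hA 1 id hA.one h1 h1 P).1 h2
    · intro h
      exact ⟨P.bc _ h, (close_mem hB hA 1 id hA.one (P.bc _ h) (P.bc _ h) P).2 h⟩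
  mul_smul g h P := by
    apply Pt.ext
    ext U
    constructor
    · rintro ⟨h1, h2⟩
      have h3 := hA.bc hB.tree g h1
      exact ⟨h1, h3, (close_mem hB hA (g * h) (A g ∘ A h) (hA.comp g h) h1
        (hA.bc hB.tree h h3) P).1 h2⟩
    · rintro ⟨h1, h3, h2⟩
      exact ⟨h1, (close_mem hB hA (g * h) (A g ∘ A h) (hA.comp g h) h1
        (hA.bc hB.tree h h3) P).2 h2⟩

theorem smul_hat (hB : TB T D) (hA : QA T A κ) (g : G) {U : Set V} (hU : BC T U) :
    letI := mulAct hB hA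
    g • hat T U = hat T (A g⁻¹ ⁻¹' U) := by
  let _ := mulAct hB hA
  ext P
  rw [Set.mem_smul_set_iff_inv_smul_mem]
  constructor
  · rintro ⟨-, h⟩; exact h
  · intro h; exact ⟨hU, h⟩

theorem loc_smul (hB : TB T D) (hA : QA T A κ) (g : G) {u : Set (Pt T)} {v : V} {r : ℕ}
    (h : Loc T u v r) : letI := mulAct hB hA
    Loc T (g • u) (A g v) (κ * (r + 2 * κ + 2 * κ) + κ) := by
  let _ := mulAct hB hA
  obtain ⟨U, rfl, hU⟩ := loc_rep hB h
  change Loc T (g • hat T U) _ _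
  rw [smul_hat hB hA g ⟨v, r, hU⟩]
  apply loc_hat hB.tree
  apply hA.cob hB.tree
  apply hU.move hB.tree
  have h1 := hA.comp g⁻¹ g v
  rw [inv_mul_cancel] at h1
  have h2 := hA.one v
  have h3 := tri hB.tree v (A 1 v) (A g⁻¹ (A g v))
  rw [T.dist_comm (u := v) (v := A 1 v)] at h3
  omega

/-- All we need to know about the action on ends. -/
structure Ctx (T : SimpleGraph V) (G : Type) [Group G] [MulAction G (Pt T)] (A : G → V → V)
    (D β k : ℕ) (φ : ℕ → ℕ) : Prop where
  tb : TB T D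
  bu0 : Bu0 T β
  loc : ∀ (g : G) (u : Set (Pt T)) (v : V) (r : ℕ), Loc T u v r → Loc T (g • u) (A g v) (φ r)
  inv : ∀ (g : G) (x : V), T.dist (A g⁻¹ (A g x)) x ≤ k

end QT

namespace QT

set_option linter.unusedVariables false
open scoped Pointwise

theorem Cr.symm {α : Type} {u w : Set α} (h : Cr u w) : Cr w u := by
  obtain ⟨h1, h2, h3, h4⟩ := h
  refine ⟨?_, ?_, ?_, ?_⟩ <;> rw [Set.inter_comm] <;> assumption

theorem Cr.compl_right {α : Type} {u w : Set α} (h : Cr u w) : Cr u wᶜ := by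
  obtain ⟨h1, h2, h3, h4⟩ := h
  exact ⟨h2, by rwa [compl_compl], h4, by rwa [compl_compl]⟩

theorem Cr.compl_left {α : Type} {u w : Set α} (h : Cr u w) : Cr uᶜ w :=
  h.symm.compl_right.symm

theorem Nt.compl {α : Type} {u : Set α} (h : Nt u) : Nt uᶜ := ⟨h.2, by rw [compl_compl]; exact h.1⟩

theorem Nt.smul {α G : Type} [Group G] [MulAction G α] {u : Set α} (h : Nt u) (g : G) : Nt (g • u) :=
  ⟨h.1.smul_set, by rw [← Set.smul_set_compl]; exact h.2.smul_set⟩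

theorem Cr.smul {α G : Type} [Group G] [MulAction G α] {u w : Set α} (h : Cr u w) (g : G) :
    Cr (g • u) (g • w) := by
  obtain ⟨h1, h2, h3, h4⟩ := h
  refine ⟨?_, ?_, ?_, ?_⟩ <;> simp only [← Set.smul_set_compl, ← Set.smul_set_inter] <;>
    apply Set.Nonempty.smul_set <;> assumption

structure Dun {α : Type} (G : Type) [Group G] [MulAction G α] (Cl : Set α → Prop) (c : Set α → ℕ)
    (n : ℕ) (Near : ℕ → Set α → Set α → Prop) (r0 : ℕ) : Prop where
  cl_compl : ∀ u, Cl u → Cl uᶜ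
  cl_inter : ∀ u w, Cl u → Cl w → Cl (u ∩ w)
  cl_smul : ∀ (g : G) u, Cl u → Cl (g • u)
  c_compl : ∀ u, c uᶜ = c u
  c_smul : ∀ (g : G) u, c (g • u) = c u
  near_mono : ∀ ρ ρ' E u, ρ ≤ ρ' → Near ρ E u → Near ρ' E u
  near_smul : ∀ ρ E u (g : G), Near ρ E u → Near ρ (g • E) (g • u)
  near_compl : ∀ ρ E u, Near ρ E u → Near ρ E uᶜ
  near_compl' : ∀ ρ E u, Near ρ E u → Near ρ Eᶜ u
  near_self : ∀ u, Cl u → Nt u → c u ≤ n → Near r0 u u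
  near_cross : ∀ u w, Cl u → Cl w → c u ≤ n → c w ≤ n → Cr u w → Near r0 u w
  near_corner : ∀ ρ, ∃ ρ', ∀ E u w, Cl u → Cl w → c u ≤ n → c w ≤ n → Cr u w →
    Near ρ E (u ∩ w) → Near ρ' E u
  strict : ∀ u w, Cl u → Cl w → c u ≤ n → c w ≤ n → Cr u w →
    c (u ∩ w) + c (uᶜ ∩ wᶜ) < c u + c w

section
variable {α : Type}

def Bad (Near : ℕ → Set α → Set α → Prop) (𝓓 : Set (Set α)) (ρ : ℕ) (u : Set α) (a b : α) : Prop :=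
  ∀ E ∈ 𝓓, Near ρ E u → (a ∈ E ↔ b ∈ E)

def Ess (Near : ℕ → Set α → Set α → Prop) (𝓓 : Set (Set α)) (ρ : ℕ) (u : Set α) : Prop :=
  ∃ a ∈ u, ∃ b ∉ u, Bad Near 𝓓 ρ u a b

def EE (Cl : Set α → Prop) (c : Set α → ℕ) (Near : ℕ → Set α → Set α → Prop) (ρ : ℕ → ℕ) :
    ℕ → Set (Set α)
  | 0 => ∅
  | m + 1 => EE Cl c Near ρ m ∪ {u | Cl u ∧ c u = m ∧ Ess Near (EE Cl c Near ρ m) (ρ m) u}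

variable {G : Type} [Group G] [MulAction G α] {Cl : Set α → Prop} {c : Set α → ℕ}
    {n : ℕ} {Near : ℕ → Set α → Set α → Prop} {r0 : ℕ} {ρ : ℕ → ℕ}

theorem Bad.symm {𝓓 : Set (Set α)} {r : ℕ} {u : Set α} {a b : α} (h : Bad Near 𝓓 r u a b) :
    Bad Near 𝓓 r u b a := fun E h1 h2 => (h E h1 h2).symm

theorem Bad.compl (hD : Dun G Cl c n Near r0) {𝓓 : Set (Set α)} {r : ℕ} {u : Set α} {a b : α}
    (h : Bad Near 𝓓 r u a b) : Bad Near 𝓓 r uᶜ a b := fun E h1 h2 =>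
  h E h1 (by simpa using hD.near_compl _ _ _ h2)

theorem EE_mono {i j : ℕ} (h : i ≤ j) : EE Cl c Near ρ i ⊆ EE Cl c Near ρ j := by
  have : Monotone (EE Cl c Near ρ) := monotone_nat_of_le_succ fun n => Set.subset_union_left
  exact this h

theorem mem_EE {m : ℕ} {u : Set α} (h : u ∈ EE Cl c Near ρ m) : c u < m ∧ Cl u ∧
    Ess Near (EE Cl c Near ρ (c u)) (ρ (c u)) u := by
  induction m with
  | zero => exact absurd h (by simp [EE])
  | succ m ih =>
    rcases h with h | ⟨h1, h2, h3⟩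
    · have := ih h; exact ⟨by omega, this.2⟩
    · subst h2; exact ⟨by omega, h1, h3⟩

theorem EE_compl (hD : Dun G Cl c n Near r0) {m : ℕ} {u : Set α} (h : u ∈ EE Cl c Near ρ m) :
    uᶜ ∈ EE Cl c Near ρ m := by
  obtain ⟨h1, h2, a, ha, b, hb, h3⟩ := mem_EE h
  refine EE_mono (Nat.succ_le_of_lt h1) (Or.inr ⟨hD.cl_compl _ h2, hD.c_compl u, b, hb, a, ?_, h3.symm.compl hD⟩)
  simpa using ha

theorem EE_smul (hD : Dun G Cl c n Near r0) {m : ℕ} {u : Set α} (g : G) (h : u ∈ EE Cl c Near ρ m) :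
    g • u ∈ EE Cl c Near ρ m := by
  induction m generalizing u g with
  | zero => exact absurd h (by simp [EE])
  | succ m ih =>
    rcases h with h | ⟨h1, h2, a, ha, b, hb, h3⟩
    · exact Or.inl (ih g h)
    · refine Or.inr ⟨hD.cl_smul g _ h1, (hD.c_smul g u).trans h2, g • a, Set.smul_mem_smul_set ha,
        g • b, ?_, ?_⟩
      · rwa [Set.smul_mem_smul_set_iff]
      · intro E hE hn
        have := h3 (g⁻¹ • E) (ih g⁻¹ hE) (by simpa using hD.near_smul _ _ _ g⁻¹ hn)
        rwa [Set.mem_inv_smul_set_iff, Set.mem_inv_smul_set_iff] at this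

theorem not_ess (hD : Dun G Cl c n Near r0) (hρ : ∀ i, r0 ≤ ρ i) {m : ℕ} {u : Set α} (hu : Cl u)
    (hun : c u ≤ n)
    (hc : c u < m) {r : ℕ} (hr : ρ (c u) ≤ r) : ¬ Ess Near (EE Cl c Near ρ m) r u := by
  rintro ⟨a, ha, b, hb, h⟩
  have h1 : u ∈ EE Cl c Near ρ m := EE_mono (Nat.succ_le_of_lt hc) (Or.inr ⟨hu, rfl, a, ha, b, hb,
    fun E hE hn => h E (EE_mono hc.le hE) (hD.near_mono _ _ _ _ hr hn)⟩)
  exact hb ((h u h1 (hD.near_mono _ _ _ _ ((hρ _).trans hr) (hD.near_self u hu ⟨⟨a, ha⟩, ⟨b, hb⟩⟩ hun))).1 ha)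

theorem corner_ge (hD : Dun G Cl c n Near r0) (hρ : ∀ i, r0 ≤ ρ i)
    (hcor : ∀ i k, i < k → ∀ E u w, Cl u → Cl w → c u ≤ n → c w ≤ n → Cr u w →
    Near (ρ i) E (u ∩ w) → Near (ρ k) E u) {m : ℕ} (hm : m ≤ n) {u w : Set α} (hu : Cl u) (hw : Cl w)
    (hun : c u ≤ n) (hwn : c w ≤ n) (hcr : Cr w u) {a b : α}
    (hb : Bad Near (EE Cl c Near ρ m) (ρ m) w a b) (haw : a ∈ w) (hau : a ∈ u) (hbw : b ∉ w) :
    m ≤ c (w ∩ u) := by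
  by_contra hlt
  push Not at hlt
  apply not_ess hD hρ (hD.cl_inter _ _ hw hu) (by omega) hlt le_rfl
  exact ⟨a, ⟨haw, hau⟩, b, fun h => hbw h.1, fun E hE hn =>
    hb E hE (hcor _ _ hlt E w u hw hu hwn hun hcr hn)⟩

/-- two opposite corners -/
theorem opp (hD : Dun G Cl c n Near r0) (hρ : ∀ i, r0 ≤ ρ i)
    (hcor : ∀ i k, i < k → ∀ E u w, Cl u → Cl w → c u ≤ n → c w ≤ n → Cr u w →
    Near (ρ i) E (u ∩ w) → Near (ρ k) E u) {u w : Set α} (hu : Cl u) (hw : Cl w)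
    (hun : c u ≤ n) (hwn : c w ≤ n) (hcr : Cr u w) {a b p q : α}
    (hb : Bad Near (EE Cl c Near ρ (c w)) (ρ (c w)) w a b)
    (hb' : Bad Near (EE Cl c Near ρ (c u)) (ρ (c u)) u p q)
    (haw : a ∈ w) (hau : a ∈ u) (hbw : b ∉ w) (hpu : p ∈ u) (hqu : q ∉ u) (hqw : q ∉ w) : False := by
  have h1 := corner_ge hD hρ hcor hwn hu hw hun hwn hcr.symm hb haw hau hbw
  have h2 := corner_ge hD hρ hcor hun (u := wᶜ) (w := uᶜ) (hD.cl_compl _ hw) (hD.cl_compl _ hu)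
    (by rwa [hD.c_compl]) (by rwa [hD.c_compl]) hcr.compl_left.compl_right (hb'.symm.compl hD)
    hqu hqw (by simpa using hpu)
  have h3 := hD.strict u w hu hw hun hwn hcr
  rw [Set.inter_comm] at h1
  omega

theorem nested1 (hD : Dun G Cl c n Near r0) (hρ : ∀ i, r0 ≤ ρ i)
    (hcor : ∀ i k, i < k → ∀ E u w, Cl u → Cl w → c u ≤ n → c w ≤ n → Cr u w →
    Near (ρ i) E (u ∩ w) → Near (ρ k) E u) {u w : Set α} (hu : Cl u) (hw : Cl w)
    (hun : c u ≤ n) (hwn : c w ≤ n) (hcr : Cr u w) {a b p q : α}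
    (hb : Bad Near (EE Cl c Near ρ (c w)) (ρ (c w)) w a b)
    (hb' : Bad Near (EE Cl c Near ρ (c u)) (ρ (c u)) u p q)
    (haw : a ∈ w) (hbw : b ∉ w) (hau : a ∈ u) (hbu : b ∈ u)
    (hpu : p ∈ u) (hqu : q ∉ u) : False := by
  by_cases hqw : q ∈ w
  · exact opp hD hρ hcor (w := wᶜ) hu (hD.cl_compl _ hw) hun (by rwa [hD.c_compl]) hcr.compl_right
      (a := b) (b := a) (by rw [hD.c_compl]; exact hb.symm.compl hD) hb' hbw hbu (by simpa using haw)
      hpu hqu (by simpa using hqw)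
  · exact opp hD hρ hcor hu hw hun hwn hcr hb hb' haw hau hbw hpu hqu hqw

theorem nested1' (hD : Dun G Cl c n Near r0) (hρ : ∀ i, r0 ≤ ρ i)
    (hcor : ∀ i k, i < k → ∀ E u w, Cl u → Cl w → c u ≤ n → c w ≤ n → Cr u w →
    Near (ρ i) E (u ∩ w) → Near (ρ k) E u) {u w : Set α} (hu : Cl u) (hw : Cl w)
    (hun : c u ≤ n) (hwn : c w ≤ n) (hcr : Cr u w) {a b p q : α}
    (hb : Bad Near (EE Cl c Near ρ (c w)) (ρ (c w)) w a b)
    (hb' : Bad Near (EE Cl c Near ρ (c u)) (ρ (c u)) u p q)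
    (haw : a ∈ w) (hbw : b ∉ w) (hab : a ∈ u ↔ b ∈ u)
    (hpu : p ∈ u) (hqu : q ∉ u) : False := by
  by_cases hau : a ∈ u
  · exact nested1 hD hρ hcor hu hw hun hwn hcr hb hb' haw hbw hau (hab.1 hau) hpu hqu
  · exact nested1 hD hρ hcor (u := uᶜ) (hD.cl_compl _ hu) hw (by rwa [hD.c_compl]) hwn hcr.compl_left
      hb (p := q) (q := p) (by rw [hD.c_compl]; exact hb'.symm.compl hD) haw hbw hau
      (fun h => hau (hab.2 h)) hqu (by simpa using hpu)

theorem EE_nested (hD : Dun G Cl c n Near r0) (hρ : ∀ i, r0 ≤ ρ i)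
    (hcor : ∀ i k, i < k → ∀ E u w, Cl u → Cl w → c u ≤ n → c w ≤ n → Cr u w →
    Near (ρ i) E (u ∩ w) → Near (ρ k) E u) {u w : Set α}
    (hu : u ∈ EE Cl c Near ρ (n + 1)) (hw : w ∈ EE Cl c Near ρ (n + 1)) : ¬ Cr u w := by
  intro hcr
  have key : ∀ u w, c u < c w → u ∈ EE Cl c Near ρ (n + 1) → w ∈ EE Cl c Near ρ (n + 1) →
      Cr u w → False := by
    intro u w hlt hu hw hcr
    obtain ⟨hu1, hu2, p, hp, q, hq, hb'⟩ := mem_EE hu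
    obtain ⟨hw1, hw2, a, ha, b, hb, hb''⟩ := mem_EE hw
    refine nested1' hD hρ hcor hu2 hw2 (by omega) (by omega) hcr hb'' hb' ha hb ?_ hp hq
    apply hb'' u
    · exact EE_mono (Nat.succ_le_of_lt hlt) (Or.inr ⟨hu2, rfl, p, hp, q, hq, hb'⟩)
    · exact hD.near_mono _ _ _ _ (hρ _) (hD.near_cross u w hu2 hw2 (by omega) (by omega) hcr)
  rcases lt_trichotomy (c u) (c w) with h | h | h
  · exact key u w h hu hw hcr
  · obtain ⟨hu1, hu2, p, hp, q, hq, hb'⟩ := mem_EE hu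
    obtain ⟨hw1, hw2, a, ha, b, hb, hb''⟩ := mem_EE hw
    by_cases hab : a ∈ u ↔ b ∈ u
    · exact nested1' hD hρ hcor hu2 hw2 (by omega) (by omega) hcr hb'' hb' ha hb hab hp hq
    · -- a and b lie in opposite corners
      have hun : c u ≤ n := by omega
      have hwn : c w ≤ n := by omega
      by_cases hau : a ∈ u
      · have hbu : b ∉ u := fun hh => hab ⟨fun _ => hh, fun _ => hau⟩
        have h1 := corner_ge hD hρ hcor hwn hu2 hw2 hun hwn hcr.symm hb'' ha hau hb
        have h2 := corner_ge hD hρ hcor hwn (hD.cl_compl _ hu2) (hD.cl_compl _ hw2)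
          (by rwa [hD.c_compl]) (by rwa [hD.c_compl]) hcr.symm.compl_right.compl_left
          (hb''.symm.compl hD) hb hbu (by simpa using ha)
        have h3 := hD.strict w u hw2 hu2 hwn hun hcr.symm
        omega
      · have hbu : b ∈ u := by
          by_contra hh
          exact hab ⟨fun h => absurd h hau, fun h => absurd h hh⟩
        have h1 := corner_ge hD hρ hcor hwn (u := uᶜ) (hD.cl_compl _ hu2) hw2 (by rwa [hD.c_compl])
          hwn hcr.symm.compl_right hb'' ha hau hb
        have h2 := corner_ge hD hρ hcor hwn (w := wᶜ) hu2 (hD.cl_compl _ hw2) hun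
          (by rwa [hD.c_compl]) hcr.symm.compl_left
          (hb''.symm.compl hD) hb hbu (by simpa using ha)
        have h3 := hD.strict w uᶜ hw2 (hD.cl_compl _ hu2) hwn (by rwa [hD.c_compl]) hcr.symm.compl_right
        rw [compl_compl, hD.c_compl] at h3
        omega
  · exact key w u h hw hu hcr.symm

theorem dunwoody (hD : Dun G Cl c n Near r0) : ∃ (𝓔 : Set (Set α)) (ρ : ℕ),
    (∀ E ∈ 𝓔, Cl E ∧ Nt E ∧ c E ≤ n) ∧ (∀ E ∈ 𝓔, Eᶜ ∈ 𝓔) ∧ (∀ (g : G), ∀ E ∈ 𝓔, g • E ∈ 𝓔) ∧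
    (∀ E ∈ 𝓔, ∀ F ∈ 𝓔, ¬ Cr E F) ∧
    (∀ u, Cl u → c u ≤ n → ∀ a ∈ u, ∀ b ∉ u, ∃ E ∈ 𝓔, Near ρ E u ∧ ¬ (a ∈ E ↔ b ∈ E)) := by
  choose f hf using hD.near_corner
  let ρ : ℕ → ℕ := fun k => Nat.rec r0 (fun _ x => max x (f x)) k
  have hs : ∀ k, ρ (k + 1) = max (ρ k) (f (ρ k)) := fun k => rfl
  have hmono : Monotone ρ := monotone_nat_of_le_succ fun k => by rw [hs]; exact le_max_left _ _
  have hρ : ∀ i, r0 ≤ ρ i := fun i => hmono (Nat.zero_le i)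
  have hcor : ∀ i k, i < k → ∀ E u w, Cl u → Cl w → c u ≤ n → c w ≤ n → Cr u w →
      Near (ρ i) E (u ∩ w) → Near (ρ k) E u := by
    intro i k hik E u w h1 h2 h3 h4 h5 h6
    refine hD.near_mono _ _ _ _ ?_ (hf (ρ i) E u w h1 h2 h3 h4 h5 h6)
    refine le_trans ?_ (hmono (Nat.succ_le_of_lt hik))
    rw [Nat.succ_eq_add_one, hs]; exact le_max_right _ _
  refine ⟨EE Cl c Near ρ (n + 1), ρ n, ?_, fun E => EE_compl hD, fun g E => EE_smul hD g,
    fun E hE F hF => EE_nested hD hρ hcor hE hF, ?_⟩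
  · intro E hE
    obtain ⟨h1, h2, a, ha, b, hb, -⟩ := mem_EE hE
    exact ⟨h2, ⟨⟨a, ha⟩, ⟨b, hb⟩⟩, by omega⟩
  · intro u hu hun a ha b hb
    have := not_ess hD hρ hu hun (m := n + 1) (by omega) (hmono hun)
    by_contra hc
    apply this
    refine ⟨a, ha, b, hb, fun E hE hn => ?_⟩
    by_contra h2
    exact hc ⟨E, hE, hn, h2⟩

end
end QT

namespace QT

set_option linter.unusedVariables false
open scoped Pointwise
variable {V : Type} {T : SimpleGraph V}

def crs {α : Type} (𝓕 : Set (Set α)) (u : Set α) : Set (Set α) := {F | F ∈ 𝓕 ∧ Cr F u}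

theorem cross_count {D : ℕ} (hB : TB T D) (R r : ℕ) : ∃ N : ℕ, ∀ 𝓕 : Set (Set (Pt T)),
    (∀ F ∈ 𝓕, ∃ w, Loc T F w R) → ∀ u v, Loc T u v r → (crs 𝓕 u).Finite ∧ (crs 𝓕 u).ncard ≤ N := by
  obtain ⟨N, hN⟩ := loc_count hB (r + 2 * R)
  refine ⟨N, fun 𝓕 h𝓕 u v hu => ?_⟩
  have hsub : crs 𝓕 u ⊆ {F | Loc T F v (r + 2 * R)} := by
    rintro F ⟨hF, hcr⟩
    obtain ⟨w, hw⟩ := h𝓕 F hF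
    have : T.dist w v ≤ R + r := by
      by_contra hc
      exact not_cr_of_far hB.tree hw hu (by omega) hcr
    exact hw.move hB.tree (by omega)
  exact ⟨(hN v).1.subset hsub, (Set.ncard_le_ncard hsub (hN v).1).trans (hN v).2⟩

theorem anc_chain (hT : T.IsTree) {v x y y' : V} (h : x ∈ Sh T v y) (h' : x ∈ Sh T v y')
    (hd : T.dist v y ≤ T.dist v y') : y' ∈ Sh T v y := by
  obtain ⟨z, hz, hz'⟩ := anc_exists hT v y' _ hd
  have := anc_unique hT h (Sh_trans hT hz' h') hz.symm
  rwa [this]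

/-- few crossings imply concentrated coboundary -/
theorem loc_of_few {β : ℕ} (hT : T.IsTree) (hb : Bu0 T β) {𝓕 : Set (Set (Pt T))}
    (h𝓕 : ∀ p q, T.Adj p q → hs T p q ∈ 𝓕) {u : Set (Pt T)} (hu : Nt u) {v0 : V} {r0 : ℕ}
    (hl : Loc T u v0 r0) {n : ℕ} (hfin : (crs 𝓕 u).Finite) (hn : (crs 𝓕 u).ncard ≤ n) :
    ∃ p, Loc T u p (n * (2 * β + 2)) := by
  classical
  let NM : V → Prop := fun v => ¬ (hs T v0 v ⊆ u ∨ hs T v0 v ⊆ uᶜ)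
  have hmax : ∃ v, NM v ∧ ∀ w, NM w → T.dist v0 w ≤ T.dist v0 v := by
    have h0 : NM v0 := by
      obtain ⟨⟨a, ha⟩, ⟨b, hb⟩⟩ := hu
      simp only [NM, hs_self, not_or]
      exact ⟨fun h => hb (h trivial), fun h => h (Set.mem_univ a) ha⟩
    have hbd : ∀ w, NM w → T.dist v0 w ≤ r0 := by
      intro w hw
      by_contra hc
      exact hw (hl w (by omega))
    have hne : {m | ∃ v, NM v ∧ T.dist v0 v = m}.Nonempty := ⟨_, v0, h0, rfl⟩
    have hbdd : BddAbove {m | ∃ v, NM v ∧ T.dist v0 v = m} :=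
      ⟨r0, by rintro m ⟨v, hv, rfl⟩; exact hbd v hv⟩
    obtain ⟨v, hv, hvm⟩ := Nat.sSup_mem hne hbdd
    exact ⟨v, hv, fun w hw => by rw [hvm]; exact le_csSup hbdd ⟨w, hw, rfl⟩⟩
  obtain ⟨v, hv, hvmax⟩ := hmax
  refine ⟨v, fun x hx => ?_⟩
  by_contra hnx
  set b := 2 * β + 2 with hbdef
  have hy : ∀ t, ∃ y, t ≤ T.dist v x → T.dist v y = t ∧ x ∈ Sh T v y := by
    intro t
    by_cases h : t ≤ T.dist v x
    · obtain ⟨y, hy⟩ := anc_exists hT v x t h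
      exact ⟨y, fun _ => hy⟩
    · exact ⟨v, fun h' => absurd h' h⟩
  choose y hy using hy
  have hadj1 : T.Adj v (y 1) := SimpleGraph.dist_eq_one_iff_adj.1 (hy 1 (by omega)).1
  have hnm : ∀ t, t ≤ T.dist v x → ¬ (hs T v (y t) ⊆ u ∨ hs T v (y t) ⊆ uᶜ) := by
    intro t ht hc
    have := hs_trans hT (hy t ht).2
    exact hnx (hc.imp this.trans this.trans)
  have hpar : T.dist v0 v = T.dist v0 (y 1) + 1 := by
    rcases adj_step hT v0 hadj1 with h | h
    · exact h
    · exfalso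
      have h1 := hs_eq_of_parent hT hadj1 h
      have h2 : NM (y 1) := by
        simp only [NM]; rw [h1]; exact hnm 1 (by omega)
      have := hvmax _ h2
      omega
  have hcompl : (hs T v (y 1))ᶜ = hs T v0 v := by
    rw [hs_compl hT hadj1, hs_eq_of_parent hT hadj1.symm hpar]
  have hcross : ∀ t, 1 ≤ t → t ≤ T.dist v x → hs T v (y t) ∈ crs 𝓕 u := by
    intro t ht1 ht
    have hne : v ≠ y t := by
      intro h
      have := (hy t ht).1
      rw [← h] at this; simp at this; omega
    obtain ⟨p, hp, hpd⟩ := exists_parent hT hne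
    constructor
    · rw [hs_eq_of_parent hT hp hpd]; exact h𝓕 _ _ hp
    · have h1 := hnm t ht
      have h2 : (hs T v (y 1))ᶜ ⊆ (hs T v (y t))ᶜ := by
        apply Set.compl_subset_compl.2
        apply hs_trans hT
        refine anc_chain hT (hy 1 (by omega)).2 (hy t ht).2 ?_
        rw [(hy 1 (by omega)).1, (hy t ht).1]; exact ht1
      rw [hcompl] at h2
      have h3 : ¬ (hs T v0 v ⊆ u ∨ hs T v0 v ⊆ uᶜ) := hv
      simp only [not_or, Set.not_subset] at h1 h3
      obtain ⟨⟨a, ha, ha'⟩, ⟨c, hc, hc'⟩⟩ := h1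
      obtain ⟨⟨d, hd, hd'⟩, ⟨e, he, he'⟩⟩ := h3
      rw [Set.notMem_compl_iff] at hc' he'
      exact ⟨⟨c, hc, hc'⟩, ⟨a, ha, ha'⟩, ⟨e, h2 he, he'⟩, ⟨d, h2 hd, hd'⟩⟩
  have hle : ∀ i, i ≤ n → 1 + i * b ≤ T.dist v x := by
    intro i hi
    have := Nat.mul_le_mul_right b hi
    omega
  have hne : ∀ i j, i < j → j ≤ n → hs T v (y (1 + i * b)) ≠ hs T v (y (1 + j * b)) := by
    intro i j hij hj heq
    have hi' := hle i (by omega)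
    have hj' := hle j hj
    have hmul : (i + 1) * b ≤ j * b := Nat.mul_le_mul_right b hij
    rw [Nat.add_mul, one_mul] at hmul
    have h1 : y (1 + j * b) ∈ Sh T v (y (1 + i * b)) := by
      refine anc_chain hT (hy _ hi').2 (hy _ hj').2 ?_
      rw [(hy _ hi').1, (hy _ hj').1]
      omega
    obtain ⟨P, hP1, hP2⟩ := bu hT hb h1 (by
      rw [mem_Sh, (hy _ hi').1, (hy _ hj').1] at h1
      omega)
    rw [heq] at hP1
    exact hP2 hP1
  have hinj : Set.InjOn (fun i => hs T v (y (1 + i * b))) (Finset.range (n + 1) : Set ℕ) := by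
    intro i hi j hj hij
    simp only [Finset.coe_range, Set.mem_Iio] at hi hj
    rcases lt_trichotomy i j with h | h | h
    · exact absurd hij (hne i j h (by omega))
    · exact h
    · exact absurd hij.symm (hne j i h (by omega))
  have hcard := Set.ncard_le_ncard_of_injOn (s := (Finset.range (n + 1) : Set ℕ)) (t := crs 𝓕 u) _
    (fun i hi => hcross _ (by omega) (hle i (by
      simp only [Finset.coe_range, Set.mem_Iio] at hi; omega))) hinj hfin
  rw [Set.ncard_coe_finset, Finset.card_range] at hcard
  omega

end QT

namespace QT

set_option linter.unusedVariables false
open scoped Pointwise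

section
variable {α : Type}

theorem crs_inter {𝓕 : Set (Set α)} {u w F : Set α} (hcr : Cr u w) (h : Cr F (u ∩ w)) :
    Cr F u ∨ Cr F w := by
  by_contra hc
  push Not at hc
  obtain ⟨hc1, hc2⟩ := hc
  obtain ⟨⟨a, ha, hau, haw⟩, ⟨b, hb, hb'⟩, ⟨c, hc, hcu, hcw⟩, ⟨d, hd, hd'⟩⟩ := h
  obtain ⟨-, -, -, ⟨e, heu, hew⟩⟩ := hcr
  have h1 : F ⊆ u ∨ Fᶜ ⊆ u := by
    by_contra hh
    simp only [not_or, Set.not_subset] at hh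
    obtain ⟨⟨x, hx, hx'⟩, ⟨y, hy, hy'⟩⟩ := hh
    exact hc1 ⟨⟨a, ha, hau⟩, ⟨x, hx, hx'⟩, ⟨c, hc, hcu⟩, ⟨y, hy, hy'⟩⟩
  have h2 : F ⊆ w ∨ Fᶜ ⊆ w := by
    by_contra hh
    simp only [not_or, Set.not_subset] at hh
    obtain ⟨⟨x, hx, hx'⟩, ⟨y, hy, hy'⟩⟩ := hh
    exact hc2 ⟨⟨a, ha, haw⟩, ⟨x, hx, hx'⟩, ⟨c, hc, hcw⟩, ⟨y, hy, hy'⟩⟩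
  rcases h1 with h1 | h1 <;> rcases h2 with h2 | h2
  · exact hb' ⟨h1 hb, h2 hb⟩
  · by_cases he : e ∈ F
    · exact heu (h1 he)
    · exact hew (h2 he)
  · by_cases he : e ∈ F
    · exact hew (h2 he)
    · exact heu (h1 he)
  · exact hd' ⟨h1 hd, h2 hd⟩

theorem cr_compl_right {u w : Set α} : Cr u wᶜ ↔ Cr u w :=
  ⟨fun h => by simpa using h.compl_right, Cr.compl_right⟩

theorem crs_compl {𝓕 : Set (Set α)} {u : Set α} : crs 𝓕 uᶜ = crs 𝓕 u := by
  ext F; simp [crs, cr_compl_right]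

theorem crs_sub1 {𝓕 : Set (Set α)} {u w : Set α} (hcr : Cr u w) :
    crs 𝓕 (u ∩ w) ∪ crs 𝓕 (uᶜ ∩ wᶜ) ⊆ crs 𝓕 u ∪ crs 𝓕 w := by
  rintro F (⟨hF, h⟩ | ⟨hF, h⟩)
  · exact (crs_inter (𝓕 := 𝓕) hcr h).imp (fun h => ⟨hF, h⟩) fun h => ⟨hF, h⟩
  · refine (crs_inter (𝓕 := 𝓕) hcr.compl_left.compl_right h).imp (fun h => ⟨hF, ?_⟩) fun h => ⟨hF, ?_⟩
    · exact cr_compl_right.1 h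
    · exact cr_compl_right.1 h

theorem crs_sub2 {𝓕 : Set (Set α)} {u w : Set α} :
    crs 𝓕 (u ∩ w) ∩ crs 𝓕 (uᶜ ∩ wᶜ) ⊆ crs 𝓕 u ∩ crs 𝓕 w := by
  rintro F ⟨⟨hF, h⟩, ⟨-, h'⟩⟩
  obtain ⟨⟨a, ha, hau, haw⟩, -, ⟨c, hc, hcu, hcw⟩, -⟩ := h
  obtain ⟨⟨a', ha', hau', haw'⟩, -, ⟨c', hc', hcu', hcw'⟩, -⟩ := h'
  exact ⟨⟨hF, ⟨a, ha, hau⟩, ⟨a', ha', hau'⟩, ⟨c, hc, hcu⟩, ⟨c', hc', hcu'⟩⟩,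
    ⟨hF, ⟨a, ha, haw⟩, ⟨a', ha', haw'⟩, ⟨c, hc, hcw⟩, ⟨c', hc', hcw'⟩⟩⟩

theorem crs_submod {𝓕 : Set (Set α)} {u w : Set α} (hcr : Cr u w) (hu : (crs 𝓕 u).Finite)
    (hw : (crs 𝓕 w).Finite) :
    (crs 𝓕 (u ∩ w)).ncard + (crs 𝓕 (uᶜ ∩ wᶜ)).ncard ≤ (crs 𝓕 u).ncard + (crs 𝓕 w).ncard := by
  have hX : (crs 𝓕 (u ∩ w)).Finite := (hu.union hw).subset (Set.subset_union_left.trans (crs_sub1 hcr))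
  have hY : (crs 𝓕 (uᶜ ∩ wᶜ)).Finite :=
    (hu.union hw).subset (Set.subset_union_right.trans (crs_sub1 hcr))
  rw [← Set.ncard_union_add_ncard_inter _ _ hX hY, ← Set.ncard_union_add_ncard_inter _ _ hu hw]
  exact Nat.add_le_add (Set.ncard_le_ncard (crs_sub1 hcr) (hu.union hw))
    (Set.ncard_le_ncard crs_sub2 (hu.inter_of_left _))

theorem crs_submod_strict {𝓕 : Set (Set α)} {u w : Set α} (hcr : Cr u w) (hu : (crs 𝓕 u).Finite)
    (hw : (crs 𝓕 w).Finite) (hmem : u ∈ 𝓕) :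
    (crs 𝓕 (u ∩ w)).ncard + (crs 𝓕 (uᶜ ∩ wᶜ)).ncard < (crs 𝓕 u).ncard + (crs 𝓕 w).ncard := by
  have hX : (crs 𝓕 (u ∩ w)).Finite := (hu.union hw).subset (Set.subset_union_left.trans (crs_sub1 hcr))
  have hY : (crs 𝓕 (uᶜ ∩ wᶜ)).Finite :=
    (hu.union hw).subset (Set.subset_union_right.trans (crs_sub1 hcr))
  rw [← Set.ncard_union_add_ncard_inter _ _ hX hY, ← Set.ncard_union_add_ncard_inter _ _ hu hw]
  refine Nat.add_lt_add_of_lt_of_le (Set.ncard_lt_ncard ?_ (hu.union hw))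
    (Set.ncard_le_ncard crs_sub2 (hu.inter_of_left _))
  refine ⟨crs_sub1 hcr, fun h => ?_⟩
  rcases h (Or.inr ⟨hmem, hcr⟩ : u ∈ crs 𝓕 u ∪ crs 𝓕 w) with ⟨-, h⟩ | ⟨-, h⟩
  · obtain ⟨x, hx, hx', -⟩ := h.2.2.1
    exact hx hx'
  · obtain ⟨x, hx, hx', -⟩ := h.1
    exact hx' hx

theorem crs_smul {G : Type} [Group G] [MulAction G α] {𝓕 : Set (Set α)}
    (h𝓕 : ∀ (g : G), ∀ F ∈ 𝓕, g • F ∈ 𝓕) (g : G) (u : Set α) :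
    (crs 𝓕 (g • u)).ncard = (crs 𝓕 u).ncard := by
  have : crs 𝓕 (g • u) = (fun F => g • F) '' crs 𝓕 u := by
    ext F
    constructor
    · rintro ⟨hF, h⟩
      refine ⟨g⁻¹ • F, ⟨h𝓕 _ _ hF, ?_⟩, by simp⟩
      have := h.smul g⁻¹
      simpa using this
    · rintro ⟨F, ⟨hF, h⟩, rfl⟩
      exact ⟨h𝓕 _ _ hF, h.smul g⟩
  rw [this, Set.ncard_image_of_injective _ (MulAction.injective g)]

end

section
variable {V : Type} {T : SimpleGraph V} {G : Type} [Group G] [MulAction G (Pt T)] {A : G → V → V}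
  {D β k : ℕ} {φ : ℕ → ℕ}

theorem family_exists (hX : Ctx T G A D β k φ) : ∃ (𝓔 : Set (Set (Pt T))) (R : ℕ),
    (∀ E ∈ 𝓔, Nt E ∧ ∃ v, Loc T E v R) ∧ (∀ E ∈ 𝓔, Eᶜ ∈ 𝓔) ∧ (∀ (g : G), ∀ E ∈ 𝓔, g • E ∈ 𝓔) ∧
    (∀ E ∈ 𝓔, ∀ F ∈ 𝓔, ¬ Cr E F) ∧
    (∀ p q, T.Adj p q → ∀ a ∈ hs T p q, ∀ b ∉ hs T p q, ∃ E ∈ 𝓔, Loc T E q R ∧ ¬ (a ∈ E ↔ b ∈ E)) := by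
  have hT := hX.tb.tree
  let Cl : Set (Pt T) → Prop := fun u => ∃ v r, Loc T u v r
  have cl_smul : ∀ (g : G) u, Cl u → Cl (g • u) := by
    rintro g u ⟨v, r, h⟩; exact ⟨_, _, hX.loc g u v r h⟩
  -- first family
  let 𝓕₁ : Set (Set (Pt T)) := {F | ∃ (g : G) (p q : V), T.Adj p q ∧ F = g • hs T p q}
  have h𝓕₁ : ∀ F ∈ 𝓕₁, ∃ w, Loc T F w (φ 0) := by
    rintro F ⟨g, p, q, h, rfl⟩
    exact ⟨_, hX.loc g _ _ _ (loc_hs hT p q)⟩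
  have h𝓕₁s : ∀ (g : G), ∀ F ∈ 𝓕₁, g • F ∈ 𝓕₁ := by
    rintro g F ⟨g', p, q, h, rfl⟩
    exact ⟨g * g', p, q, h, by rw [mul_smul]⟩
  have h𝓕₁h : ∀ p q, T.Adj p q → hs T p q ∈ 𝓕₁ := fun p q h => ⟨1, p, q, h, by simp⟩
  have fin1 : ∀ u, Cl u → (crs 𝓕₁ u).Finite := by
    rintro u ⟨v, r, h⟩
    obtain ⟨N, hN⟩ := cross_count hX.tb (φ 0) r
    exact (hN 𝓕₁ h𝓕₁ u v h).1
  obtain ⟨n₁, hn₁⟩ := cross_count hX.tb (φ 0) 0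
  -- second family
  let R := n₁ * (2 * β + 2)
  let 𝓕₂ : Set (Set (Pt T)) := {u | Cl u ∧ Nt u ∧ (crs 𝓕₁ u).ncard ≤ n₁}
  have h𝓕₂ : ∀ F ∈ 𝓕₂, ∃ w, Loc T F w R := by
    rintro F ⟨hcl, hnt, hc⟩
    have hfin := fin1 F hcl
    obtain ⟨v, r, h⟩ := hcl
    exact loc_of_few hT hX.bu0 h𝓕₁h hnt h hfin hc
  have h𝓕₂s : ∀ (g : G), ∀ F ∈ 𝓕₂, g • F ∈ 𝓕₂ := by
    rintro g F ⟨hcl, hnt, hc⟩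
    exact ⟨cl_smul g F hcl, hnt.smul g, by rwa [crs_smul h𝓕₁s]⟩
  have fin2 : ∀ u, Cl u → (crs 𝓕₂ u).Finite := by
    rintro u ⟨v, r, h⟩
    obtain ⟨N, hN⟩ := cross_count hX.tb R r
    exact (hN 𝓕₂ h𝓕₂ u v h).1
  obtain ⟨n₂, hn₂⟩ := cross_count hX.tb R 0
  let c : Set (Pt T) → ℕ := fun u => (n₂ + 1) * (crs 𝓕₁ u).ncard + (crs 𝓕₂ u).ncard
  let n := (n₂ + 1) * n₁ + n₂
  have c1_le : ∀ u, c u ≤ n → (crs 𝓕₁ u).ncard ≤ n₁ := by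
    intro u hu
    by_contra hlt
    have := Nat.mul_le_mul_left (n₂ + 1) (show n₁ + 1 ≤ (crs 𝓕₁ u).ncard by omega)
    simp only [c, n] at hu
    rw [Nat.mul_add] at this
    omega
  have c_hs : ∀ p q, T.Adj p q → c (hs T p q) ≤ n := by
    intro p q h
    have h1 := (hn₁ 𝓕₁ h𝓕₁ _ _ (loc_hs hT p q)).2
    have h2 := (hn₂ 𝓕₂ h𝓕₂ _ _ (loc_hs hT p q)).2
    exact Nat.add_le_add (Nat.mul_le_mul_left _ h1) h2
  let Near : ℕ → Set (Pt T) → Set (Pt T) → Prop := fun ρ E u =>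
    ∃ (g : G) (v : V), Loc T (g • E) v ρ ∧ Loc T (g • u) v ρ
  have c_smul : ∀ (g : G) u, c (g • u) = c u := by
    intro g u
    simp only [c, crs_smul h𝓕₁s, crs_smul h𝓕₂s]
  have locR : ∀ u, Cl u → Nt u → c u ≤ n → ∃ v, Loc T u v R := fun u h1 h2 h3 =>
    h𝓕₂ u ⟨h1, h2, c1_le u h3⟩
  have nt1 : ∀ u w : Set (Pt T), Cr u w → Nt u := fun u w h =>
    ⟨h.1.mono Set.inter_subset_left, h.2.2.1.mono Set.inter_subset_left⟩
  have cross : ∀ u w, Cl u → Cl w → c u ≤ n → c w ≤ n → Cr u w →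
      ∃ v, Loc T u v (3 * R) ∧ Loc T w v (3 * R) := by
    intro u w hu hw hcu hcw hcr
    obtain ⟨v, hv⟩ := locR u hu (nt1 _ _ hcr) hcu
    obtain ⟨v', hv'⟩ := locR w hw (nt1 _ _ hcr.symm) hcw
    refine ⟨v, hv.mono hT (by omega), hv'.move hT ?_⟩
    by_contra hc
    rw [T.dist_comm] at hc
    exact not_cr_of_far hT hv hv' (by omega) hcr
  have hDun : Dun G Cl c n Near (3 * R) := by
    refine ⟨?_, ?_, cl_smul, ?_, c_smul, ?_, ?_, ?_, ?_, ?_, ?_, ?_, ?_⟩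
    · rintro u ⟨v, r, h⟩; exact ⟨v, r, h.compl⟩
    · rintro u w ⟨v, r, h⟩ ⟨v', r', h'⟩
      exact ⟨v, max r (r' + T.dist v' v), (h.mono hT (le_max_left _ _)).inter
        (h'.move hT (le_max_right _ _))⟩
    · intro u; simp only [c, crs_compl]
    · rintro ρ ρ' E u hle ⟨g, v, h1, h2⟩
      exact ⟨g, v, h1.mono hT hle, h2.mono hT hle⟩
    · rintro ρ E u g ⟨g', v, h1, h2⟩
      refine ⟨g' * g⁻¹, v, ?_, ?_⟩ <;> rw [mul_smul, inv_smul_smul] <;> assumption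
    · rintro ρ E u ⟨g, v, h1, h2⟩
      exact ⟨g, v, h1, by rw [Set.smul_set_compl]; exact h2.compl⟩
    · rintro ρ E u ⟨g, v, h1, h2⟩
      exact ⟨g, v, by rw [Set.smul_set_compl]; exact h1.compl, h2⟩
    · intro u hu hnt hc
      obtain ⟨v, hv⟩ := locR u hu hnt hc
      have := hv.mono hT (show R ≤ 3 * R by omega)
      exact ⟨1, v, by rwa [one_smul], by rwa [one_smul]⟩
    · intro u w hu hw hcu hcw hcr
      obtain ⟨v, h1, h2⟩ := cross u w hu hw hcu hcw hcr
      exact ⟨1, v, by rwa [one_smul], by rwa [one_smul]⟩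
    · intro ρ
      refine ⟨2 * ρ + 3 * R + (2 * β + 2), ?_⟩
      rintro E u w hu hw hcu hcw hcr ⟨g, v, h1, h2⟩
      obtain ⟨v', h3, h4⟩ := cross (g • u) (g • w) (cl_smul g u hu) (cl_smul g w hw)
        (by rwa [c_smul]) (by rwa [c_smul]) (hcr.smul g)
      rw [Set.smul_set_inter] at h2
      have hnt : Nt (g • u ∩ g • w) := by
        obtain ⟨k1, k2, -⟩ := hcr.smul g
        refine ⟨k1, k2.mono ?_⟩
        rintro x ⟨-, hx⟩ hx'
        exact hx hx'.2
      have hd := loc_close hT hX.bu0 hnt h2 (h3.inter h4)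
      exact ⟨g, v', h1.move hT (by omega), h3.mono hT (by omega)⟩
    · intro u w hu hw hcu hcw hcr
      have h1 := crs_submod hcr (fin1 u hu) (fin1 w hw)
      have h2 := crs_submod_strict hcr (fin2 u hu) (fin2 w hw) ⟨hu, nt1 _ _ hcr, c1_le u hcu⟩
      have h3 := Nat.mul_le_mul_left (n₂ + 1) h1
      rw [Nat.mul_add, Nat.mul_add] at h3
      simp only [c]
      omega
  obtain ⟨𝓔, ρ, h1, h2, h3, h4, h5⟩ := dunwoody hDun
  refine ⟨𝓔, max R (φ (2 * ρ + φ 0 + (2 * β + 2)) + k), ?_, h2, h3, h4, ?_⟩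
  · intro E hE
    obtain ⟨k1, k2, k3⟩ := h1 E hE
    obtain ⟨v, hv⟩ := locR E k1 k2 k3
    exact ⟨k2, v, hv.mono hT (le_max_left _ _)⟩
  · intro p q hpq a ha b hb
    obtain ⟨E, hE, ⟨g, v, hg1, hg2⟩, hab⟩ := h5 (hs T p q) ⟨_, _, loc_hs hT p q⟩ (c_hs p q hpq) a ha b hb
    refine ⟨E, hE, ?_, hab⟩
    have hnt : Nt (g • hs T p q) := Nt.smul ⟨⟨a, ha⟩, ⟨b, hb⟩⟩ g
    have hd := loc_close hT hX.bu0 hnt hg2 (hX.loc g _ _ _ (loc_hs hT p q))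
    have h6 := hg1.move hT (w := A g q) (r' := 2 * ρ + φ 0 + (2 * β + 2)) (by omega)
    have h7 := hX.loc g⁻¹ _ _ _ h6
    rw [inv_smul_smul] at h7
    refine h7.move hT ?_
    have := hX.inv g q
    have := le_max_right R (φ (2 * ρ + φ 0 + (2 * β + 2)) + k)
    omega

end
end QT

namespace QT

set_option linter.unusedVariables false
open scoped Pointwise

section
variable {α : Type} {𝓔 : Set (Set α)}

structure Nest (𝓔 : Set (Set α)) : Prop where
  nt : ∀ E ∈ 𝓔, Nt E
  co : ∀ E ∈ 𝓔, Eᶜ ∈ 𝓔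
  nest : ∀ E ∈ 𝓔, ∀ F ∈ 𝓔, E ⊆ F ∨ E ⊆ Fᶜ ∨ Eᶜ ⊆ F ∨ Eᶜ ⊆ Fᶜ
  fin : ∀ E ∈ 𝓔, ∀ F ∈ 𝓔, {X | X ∈ 𝓔 ∧ E ⊆ X ∧ X ⊆ F}.Finite

/-- consistent orientations -/
structure Ori (𝓔 : Set (Set α)) (s : Set (Set α)) : Prop where
  sub : s ⊆ 𝓔
  one : ∀ X ∈ 𝓔, (Xᶜ ∈ s ↔ X ∉ s)
  up : ∀ X ∈ s, ∀ Y ∈ 𝓔, X ⊆ Y → Y ∈ s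

def o (𝓔 : Set (Set α)) (U : Set α) : Set (Set α) := {X | X ∈ 𝓔 ∧ (U ⊆ X ∨ Uᶜ ⊂ X)}

theorem Nt.not_compl_sub {U : Set α} (h : Nt U) : ¬ U ⊆ Uᶜ := by
  obtain ⟨⟨a, ha⟩, -⟩ := h
  exact fun h => h ha ha

theorem Nt.not_sub_compl {U : Set α} (h : Nt U) : ¬ Uᶜ ⊆ U := by
  obtain ⟨-, ⟨a, ha⟩⟩ := h
  exact fun h => ha (h ha)

theorem ori_o (hN : Nest 𝓔) {U : Set α} (hU : U ∈ 𝓔) : Ori 𝓔 (o 𝓔 U) := by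
  refine ⟨fun X h => h.1, fun X hX => ⟨?_, ?_⟩, ?_⟩
  · rintro ⟨-, h1⟩ ⟨-, h2⟩
    have hnt := hN.nt U hU
    rcases h1 with h1 | h1 <;> rcases h2 with h2 | h2
    · obtain ⟨a, ha⟩ := hnt.1
      exact h1 ha (h2 ha)
    · exact h2.2 (Set.subset_compl_comm.1 h1)
    · exact h1.2 (Set.compl_subset_compl.2 h2)
    · exact hnt.not_sub_compl (h2.1.trans (Set.compl_subset_compl.1 h1.1))
  · intro h
    have h' : ¬ (U ⊆ X) ∧ ¬ (Uᶜ ⊂ X) := ⟨fun h1 => h ⟨hX, Or.inl h1⟩, fun h1 => h ⟨hX, Or.inr h1⟩⟩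
    refine ⟨hN.co X hX, ?_⟩
    rcases hN.nest U hU X hX with h1 | h1 | h1 | h1
    · exact absurd h1 h'.1
    · exact Or.inl h1
    · have : Uᶜ = X := by
        by_contra hne
        exact h'.2 (lt_of_le_of_ne h1 hne)
      left; rw [← this, compl_compl]
    · right
      refine lt_of_le_of_ne h1 ?_
      intro heq
      exact h'.1 (compl_injective heq).le
  · rintro X ⟨hX, h⟩ Y hY hXY
    exact ⟨hY, h.imp (fun h => h.trans hXY) fun h => lt_of_lt_of_le h hXY⟩

theorem self_mem_o {U : Set α} (hU : U ∈ 𝓔) : U ∈ o 𝓔 U := ⟨hU, Or.inl subset_rfl⟩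

theorem Ori.eq {s t : Set (Set α)} (hs : Ori 𝓔 s) (ht : Ori 𝓔 t) (h : s ⊆ t) : s = t := by
  apply Set.Subset.antisymm h
  intro X hX
  by_contra hc
  have h1 := h ((hs.one X (ht.sub hX)).2 hc)
  exact (ht.one X (ht.sub hX)).1 h1 hX

theorem Ori.notMem_compl {s : Set (Set α)} (hs : Ori 𝓔 s) {X : Set α} (h : X ∈ s) : Xᶜ ∉ s :=
  fun hc => (hs.one X (hs.sub h)).1 hc h

theorem eq_o (hN : Nest 𝓔) {s : Set (Set α)} (hs : Ori 𝓔 s) {F : Set α} (hF : F ∈ s)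
    (hmin : ∀ X ∈ s, X ⊆ F → X = F) : s = o 𝓔 F := by
  symm
  apply (ori_o hN (hs.sub hF)).eq hs
  rintro X ⟨hX, h | h⟩
  · exact hs.up F hF X hX h
  · by_contra hc
    have h1 := (hs.one X hX).2 hc
    have h2 := hmin _ h1 (Set.compl_subset_comm.1 h.1)
    rw [← h2, compl_compl] at h
    exact h.2 le_rfl

theorem flip (hN : Nest 𝓔) {F X : Set α} (hF : F ∈ 𝓔) :
    X ∈ o 𝓔 Fᶜ ↔ (X ∈ o 𝓔 F ∧ X ≠ F) ∨ X = Fᶜ := by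
  have hnt := hN.nt F hF
  constructor
  · rintro ⟨hX, h | h⟩
    · by_cases he : X = Fᶜ
      · exact Or.inr he
      · refine Or.inl ⟨⟨hX, Or.inr (lt_of_le_of_ne h (Ne.symm he))⟩, ?_⟩
        rintro rfl
        exact hnt.not_sub_compl h
    · rw [compl_compl] at h
      exact Or.inl ⟨⟨hX, Or.inl h.1⟩, fun he => h.ne he.symm⟩
  · rintro (⟨⟨hX, h | h⟩, hne⟩ | rfl)
    · refine ⟨hX, Or.inr ?_⟩
      rw [compl_compl]
      exact lt_of_le_of_ne h (Ne.symm hne)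
    · exact ⟨hX, Or.inl h.1⟩
    · exact self_mem_o (hN.co F hF)

theorem fin_diff (hN : Nest 𝓔) {U F : Set α} (hU : U ∈ 𝓔) (hF : F ∈ 𝓔) : (o 𝓔 U \ o 𝓔 F).Finite := by
  have h1 := hN.fin U hU F hF
  have h2 := hN.fin U hU Fᶜ (hN.co F hF)
  have h3 := hN.fin Uᶜ (hN.co U hU) F hF
  have h4 := hN.fin Uᶜ (hN.co U hU) Fᶜ (hN.co F hF)
  refine ((h1.union h2).union (h3.union h4)).subset ?_
  rintro X ⟨⟨hX, h⟩, hX'⟩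
  obtain ⟨-, h'⟩ := ((ori_o hN hF).one X hX).2 hX'
  have k : X ⊆ Fᶜ ∨ X ⊆ F := by
    rcases h' with h' | h'
    · exact Or.inl (Set.subset_compl_comm.1 h')
    · exact Or.inr (Set.compl_subset_compl.1 h'.1)
  rcases h with h | h <;> rcases k with k | k
  · exact Or.inl (Or.inr ⟨hX, h, k⟩)
  · exact Or.inl (Or.inl ⟨hX, h, k⟩)
  · exact Or.inr (Or.inr ⟨hX, h.1, k⟩)
  · exact Or.inr (Or.inl ⟨hX, h.1, k⟩)

theorem step (hN : Nest 𝓔) {s t : Set (Set α)} (hs : Ori 𝓔 s) (ht : Ori 𝓔 t) (hne : s ≠ t)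
    (hfin : (s \ t).Finite) : ∃ F ∈ s \ t, s = o 𝓔 F ∧ o 𝓔 Fᶜ \ t = (s \ t) \ {F} := by
  have hnemp : (s \ t).Nonempty := by
    rw [Set.sdiff_nonempty]
    exact fun h => hne (hs.eq ht h)
  obtain ⟨F, hF⟩ := hfin.exists_minimal hnemp
  have hFm : F ∈ s \ t := hF.1
  have hmin : ∀ X ∈ s, X ⊆ F → X = F := by
    intro X hX hXF
    have : X ∈ s \ t := ⟨hX, fun hc => hFm.2 (ht.up X hc F (hs.sub hFm.1) hXF)⟩
    exact Set.Subset.antisymm hXF (hF.2 this hXF)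
  have hsF := eq_o hN hs hFm.1 hmin
  refine ⟨F, hFm, hsF, ?_⟩
  ext X
  simp only [Set.mem_sdiff, flip hN (hs.sub hFm.1), ← hsF, Set.mem_singleton_iff]
  constructor
  · rintro ⟨h | rfl, hX⟩
    · exact ⟨⟨h.1, hX⟩, h.2⟩
    · exact absurd ((ht.one F (hs.sub hFm.1)).2 hFm.2) hX
  · rintro ⟨⟨h1, h2⟩, h3⟩
    exact ⟨Or.inl ⟨h1, h3⟩, h2⟩

theorem range_o (hN : Nest 𝓔) {U : Set α} (hU : U ∈ 𝓔) {t : Set (Set α)} (ht : Ori 𝓔 t)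
    (hfin : (o 𝓔 U \ t).Finite) : ∃ F ∈ 𝓔, t = o 𝓔 F := by
  induction hn : (o 𝓔 U \ t).ncard generalizing U with
  | zero =>
    rw [Set.ncard_eq_zero hfin, Set.sdiff_eq_empty] at hn
    exact ⟨U, hU, ((ori_o hN hU).eq ht hn).symm⟩
  | succ n ih =>
    by_cases he : o 𝓔 U = t
    · exact ⟨U, hU, he.symm⟩
    obtain ⟨F, hF, hUF, hd⟩ := step hN (ori_o hN hU) ht he hfin
    refine ih (hN.co F hF.1.1) (by rw [hd]; exact hfin.subset Set.sdiff_subset) ?_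
    rw [hd, Set.ncard_sdiff_singleton_of_mem hF]; omega

/-- vertices of the new tree -/
def NV (𝓔 : Set (Set α)) : Type := {s : Set (Set α) // ∃ U ∈ 𝓔, s = o 𝓔 U}

theorem NV.ori (hN : Nest 𝓔) (s : NV 𝓔) : Ori 𝓔 s.1 := by
  obtain ⟨s, U, hU, rfl⟩ := s; exact ori_o hN hU

theorem NV.fin (hN : Nest 𝓔) (s t : NV 𝓔) : (s.1 \ t.1).Finite := by
  obtain ⟨s, U, hU, rfl⟩ := s
  obtain ⟨t, F, hF, rfl⟩ := t
  exact fin_diff hN hU hF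

def mkV {U : Set α} (hU : U ∈ 𝓔) : NV 𝓔 := ⟨o 𝓔 U, U, hU, rfl⟩

def NT (hN : Nest 𝓔) : SimpleGraph (NV 𝓔) where
  Adj s t := ∃ U ∈ 𝓔, s.1 = o 𝓔 U ∧ t.1 = o 𝓔 Uᶜ
  symm := ⟨by
    rintro s t ⟨U, hU, h1, h2⟩
    exact ⟨Uᶜ, hN.co U hU, h2, by rw [compl_compl]; exact h1⟩⟩
  loopless := ⟨by
    rintro s ⟨U, hU, h1, h2⟩
    have h3 := self_mem_o hU
    rw [← h1, h2] at h3
    exact (ori_o hN (hN.co U hU)).notMem_compl (self_mem_o (hN.co U hU)) (by rwa [compl_compl])⟩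

/-- membership changes only across the corresponding edge -/
theorem adj_change (hN : Nest 𝓔) {a b : NV 𝓔} (h : (NT hN).Adj a b) {U : Set α} (ha : U ∈ a.1)
    (hb : U ∉ b.1) : a.1 = o 𝓔 U ∧ b.1 = o 𝓔 Uᶜ := by
  obtain ⟨F, hF, h1, h2⟩ := h
  have : U = F := by
    by_contra hne
    rw [h2, flip hN hF, ← h1] at hb
    exact hb (Or.inl ⟨ha, hne⟩)
  subst this
  exact ⟨h1, h2⟩

/-- there is a path from `s` to `t` along which sets outside both stay outside -/
theorem exists_path (hN : Nest 𝓔) (s t : NV 𝓔) : ∃ w : (NT hN).Walk s t,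
    w.length = (s.1 \ t.1).ncard ∧ ∀ a ∈ w.support, ∀ X, X ∉ s.1 → X ∉ t.1 → X ∉ a.1 := by
  induction hn : (s.1 \ t.1).ncard generalizing s with
  | zero =>
    rw [Set.ncard_eq_zero (s.fin hN t), Set.sdiff_eq_empty] at hn
    have : s = t := Subtype.ext ((s.ori hN).eq (t.ori hN) hn)
    subst this
    exact ⟨.nil, rfl, fun a ha X h1 h2 => by simp at ha; subst ha; exact h1⟩
  | succ n ih =>
    have hne : s.1 ≠ t.1 := by
      intro h; rw [h] at hn; simp at hn
    obtain ⟨F, hF, hsF, hd⟩ := step hN (s.ori hN) (t.ori hN) hne (s.fin hN t)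
    have hF𝓔 : F ∈ 𝓔 := (s.ori hN).sub hF.1
    obtain ⟨w, hw1, hw2⟩ := ih (mkV (hN.co F hF𝓔)) (by
      change (o 𝓔 Fᶜ \ t.1).ncard = n
      rw [hd, Set.ncard_sdiff_singleton_of_mem hF]; omega)
    have hadj : (NT hN).Adj s (mkV (hN.co F hF𝓔)) := ⟨F, hF𝓔, hsF, rfl⟩
    refine ⟨.cons hadj w, by simp [hw1], ?_⟩
    intro a ha X h1 h2
    rw [SimpleGraph.Walk.support_cons, List.mem_cons] at ha
    rcases ha with rfl | ha
    · exact h1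
    · refine hw2 a ha X ?_ h2
      change X ∉ o 𝓔 Fᶜ
      rw [flip hN hF𝓔, ← hsF]
      rintro (⟨h3, -⟩ | rfl)
      · exact h1 h3
      · exact h2 (((t.ori hN).one F hF𝓔).2 hF.2)

theorem walk_ge (hN : Nest 𝓔) {s t : NV 𝓔} (w : (NT hN).Walk s t) :
    (s.1 \ t.1).ncard ≤ w.length := by
  induction w with
  | nil => simp
  | cons h p ih =>
    rename_i a b t
    obtain ⟨F, hF, h1, h2⟩ := h
    have hsub : a.1 \ t.1 ⊆ insert F (b.1 \ t.1) := by
      rintro X ⟨hX, hX'⟩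
      by_cases he : X = F
      · exact Or.inl he
      · refine Or.inr ⟨?_, hX'⟩
        rw [h2, flip hN hF, ← h1]
        exact Or.inl ⟨hX, he⟩
    have h3 := Set.ncard_le_ncard hsub ((b.fin hN t).insert F)
    have h4 := Set.ncard_insert_le F (b.1 \ t.1)
    change _ ≤ p.length + 1
    omega

theorem NT_connected (hN : Nest 𝓔) (hne : 𝓔.Nonempty) : (NT hN).Connected := by
  obtain ⟨U, hU⟩ := hne
  have : Nonempty (NV 𝓔) := ⟨mkV hU⟩
  refine ⟨fun s t => ?_⟩
  obtain ⟨w, -⟩ := exists_path hN s t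
  exact ⟨w⟩

theorem NT_dist (hN : Nest 𝓔) (s t : NV 𝓔) : (NT hN).dist s t = (s.1 \ t.1).ncard := by
  obtain ⟨w, hw, -⟩ := exists_path hN s t
  apply le_antisymm
  · rw [← hw]; exact SimpleGraph.dist_le w
  · obtain ⟨w', hw'⟩ := (SimpleGraph.Walk.reachable w).exists_walk_length_eq_dist
    rw [← hw']; exact walk_ge hN w'

theorem NT_tree (hN : Nest 𝓔) (hne : 𝓔.Nonempty) : (NT hN).IsTree := by
  refine ⟨NT_connected hN hne, ?_⟩
  rw [SimpleGraph.isAcyclic_iff_forall_adj_isBridge]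
  rintro s t hst
  rw [SimpleGraph.isBridge_iff]
  rintro ⟨w⟩
  obtain ⟨U, hU, h1, h2⟩ := hst
  have key : ∀ a b : NV 𝓔, ((NT hN).deleteEdges {s(s, t)}).Walk a b → U ∈ a.1 → U ∈ b.1 := by
    intro a b w
    induction w with
    | nil => exact id
    | cons h p ih =>
      intro ha
      apply ih
      by_contra hb
      rw [SimpleGraph.deleteEdges_adj] at h
      obtain ⟨h3, h4⟩ := adj_change hN h.1 ha hb
      apply h.2
      rename_i a b _
      have e1 : a = s := Subtype.ext (h3.trans h1.symm)
      have e2 : b = t := Subtype.ext (h4.trans h2.symm)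
      rw [e1, e2]; rfl
  have h3 := key s t w (by rw [h1]; exact self_mem_o hU)
  rw [h2] at h3
  exact (ori_o hN (hN.co U hU)).notMem_compl (self_mem_o (hN.co U hU)) (by rwa [compl_compl])

variable {G : Type} [Group G] [MulAction G α]

theorem smul_o (h𝓔 : ∀ (g : G), ∀ E ∈ 𝓔, g • E ∈ 𝓔) (g : G) (U : Set α) :
    g • o 𝓔 U = o 𝓔 (g • U) := by
  have key : ∀ (g : G) (U : Set α) X, X ∈ o 𝓔 U → g • X ∈ o 𝓔 (g • U) := by
    rintro g U X ⟨hX, h⟩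
    refine ⟨h𝓔 g X hX, ?_⟩
    rw [← Set.smul_set_compl, Set.smul_set_subset_smul_set_iff, ssubset_iff_subset_not_subset,
      Set.smul_set_subset_smul_set_iff, Set.smul_set_subset_smul_set_iff]
    exact h
  ext X
  rw [Set.mem_smul_set_iff_inv_smul_mem]
  constructor
  · intro h
    have := key g _ _ h
    rwa [smul_inv_smul] at this
  · intro h
    have := key g⁻¹ _ _ h
    rwa [inv_smul_smul] at this

@[reducible] def actV (h𝓔 : ∀ (g : G), ∀ E ∈ 𝓔, g • E ∈ 𝓔) : MulAction G (NV 𝓔) where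
  smul g s := ⟨g • s.1, by
    obtain ⟨s, U, hU, rfl⟩ := s
    exact ⟨g • U, h𝓔 g U hU, smul_o h𝓔 g U⟩⟩
  one_smul s := Subtype.ext (one_smul G s.1)
  mul_smul g h s := Subtype.ext (mul_smul g h s.1)

def permV (h𝓔 : ∀ (g : G), ∀ E ∈ 𝓔, g • E ∈ 𝓔) : G →* Equiv.Perm (NV 𝓔) :=
  letI := actV h𝓔
  MulAction.toPermHom G (NV 𝓔)

theorem permV_val (h𝓔 : ∀ (g : G), ∀ E ∈ 𝓔, g • E ∈ 𝓔) (g : G) (s : NV 𝓔) :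
    (permV h𝓔 g s).1 = g • s.1 := rfl

theorem permV_adj (hN : Nest 𝓔) (h𝓔 : ∀ (g : G), ∀ E ∈ 𝓔, g • E ∈ 𝓔) (g : G) (s t : NV 𝓔) :
    (NT hN).Adj (permV h𝓔 g s) (permV h𝓔 g t) ↔ (NT hN).Adj s t := by
  have key : ∀ (g : G) (s t : NV 𝓔), (NT hN).Adj s t → (NT hN).Adj (permV h𝓔 g s) (permV h𝓔 g t) := by
    rintro g s t ⟨U, hU, h1, h2⟩
    refine ⟨g • U, h𝓔 g U hU, ?_, ?_⟩
    · rw [permV_val, h1, smul_o h𝓔]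
    · rw [permV_val, h2, smul_o h𝓔, Set.smul_set_compl]
  refine ⟨fun h => ?_, key g s t⟩
  have := key g⁻¹ _ _ h
  rwa [← Equiv.Perm.mul_apply, ← Equiv.Perm.mul_apply, ← map_mul, inv_mul_cancel, map_one] at this

end
end QT

namespace QT

set_option linter.unusedVariables false
open scoped Pointwise

variable {V : Type} {T : SimpleGraph V} {D β R : ℕ} {𝓔 : Set (Set (Pt T))}

structure Fam (T : SimpleGraph V) (D β R : ℕ) (𝓔 : Set (Set (Pt T))) : Prop where
  tb : TB T D
  bu0 : Bu0 T β
  nt : ∀ E ∈ 𝓔, Nt E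
  lo : ∀ E ∈ 𝓔, ∃ v, Loc T E v R
  co : ∀ E ∈ 𝓔, Eᶜ ∈ 𝓔
  nc : ∀ E ∈ 𝓔, ∀ F ∈ 𝓔, ¬ Cr E F
  sep : ∀ p q, T.Adj p q → ∀ a ∈ hs T p q, ∀ b ∉ hs T p q, ∃ E ∈ 𝓔, Loc T E q R ∧ ¬ (a ∈ E ↔ b ∈ E)

theorem interval_count (h : Fam T D β R 𝓔) (r : ℕ) (hr : R ≤ r) : ∃ N : ℕ, ∀ U F v w, Nt U → Nt F →
    Loc T U v r → Loc T F w r → {X | X ∈ 𝓔 ∧ U ⊆ X ∧ X ⊆ F}.Finite ∧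
      {X | X ∈ 𝓔 ∧ U ⊆ X ∧ X ⊆ F}.ncard ≤ (T.dist v w + 1) * N := by
  classical
  have hT := h.tb.tree
  obtain ⟨N, hN⟩ := loc_count h.tb (3 * r + 1)
  refine ⟨N, fun U F v w hU hF hlU hlF => ?_⟩
  have hex : ∀ t, ∃ x, t ≤ T.dist v w → T.dist v x = t ∧ w ∈ Sh T v x := by
    intro t
    by_cases ht : t ≤ T.dist v w
    · obtain ⟨x, hx⟩ := anc_exists hT v w t ht
      exact ⟨x, fun _ => hx⟩
    · exact ⟨v, fun h => absurd h ht⟩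
  choose x hx using hex
  let S : Finset (Set (Pt T)) := (Finset.range (T.dist v w + 1)).biUnion
    fun t => (hN (x t)).1.toFinset
  have hsub : {X | X ∈ 𝓔 ∧ U ⊆ X ∧ X ⊆ F} ⊆ (S : Set (Set (Pt T))) := by
    rintro X ⟨hX, hUX, hXF⟩
    obtain ⟨y, hy⟩ := h.lo X hX
    obtain ⟨m, hm, hmX⟩ := loc_between hT hUX hXF hU.1 hF.2 hlU hlF (hy.mono hT hr)
    have ht : T.dist v m ≤ T.dist v w := by omega
    have : x (T.dist v m) = m := by
      obtain ⟨h1, h2⟩ := hx _ ht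
      exact anc_unique hT h2 (mem_Sh.2 hm) h1
    simp only [S, Finset.coe_biUnion, Set.mem_iUnion, Set.Finite.coe_toFinset, Finset.coe_range,
      Set.mem_Iio]
    exact ⟨T.dist v m, by omega, by rw [this]; exact hmX⟩
  refine ⟨S.finite_toSet.subset hsub, ?_⟩
  refine (Set.ncard_le_ncard hsub S.finite_toSet).trans ?_
  rw [Set.ncard_coe_finset]
  refine (Finset.card_biUnion_le_card_mul _ _ N ?_).trans (by simp)
  intro t _
  rw [← Set.ncard_eq_toFinset_card _ (hN (x t)).1]
  exact (hN (x t)).2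

theorem Fam.nest (h : Fam T D β R 𝓔) : Nest 𝓔 := by
  refine ⟨h.nt, h.co, ?_, ?_⟩
  · intro E hE F hF
    by_contra hc
    push Not at hc
    obtain ⟨h1, h2, h3, h4⟩ := hc
    apply h.nc E hE F hF
    simp only [Set.not_subset] at h1 h2 h3 h4
    obtain ⟨a, ha, ha'⟩ := h1
    obtain ⟨b, hb, hb'⟩ := h2
    obtain ⟨c, hc, hc'⟩ := h3
    obtain ⟨d, hd, hd'⟩ := h4
    rw [Set.notMem_compl_iff] at hb' hd'
    exact ⟨⟨b, hb, hb'⟩, ⟨a, ha, ha'⟩, ⟨d, hd, hd'⟩, ⟨c, hc, hc'⟩⟩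
  · intro E hE F hF
    obtain ⟨N, hN⟩ := interval_count h R le_rfl
    obtain ⟨v, hv⟩ := h.lo E hE
    obtain ⟨w, hw⟩ := h.lo F hF
    exact (hN E F v w (h.nt E hE) (h.nt F hF) hv hw).1

theorem diff_sub {α : Type} {𝓔 : Set (Set α)} (hN : Nest 𝓔) {U F : Set α} (hF : F ∈ 𝓔) :
    o 𝓔 U \ o 𝓔 F ⊆ ({X | X ∈ 𝓔 ∧ U ⊆ X ∧ X ⊆ F} ∪ {X | X ∈ 𝓔 ∧ U ⊆ X ∧ X ⊆ Fᶜ}) ∪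
      ({X | X ∈ 𝓔 ∧ Uᶜ ⊆ X ∧ X ⊆ F} ∪ {X | X ∈ 𝓔 ∧ Uᶜ ⊆ X ∧ X ⊆ Fᶜ}) := by
  rintro X ⟨⟨hX, h⟩, hX'⟩
  obtain ⟨-, h'⟩ := ((ori_o hN hF).one X hX).2 hX'
  have k : X ⊆ Fᶜ ∨ X ⊆ F := by
    rcases h' with h' | h'
    · exact Or.inl (Set.subset_compl_comm.1 h')
    · exact Or.inr (Set.compl_subset_compl.1 h'.1)
  rcases h with h | h <;> rcases k with k | k
  · exact Or.inl (Or.inr ⟨hX, h, k⟩)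
  · exact Or.inl (Or.inl ⟨hX, h, k⟩)
  · exact Or.inr (Or.inr ⟨hX, h.1, k⟩)
  · exact Or.inr (Or.inl ⟨hX, h.1, k⟩)

theorem qi_upper (h : Fam T D β R 𝓔) : ∃ N : ℕ, ∀ U ∈ 𝓔, ∀ F ∈ 𝓔, ∀ v w,
    Loc T U v R → Loc T F w R → (o 𝓔 U \ o 𝓔 F).ncard ≤ (T.dist v w + 1) * N := by
  obtain ⟨N, hN⟩ := interval_count h R le_rfl
  refine ⟨4 * N, fun U hU F hF v w hlU hlF => ?_⟩
  have hs := diff_sub h.nest (U := U) hF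
  have a1 := hN U F v w (h.nt U hU) (h.nt F hF) hlU hlF
  have a2 := hN U Fᶜ v w (h.nt U hU) (h.nt _ (h.co F hF)) hlU hlF.compl
  have a3 := hN Uᶜ F v w (h.nt _ (h.co U hU)) (h.nt F hF) hlU.compl hlF
  have a4 := hN Uᶜ Fᶜ v w (h.nt _ (h.co U hU)) (h.nt _ (h.co F hF)) hlU.compl hlF.compl
  have b0 := Set.ncard_le_ncard hs ((a1.1.union a2.1).union (a3.1.union a4.1))
  have b1 := Set.ncard_union_le ({X | X ∈ 𝓔 ∧ U ⊆ X ∧ X ⊆ F} ∪ {X | X ∈ 𝓔 ∧ U ⊆ X ∧ X ⊆ Fᶜ})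
      ({X | X ∈ 𝓔 ∧ Uᶜ ⊆ X ∧ X ⊆ F} ∪ {X | X ∈ 𝓔 ∧ Uᶜ ⊆ X ∧ X ⊆ Fᶜ})
  have b2 := Set.ncard_union_le {X | X ∈ 𝓔 ∧ U ⊆ X ∧ X ⊆ F} {X | X ∈ 𝓔 ∧ U ⊆ X ∧ X ⊆ Fᶜ}
  have b3 := Set.ncard_union_le {X | X ∈ 𝓔 ∧ Uᶜ ⊆ X ∧ X ⊆ F} {X | X ∈ 𝓔 ∧ Uᶜ ⊆ X ∧ X ⊆ Fᶜ}
  have : (T.dist v w + 1) * (4 * N) = 4 * ((T.dist v w + 1) * N) := by ring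
  rw [this]
  have a1 := a1.2
  have a2 := a2.2
  have a3 := a3.2
  have a4 := a4.2
  omega

def Ray (T : SimpleGraph V) (v : V) (P : Pt T) (x : ℕ → V) : Prop :=
  ∀ t, T.dist v (x t) = t ∧ P ∈ hs T v (x t)

theorem exists_ray (h : TB T D) (v : V) (P : Pt T) : ∃ x, Ray T v P x := by
  choose x hx using exists_hs h P v
  exact ⟨x, hx⟩

theorem Ray.mem (hT : T.IsTree) {v : V} {P : Pt T} {x : ℕ → V} (hx : Ray T v P x) {s t : ℕ}
    (hst : s ≤ t) : x t ∈ Sh T v (x s) :=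
  mem_Sh_of_hs hT (hx s).2 (hx t).2 (by rw [(hx s).1, (hx t).1]; exact hst)

theorem Ray.dist (hT : T.IsTree) {v : V} {P : Pt T} {x : ℕ → V} (hx : Ray T v P x) {s t : ℕ}
    (hst : s ≤ t) : T.dist (x s) (x t) = t - s := by
  have := hx.mem hT hst
  rw [mem_Sh, (hx s).1, (hx t).1] at this
  omega

/-- separators along a ray -/
theorem chain1 (h : Fam T D β R 𝓔) {v : V} {P : Pt T} {x : ℕ → V} (hx : Ray T v P x) {t : ℕ}
    (ht : 2 * β + 2 ≤ t) : ∃ E ∈ 𝓔, Loc T E (x (t + R)) R ∧ (hs T v (x t))ᶜ ⊆ E ∧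
      E ⊆ (hs T v (x (t + 2 * R + 1)))ᶜ := by
  have hT := h.tb.tree
  have hadj : T.Adj (x (t + R - 1)) (x (t + R)) := by
    rw [← SimpleGraph.dist_eq_one_iff_adj, hx.dist hT (by omega)]; omega
  have hpq : hs T v (x (t + R)) = hs T (x (t + R - 1)) (x (t + R)) :=
    hs_eq_of_parent hT hadj (by rw [(hx _).1, (hx _).1]; omega)
  obtain ⟨b, -, hb⟩ := bu hT h.bu0 (v := v) (x := v) (z := x t) (by rw [Sh_self]; trivial)
    (by rw [(hx t).1]; exact ht)
  have hb' : b ∉ hs T v (x (t + R)) := fun hc => hb (hs_trans hT (hx.mem hT (by omega)) hc)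
  obtain ⟨E, hE, hl, hsep⟩ := h.sep _ _ hadj P (by rw [← hpq]; exact (hx _).2) b (by rwa [← hpq])
  -- constant near
  have hne : v ≠ x t := by
    intro hc; have := (hx t).1; rw [← hc, SimpleGraph.dist_self] at this; omega
  obtain ⟨p, hp, hpd⟩ := hs_compl_far hT hne (hx.mem hT (Nat.le_add_right t R))
  have c1 := hl p (by
    rw [hpd, T.dist_comm, hx.dist hT (by omega)]; omega)
  rw [← hp] at c1
  have c2 := hl (x (t + 2 * R + 1)) (by rw [hx.dist hT (by omega)]; omega)
  have hch : hs T v (x (t + 2 * R + 1)) = hs T (x (t + R)) (x (t + 2 * R + 1)) := by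
    apply hs_change hT
    · intro hc; have := (hx (t + 2 * R + 1)).1; rw [← hc, SimpleGraph.dist_self] at this; omega
    · intro hc
      rw [mem_Sh, (hx _).1, (hx _).1] at hc; omega
  rw [← hch] at c2
  have hP := (hx (t + 2 * R + 1)).2
  rcases c1 with c1 | c1 <;> rcases c2 with c2 | c2
  · exact absurd ⟨fun _ => c1 hb, fun _ => c2 hP⟩ hsep
  · exact ⟨E, hE, hl, c1, Set.subset_compl_comm.1 c2⟩
  · exact ⟨Eᶜ, h.co E hE, hl.compl, c1, Set.compl_subset_compl.2 c2⟩
  · exact absurd ⟨fun hc => absurd hc (c2 hP), fun hc => absurd hc (c1 hb)⟩ hsep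

def sg (β R : ℕ) : ℕ := 2 * R + 1 + (2 * β + 2)

theorem chain (h : Fam T D β R 𝓔) {v : V} {P : Pt T} {x : ℕ → V} (hx : Ray T v P x) :
    ∃ E : ℕ → Set (Pt T), ∀ n, E n ∈ 𝓔 ∧ Loc T (E n) (x ((n + 1) * sg β R + R)) R ∧
      (hs T v (x ((n + 1) * sg β R)))ᶜ ⊆ E n ∧ E n ⊂ (hs T v (x ((n + 2) * sg β R)))ᶜ := by
  have hT := h.tb.tree
  have hex : ∀ n : ℕ, ∃ E : Set (Pt T), E ∈ 𝓔 ∧ Loc T E (x ((n + 1) * sg β R + R)) R ∧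
      (hs T v (x ((n + 1) * sg β R)))ᶜ ⊆ E ∧ E ⊂ (hs T v (x ((n + 2) * sg β R)))ᶜ := by
    intro n
    have h1 : (n + 2) * sg β R = (n + 1) * sg β R + sg β R := by ring
    have h2 : (n + 1) * sg β R = n * sg β R + sg β R := by ring
    have h3 : sg β R = 2 * R + 1 + (2 * β + 2) := rfl
    obtain ⟨E, hE, hl, hE1, hE2⟩ := chain1 h hx (t := (n + 1) * sg β R) (by omega)
    refine ⟨E, hE, hl, hE1, ?_⟩
    have hle : (n + 1) * sg β R + 2 * R + 1 ≤ (n + 2) * sg β R := by omega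
    refine lt_of_le_of_lt hE2 ?_
    obtain ⟨a, ha, ha'⟩ := bu hT h.bu0 (hx.mem hT hle) (by rw [hx.dist hT hle]; omega)
    exact ⟨Set.compl_subset_compl.2 (hs_trans hT (hx.mem hT hle)), fun hc => hc ha' ha⟩
  choose E hE using hex
  exact ⟨E, hE⟩

theorem chain_mono {v : V} {x : ℕ → V} {E : ℕ → Set (Pt T)} {c : ℕ}
    (hE : ∀ n, (hs T v (x ((n + 1) * c)))ᶜ ⊆ E n ∧ E n ⊂ (hs T v (x ((n + 2) * c)))ᶜ) :
    StrictMono E := by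
  apply strictMono_nat_of_lt_succ
  intro n
  exact lt_of_lt_of_le (hE n).2 (hE (n + 1)).1

theorem le_ncard_of_inj {α : Type} {S : Set α} {M : ℕ} (f : ℕ → α) (hf : Function.Injective f)
    (hS : S.Finite) (h : ∀ n, n < M → f n ∈ S) : M ≤ S.ncard := by
  have hsub : f '' (Finset.range M : Set ℕ) ⊆ S := by
    rintro X ⟨n, hn, rfl⟩
    exact h n (by simpa using hn)
  have h6 := Set.ncard_le_ncard hsub hS
  rwa [Set.ncard_image_of_injective _ hf, Set.ncard_coe_finset, Finset.card_range] at h6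

theorem qi_lower (h : Fam T D β R 𝓔) (r : ℕ) : ∀ U ∈ 𝓔, ∀ F ∈ 𝓔, ∀ v w,
    Loc T U v r → Loc T F w r →
    T.dist v w ≤ sg β R * ((o 𝓔 U \ o 𝓔 F).ncard + r + 4) + (2 * β + 2) + r := by
  intro U hU F hF v w hlU hlF
  have hT := h.tb.tree
  by_contra hc
  push Not at hc
  set M := (o 𝓔 U \ o 𝓔 F).ncard with hM
  have hσ : 1 ≤ sg β R := by unfold sg; omega
  obtain ⟨z, hz, hwz⟩ := anc_exists hT v w (T.dist v w - (2 * β + 2)) (by omega)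
  obtain ⟨P, hP, -⟩ := bu hT h.bu0 hwz (by rw [mem_Sh] at hwz; omega)
  obtain ⟨x, hx⟩ := exists_ray h.tb v P
  have hxz : x (T.dist v w - (2 * β + 2)) = z := hs_unique hT (hx _).2 hP (by rw [(hx _).1, hz])
  have hwx : ∀ t, t + (2 * β + 2) ≤ T.dist v w → w ∈ Sh T v (x t) := by
    intro t ht
    apply Sh_trans hT (hx.mem hT (show t ≤ T.dist v w - (2 * β + 2) by omega))
    rw [hxz]; exact hwz
  obtain ⟨E, hE⟩ := chain h hx
  have hmono : StrictMono E := chain_mono fun n => (hE n).2.2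
  have key : ∀ n, n < M + 1 → E (r + 1 + n) ∈ o 𝓔 U \ o 𝓔 F := by
    intro n hn
    refine ⟨⟨(hE _).1, ?_⟩, ?_⟩
    · -- U
      have h1 : r < (r + n + 1) * sg β R := by nlinarith
      have h2 : E (r + n) ⊂ E (r + 1 + n) := hmono (by omega)
      have h3 := (hE (r + n)).2.2.1
      rcases hlU (x ((r + n + 1) * sg β R)) (by rw [(hx _).1]; exact h1) with h4 | h4
      · right
        exact lt_of_le_of_lt ((Set.compl_subset_compl.2 h4).trans h3) h2
      · left
        exact ((Set.subset_compl_comm.1 h4).trans h3).trans h2.1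
    · intro hmem
      refine (ori_o h.nest hF).notMem_compl hmem ⟨h.co _ (hE _).1, ?_⟩
      have h1 : (r + 1 + n + 2) * sg β R ≤ sg β R * (M + r + 4) - sg β R := by
        have : sg β R * (M + r + 4) = sg β R * (M + r + 3) + sg β R := by ring
        rw [this, Nat.add_sub_cancel, mul_comm]
        exact Nat.mul_le_mul_left _ (by omega)
      have h2 : 1 ≤ (r + 1 + n + 2) * sg β R := Nat.mul_pos (by omega) hσ
      have h3 := hwx ((r + 1 + n + 2) * sg β R) (by omega)
      have hne : v ≠ x ((r + 1 + n + 2) * sg β R) := by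
        intro hc; have := (hx ((r + 1 + n + 2) * sg β R)).1
        rw [← hc, SimpleGraph.dist_self] at this; omega
      obtain ⟨p, hp, hpd⟩ := hs_compl_far hT hne h3
      rw [mem_Sh, (hx _).1] at h3
      rw [T.dist_comm] at h3
      have h4 := hlF p (by
        rw [hpd, T.dist_comm]
        rw [T.dist_comm] at h3
        omega)
      rw [← hp] at h4
      have h5 := (hE (r + 1 + n)).2.2.2
      rcases h4 with h4 | h4
      · right
        have := lt_of_lt_of_le h5 h4
        exact ⟨Set.compl_subset_compl.2 this.1, fun hc => this.2 (Set.compl_subset_compl.1 hc)⟩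
      · left
        exact Set.subset_compl_comm.1 (h5.1.trans h4)
  have h6 := le_ncard_of_inj (fun n => E (r + 1 + n)) (fun a b hab => by
    have := hmono.injective hab; omega) (fin_diff h.nest hU hF) key
  omega

end QT

namespace QT

set_option linter.unusedVariables false
open scoped Pointwise

variable {V : Type} {T : SimpleGraph V} {D β R : ℕ} {𝓔 : Set (Set (Pt T))}

theorem near_elem (h : Fam T D β R 𝓔) (y : V) : ∃ E ∈ 𝓔, ∃ q, Loc T E q R ∧ T.dist y q ≤ β + 1 := by
  have hT := h.tb.tree
  obtain ⟨w, hw, n, hn, hi⟩ := h.bu0 y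
  obtain ⟨a, ha⟩ := hat_nonempty hT (bc_Sh hT w (n 0)) (hi 0).2
  obtain ⟨b, hb⟩ := hat_nonempty hT (bc_Sh hT w (n 1)) (hi 1).2
  have d0 := SimpleGraph.dist_eq_one_iff_adj.2 (hi 0).1
  have d1 := SimpleGraph.dist_eq_one_iff_adj.2 (hi 1).1
  have hb' : b ∉ hs T w (n 0) := by
    intro hc
    have := hn (hs_unique hT hc hb (by omega))
    simp at this
  obtain ⟨E, hE, hl, -⟩ := h.sep w (n 0) (hi 0).1 a ha b hb'
  refine ⟨E, hE, n 0, hl, ?_⟩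
  have := tri hT y w (n 0)
  omega

theorem exists_f (h : Fam T D β R 𝓔) : ∃ f : NV 𝓔 → V, ∀ s, ∃ U ∈ 𝓔, s.1 = o 𝓔 U ∧ Loc T U (f s) R := by
  have : ∀ s : NV 𝓔, ∃ v, ∃ U ∈ 𝓔, s.1 = o 𝓔 U ∧ Loc T U v R := by
    rintro ⟨s, U, hU, rfl⟩
    obtain ⟨v, hv⟩ := h.lo U hU
    exact ⟨v, U, hU, rfl, hv⟩
  exact ⟨fun s => (this s).choose, fun s => (this s).choose_spec⟩

/-- two positions of the same vertex -/
theorem same_close (h : Fam T D β R 𝓔) {r : ℕ} {U F : Set (Pt T)} (hU : U ∈ 𝓔) (hF : F ∈ 𝓔) {v w : V}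
    (hv : Loc T U v r) (hw : Loc T F w r) (he : o 𝓔 U = o 𝓔 F) :
    T.dist v w ≤ sg β R * (r + 4) + (2 * β + 2) + r := by
  have := qi_lower h r U hU F hF v w hv hw
  rw [he, Set.sdiff_self, Set.ncard_empty, Nat.zero_add] at this
  exact this

theorem valence (h : Fam T D β R 𝓔) : ∃ N : ℕ, ∀ s : NV 𝓔,
    ((NT h.nest).neighborSet s).Finite ∧ ((NT h.nest).neighborSet s).ncard ≤ N := by
  classical
  have hT := h.tb.tree
  obtain ⟨f, hf⟩ := exists_f h
  obtain ⟨N, hN⟩ := loc_count h.tb (R + (sg β R * (R + 4) + (2 * β + 2) + R))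
  refine ⟨N, fun s => ?_⟩
  let g : Set (Pt T) → NV 𝓔 := fun F => if hF : F ∈ 𝓔 then mkV (h.co F hF) else s
  have hsub : (NT h.nest).neighborSet s ⊆
      g '' {u | Loc T u (f s) (R + (sg β R * (R + 4) + (2 * β + 2) + R))} := by
    rintro t ⟨F, hF, h1, h2⟩
    refine ⟨F, ?_, ?_⟩
    · obtain ⟨U, hU, hsU, hlU⟩ := hf s
      obtain ⟨y, hy⟩ := h.lo F hF
      have := same_close h hF hU hy hlU (h1.symm.trans hsU)
      exact hy.move hT (by omega)
    · apply Subtype.ext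
      simp only [g, dif_pos hF]
      exact h2.symm
  have hfin := (hN (f s)).1
  exact ⟨(hfin.image g).subset hsub, (Set.ncard_le_ncard hsub (hfin.image g)).trans
    ((Set.ncard_image_le hfin).trans (hN (f s)).2)⟩

/-- majority of three orientations -/
def maj {α : Type} (b : Fin 3 → Set α) : Set α :=
  {X | (X ∈ b 0 ∧ X ∈ b 1) ∨ (X ∈ b 0 ∧ X ∈ b 2) ∨ (X ∈ b 1 ∧ X ∈ b 2)}

theorem maj_ori {α : Type} {𝓔 : Set (Set α)} {b : Fin 3 → Set (Set α)} (hb : ∀ i, Ori 𝓔 (b i)) :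
    Ori 𝓔 (maj b) := by
  refine ⟨?_, ?_, ?_⟩
  · rintro X (h | h | h)
    exacts [(hb 0).sub h.1, (hb 0).sub h.1, (hb 1).sub h.1]
  · intro X hX
    have h0 := (hb 0).one X hX
    have h1 := (hb 1).one X hX
    have h2 := (hb 2).one X hX
    simp only [maj, Set.mem_ofPred_eq, h0, h1, h2]
    tauto
  · rintro X (h | h | h) Y hY hXY
    · exact Or.inl ⟨(hb 0).up X h.1 Y hY hXY, (hb 1).up X h.2 Y hY hXY⟩
    · exact Or.inr (Or.inl ⟨(hb 0).up X h.1 Y hY hXY, (hb 2).up X h.2 Y hY hXY⟩)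
    · exact Or.inr (Or.inr ⟨(hb 1).up X h.1 Y hY hXY, (hb 2).up X h.2 Y hY hXY⟩)

theorem maj_other {α : Type} {b : Fin 3 → Set α} {X : α} (hX : X ∈ maj b) {i j : Fin 3} (hij : i ≠ j)
    (hi : X ∉ b i) : X ∈ b j := by
  have hX' : (X ∈ b 0 ∧ X ∈ b 1) ∨ (X ∈ b 0 ∧ X ∈ b 2) ∨ (X ∈ b 1 ∧ X ∈ b 2) := hX
  fin_cases i <;> fin_cases j <;> simp_all

theorem walk_inv {α : Type} {𝓔 : Set (Set α)} (hN : Nest 𝓔) {m : NV 𝓔} {X : Set α}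
    (hX : m.1 = o 𝓔 X) {a b : ({m}ᶜ : Set (NV 𝓔))}
    (hr : ((NT hN).induce ({m}ᶜ : Set (NV 𝓔))).Reachable a b) : X ∈ a.1.1 ↔ X ∈ b.1.1 := by
  obtain ⟨w⟩ := hr
  induction w with
  | nil => exact Iff.rfl
  | cons h p ih =>
    rename_i a b c
    refine Iff.trans ?_ ih
    have hadj : (NT hN).Adj a.1 b.1 := h
    constructor
    · intro ha
      by_contra hb
      exact a.2 (Subtype.ext ((adj_change hN hadj ha hb).1.trans hX.symm))
    · intro hb
      by_contra ha
      exact b.2 (Subtype.ext ((adj_change hN hadj.symm hb ha).1.trans hX.symm))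

theorem bushy (h : Fam T D β R 𝓔) : ∃ β' : ℕ, ∀ s : NV 𝓔, ∃ m : NV 𝓔, (NT h.nest).dist s m ≤ β' ∧
    ∃ c : Fin 3 → ((NT h.nest).induce ({m}ᶜ : Set (NV 𝓔))).ConnectedComponent,
      Function.Injective c ∧
      ∀ (i : Fin 3) (R : ℕ), ∃ u : ({m}ᶜ : Set (NV 𝓔)),
        ((NT h.nest).induce ({m}ᶜ : Set (NV 𝓔))).connectedComponentMk u = c i ∧
          R ≤ (NT h.nest).dist m u := by
  have hT := h.tb.tree
  have hNe := h.nest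
  obtain ⟨f, hf⟩ := exists_f h
  obtain ⟨N, hN⟩ := qi_upper h
  have hσ : 1 ≤ sg β R := by unfold sg; omega
  refine ⟨2 * ((β + sg β R + R + 1) * N), fun s => ?_⟩
  obtain ⟨U, hU, hsU, hlU⟩ := hf s
  obtain ⟨w, hw, n, hn, hni⟩ := h.bu0 (f s)
  have ha : ∀ i, ∃ a, a ∈ hs T w (n i) := fun i => hat_nonempty hT (bc_Sh hT w (n i)) (hni i).2
  choose a ha using ha
  have hd1 : ∀ i, T.dist w (n i) = 1 := fun i => SimpleGraph.dist_eq_one_iff_adj.2 (hni i).1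
  choose x hx using fun i => exists_ray h.tb w (a i)
  have hx1 : ∀ i, x i 1 = n i := fun i => hs_unique hT (hx i 1).2 (ha i) (by rw [(hx i 1).1, hd1])
  choose E hE using fun i => chain h (hx i)
  have hmono : ∀ i, StrictMono (E i) := fun i => chain_mono fun n => (hE i n).2.2
  have hEm : ∀ i k, E i k ∈ 𝓔 := fun i k => (hE i k).1
  have hEc : ∀ i, (E i 0)ᶜ ⊆ hs T w (n i) := by
    intro i
    have h1 := (hE i 0).2.2.1
    have h2 : hs T w (x i ((0 + 1) * sg β R)) ⊆ hs T w (n i) := by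
      rw [← hx1 i]; exact hs_trans hT ((hx i).mem hT (by omega))
    exact (Set.compl_subset_comm.1 h1).trans h2
  have hdisj : ∀ i j, i ≠ j → ∀ P, P ∈ hs T w (n i) → P ∉ hs T w (n j) := by
    intro i j hij P h1 h2
    exact hij (hn (hs_unique hT h1 h2 (by rw [hd1, hd1])))
  have hmemE : ∀ i j, i ≠ j → ∀ P, P ∈ hs T w (n i) → P ∈ E j 0 := by
    intro i j hij P hP
    by_contra hc
    exact hdisj i j hij P hP (hEc j hc)
  have hsubE : ∀ i j, i ≠ j → (E i 0)ᶜ ⊂ E j 0 := by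
    intro i j hij
    refine ⟨fun P hP => hmemE i j hij P (hEc i hP), fun hc => ?_⟩
    obtain ⟨k, hki, hkj⟩ : ∃ k : Fin 3, k ≠ i ∧ k ≠ j := by
      fin_cases i <;> fin_cases j <;> simp_all <;> decide
    exact hc (hmemE k j hkj _ (ha k)) (hmemE k i hki _ (ha k))
  have hEne : ∀ i j, i ≠ j → E i 0 ≠ E j 0 := by
    intro i j hij he
    have := (hsubE i j hij).1
    rw [← he] at this
    exact (h.nt _ (hEm i 0)).not_sub_compl this
  let b : Fin 3 → Set (Set (Pt T)) := fun i => o 𝓔 (E i 0)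
  have hbo : ∀ i, Ori 𝓔 (b i) := fun i => ori_o hNe (hEm i 0)
  have hEb : ∀ i j, E i 0 ∈ b j := by
    intro i j
    by_cases hij : i = j
    · subst hij; exact self_mem_o (hEm i 0)
    · exact ⟨hEm i 0, Or.inr (hsubE j i (Ne.symm hij))⟩
  have hmo := maj_ori hbo
  have hmE : ∀ i, E i 0 ∈ maj b := fun i => Or.inl ⟨hEb i 0, hEb i 1⟩
  have hmr : ∃ F ∈ 𝓔, maj b = o 𝓔 F := by
    refine range_o hNe (hEm 0 0) hmo ((fin_diff hNe (hEm 0 0) (hEm 1 0)).subset ?_)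
    rintro X ⟨h1, h2⟩
    exact ⟨h1, fun h3 => h2 (Or.inl ⟨h1, h3⟩)⟩
  let m : NV 𝓔 := ⟨maj b, hmr⟩
  have hm1 : m.1 = maj b := rfl
  refine ⟨m, ?_, ?_⟩
  · rw [NT_dist, hsU, hm1]
    have hb : ∀ i, (o 𝓔 U \ b i).ncard ≤ (β + sg β R + R + 1) * N := by
      intro i
      refine (hN U hU (E i 0) (hEm i 0) _ _ hlU (hE i 0).2.1).trans ?_
      apply Nat.mul_le_mul_right
      have := tri hT (f s) w (x i ((0 + 1) * sg β R + R))
      rw [(hx i _).1] at this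
      omega
    have hsub : o 𝓔 U \ maj b ⊆ (o 𝓔 U \ b 0) ∪ (o 𝓔 U \ b 1) := by
      rintro X ⟨h1, h2⟩
      by_cases h3 : X ∈ b 0
      · exact Or.inr ⟨h1, fun h4 => h2 (Or.inl ⟨h3, h4⟩)⟩
      · exact Or.inl ⟨h1, h3⟩
    have h1 := Set.ncard_le_ncard hsub ((fin_diff hNe hU (hEm 0 0)).union (fin_diff hNe hU (hEm 1 0)))
    have h2 := Set.ncard_union_le (o 𝓔 U \ b 0) (o 𝓔 U \ b 1)
    have h3 := hb 0
    have h4 := hb 1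
    omega
  -- the three directions
  have hnot : ∀ i, E i 0 ∉ o 𝓔 (E i 0)ᶜ := by
    intro i hc
    exact (ori_o hNe (h.co _ (hEm i 0))).notMem_compl hc (self_mem_o (h.co _ (hEm i 0)))
  have hXex : ∀ i, ∃ X, X ∈ maj b ∧ X ∉ o 𝓔 (E i 0)ᶜ ∧ maj b = o 𝓔 X := by
    intro i
    have hfin : (maj b \ o 𝓔 (E i 0)ᶜ).Finite := m.fin hNe (mkV (h.co _ (hEm i 0)))
    obtain ⟨X, hX, h1, -⟩ := step hNe hmo (ori_o hNe (h.co _ (hEm i 0)))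
      (fun he => hnot i (he ▸ hmE i)) hfin
    exact ⟨X, hX.1, hX.2, h1⟩
  choose X hXm hXn hXo using hXex
  have hXb : ∀ i, X i ∉ b i ∨ X i = E i 0 := by
    intro i
    by_contra hc
    push Not at hc
    exact hXn i ((flip hNe (hEm i 0)).2 (Or.inl hc))
  have hXj : ∀ i j, i ≠ j → X i ∈ o 𝓔 (E j 0)ᶜ := by
    intro i j hij
    rw [flip hNe (hEm j 0)]
    left
    constructor
    · rcases hXb i with h1 | h1
      · exact maj_other (hXm i) hij h1
      · rw [h1]; exact hEb i j
    · intro he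
      rcases hXb i with h1 | h1
      · rw [he] at h1; exact h1 (hEb j i)
      · exact hEne i j hij (h1.symm.trans he)
  have hne : ∀ i k, mkV (h.co _ (hEm i k)) ∈ ({m}ᶜ : Set (NV 𝓔)) := by
    intro i k hc
    have h1 : o 𝓔 (E i k)ᶜ = maj b := congrArg Subtype.val hc
    have h2 : E i k ∈ maj b := hmo.up _ (hmE i) _ (hEm i k) ((hmono i).monotone (Nat.zero_le k))
    have h3 := self_mem_o (h.co _ (hEm i k))
    rw [h1] at h3
    exact hmo.notMem_compl h2 h3
  refine ⟨fun i => ((NT h.nest).induce ({m}ᶜ : Set (NV 𝓔))).connectedComponentMk ⟨_, hne i 0⟩, ?_, ?_⟩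
  · intro i j hij
    by_contra hc
    have h1 := walk_inv hNe (hXo i) (SimpleGraph.ConnectedComponent.exact hij)
    exact hXn i (h1.2 (hXj i j hc))
  · intro i k
    have hXu : X i ∉ (mkV (h.co _ (hEm i k))).1 := by
      have h1 := ((ori_o hNe (h.co _ (hEm i 0))).one (X i) (hmo.sub (hXm i))).2 (hXn i)
      have hle : E i 0 ⊆ E i k := (hmono i).monotone (Nat.zero_le k)
      rcases h1 with ⟨hXc, h1 | h1⟩
      · intro hc
        refine (ori_o hNe (h.co _ (hEm i k))).notMem_compl hc ⟨hXc, Or.inl ?_⟩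
        exact (Set.compl_subset_compl.2 hle).trans h1
      · rw [compl_compl] at h1
        exact absurd (hmo.up _ (hmE i) _ hXc h1.1) (hmo.notMem_compl (hXm i))
    refine ⟨⟨_, hne i k⟩, ?_, ?_⟩
    · apply SimpleGraph.ConnectedComponent.sound
      apply SimpleGraph.Reachable.symm
      obtain ⟨p, -, hp⟩ := exists_path hNe (mkV (h.co _ (hEm i 0))) (mkV (h.co _ (hEm i k)))
      refine ⟨p.induce _ ?_⟩
      rintro t ht rfl
      exact hp _ ht (X i) (hXn i) hXu (hXm i)
    · rw [NT_dist]
      refine le_ncard_of_inj (E i) (hmono i).injective (m.fin hNe _) ?_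
      intro l hl
      refine ⟨hmo.up _ (hmE i) _ (hEm i l) ((hmono i).monotone (Nat.zero_le l)), ?_⟩
      intro hc
      have h1 := (ori_o hNe (h.co _ (hEm i k))).up _ hc _ (hEm i k) ((hmono i).monotone hl.le)
      exact (ori_o hNe (h.co _ (hEm i k))).notMem_compl h1 (self_mem_o (h.co _ (hEm i k)))

end QT

namespace QT

set_option linter.unusedVariables false
open scoped Pointwise

variable {V : Type} {T : SimpleGraph V} {D β k : ℕ} {φ : ℕ → ℕ}

theorem core {G : Type} [Group G] [MulAction G (Pt T)] {A : G → V → V}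
    (hX : Ctx T G A D β k φ) :
    ∃ (V' : Type) (T' : SimpleGraph V'), T'.IsTree ∧ BoundedValence T' ∧ Bushy T' ∧
      ∃ ρ : G →* Equiv.Perm V', (∀ (g : G) (u v : V'), T'.Adj (ρ g u) (ρ g v) ↔ T'.Adj u v) ∧
        ∃ (f : V' → V) (M : ℕ), 1 ≤ M ∧
          (∀ x y, T'.dist x y ≤ M * T.dist (f x) (f y) + M) ∧
          (∀ x y, T.dist (f x) (f y) ≤ M * T'.dist x y + M) ∧
          (∀ y, ∃ x, T.dist (f x) y ≤ M) ∧
          ∃ B : ℕ, ∀ g x, T.dist (f (ρ g x)) (A g (f x)) ≤ B := by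
  obtain ⟨𝓔, R, h1, h2, h3, h4, h5⟩ := family_exists hX
  have hF : Fam T D β R 𝓔 := ⟨hX.tb, hX.bu0, fun E hE => (h1 E hE).1, fun E hE => (h1 E hE).2, h2, h4, h5⟩
  have hT := hX.tb.tree
  have hne : 𝓔.Nonempty := by
    obtain ⟨v⟩ := hT.connected.nonempty
    obtain ⟨E, hE, -⟩ := near_elem hF v
    exact ⟨E, hE⟩
  obtain ⟨f, hf⟩ := exists_f hF
  obtain ⟨N, hN⟩ := qi_upper hF
  have hlow := qi_lower hF R
  refine ⟨NV 𝓔, NT hF.nest, NT_tree hF.nest hne, valence hF, bushy hF, permV h3,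
    permV_adj hF.nest h3, f, N + sg β R * (R + 4) + (2 * β + 2) + R + β + 2, by omega, ?_, ?_, ?_, ?_⟩
  · intro x y
    obtain ⟨U, hU, hxU, hlU⟩ := hf x
    obtain ⟨F, hFm, hyF, hlF⟩ := hf y
    rw [NT_dist, hxU, hyF]
    have := hN U hU F hFm _ _ hlU hlF
    nlinarith [Nat.zero_le (T.dist (f x) (f y) * (sg β R * (R + 4) + (2 * β + 2) + R + β + 2)),
      Nat.zero_le (sg β R * (R + 4))]
  · intro x y
    obtain ⟨U, hU, hxU, hlU⟩ := hf x
    obtain ⟨F, hFm, hyF, hlF⟩ := hf y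
    rw [NT_dist, hxU, hyF]
    have := hlow U hU F hFm _ _ hlU hlF
    set M := (o 𝓔 U \ o 𝓔 F).ncard
    have e1 : sg β R * (M + R + 4) = sg β R * M + sg β R * (R + 4) := by ring
    have e2 : (N + sg β R * (R + 4) + (2 * β + 2) + R + β + 2) * M =
      sg β R * M + (N + sg β R * (R + 3) + (2 * β + 2) + R + β + 2) * M := by ring
    rw [e1] at this
    rw [e2]
    have := Nat.zero_le ((N + sg β R * (R + 3) + (2 * β + 2) + R + β + 2) * M)
    omega
  · intro y
    obtain ⟨E, hE, q, hq, hd⟩ := near_elem hF y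
    refine ⟨mkV hE, ?_⟩
    obtain ⟨U, hU, hxU, hlU⟩ := hf (mkV hE)
    have h6 := same_close hF hU hE hlU hq hxU.symm
    have h7 := tri hT (f (mkV hE)) q y
    have h8 := T.dist_comm (u := q) (v := y)
    omega
  · refine ⟨sg β R * (max R (φ R) + 4) + (2 * β + 2) + max R (φ R), fun g x => ?_⟩
    obtain ⟨U, hU, hxU, hlU⟩ := hf x
    obtain ⟨F, hFm, hyF, hlF⟩ := hf (permV h3 g x)
    refine same_close hF hFm (h3 g U hU) (hlF.mono hT (le_max_left _ _))
      ((hX.loc g U _ _ hlU).mono hT (le_max_right _ _)) ?_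
    rw [← hyF, permV_val, hxU, smul_o h3]

end QT

/-- **Mosher–Sageev–Whyte.**  A quasi-action of a group `G` on a bounded
valence bushy tree `T` is quasi-conjugate to an isometric action of `G` on a
bounded valence bushy tree `T'`. -/
theorem quasiAction_on_bushy_tree {V : Type} (T : SimpleGraph V) (hT : T.IsTree)
    (hval : BoundedValence T) (hbushy : Bushy T)
    (G : Type) [Group G] (K C B : ℝ) (hK : 1 ≤ K) (hC : 0 ≤ C)
    (A : G → V → V)
    (hQI : ∀ g : G, IsQI K C (gdist T) (gdist T) (A g))
    (hid : ∀ v : V, gdist T (A 1 v) v ≤ B)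
    (hcomp : ∀ (g h : G) (v : V), gdist T (A (g * h) v) (A g (A h v)) ≤ B) :
    ∃ (V' : Type) (T' : SimpleGraph V'), T'.IsTree ∧ BoundedValence T' ∧
      Bushy T' ∧
      ∃ ρ : G →* Equiv.Perm V',
        (∀ (g : G) (u v : V'), T'.Adj (ρ g u) (ρ g v) ↔ T'.Adj u v) ∧
        ∃ (f : V' → V) (K' C' : ℝ), 1 ≤ K' ∧ 0 ≤ C' ∧
          IsQI K' C' (gdist T') (gdist T) f ∧
          ∃ B' : ℝ, ∀ (g : G) (x : V'), gdist T (f (ρ g x)) (A g (f x)) ≤ B' := by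
  obtain ⟨D, hD⟩ := hval
  obtain ⟨β, hβ⟩ := hbushy
  have hb := QT.bu0_of_bushy hT hβ
  have hB : QT.TB T D := ⟨hT, hD⟩
  obtain ⟨κ, hκ⟩ := exists_nat_ge (K + K * C + C + |B|)
  have hKC : 0 ≤ K * C := by positivity
  have hB0 := abs_nonneg B
  have hBB := le_abs_self B
  have hA : QT.QA T A κ := by
    refine ⟨fun g x y => ?_, fun g x y => ?_, fun g h x => ?_, fun x => ?_⟩
    · have h1 := (hQI g).2.1 x y
      unfold gdist at h1
      have h2 : (0 : ℝ) ≤ T.dist x y := Nat.cast_nonneg _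
      have h3 : (T.dist (A g x) (A g y) : ℝ) ≤ κ * T.dist x y + κ := by nlinarith
      exact_mod_cast h3
    · have h1 := (hQI g).1 x y
      unfold gdist at h1
      have h2 : (0 : ℝ) ≤ T.dist (A g x) (A g y) := Nat.cast_nonneg _
      have h4 : (T.dist x y : ℝ) ≤ K * (T.dist (A g x) (A g y) + C) := by
        have h5 : (T.dist x y : ℝ) / K ≤ T.dist (A g x) (A g y) + C := by linarith
        rw [div_le_iff₀ (by linarith)] at h5
        linarith
      have h3 : (T.dist x y : ℝ) ≤ κ * T.dist (A g x) (A g y) + κ := by nlinarith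
      exact_mod_cast h3
    · have h1 := hcomp g h x
      unfold gdist at h1
      have h3 : (T.dist (A (g * h) x) (A g (A h x)) : ℝ) ≤ κ := by linarith
      exact_mod_cast h3
    · have h1 := hid x
      unfold gdist at h1
      have h3 : (T.dist (A 1 x) x : ℝ) ≤ κ := by linarith
      exact_mod_cast h3
  let _ := QT.mulAct hB hA
  have hX : QT.Ctx T G A D β (2 * κ) (fun r => κ * (r + 2 * κ + 2 * κ) + κ) := by
    refine ⟨hB, hb, fun g u v r h => QT.loc_smul hB hA g h, fun g x => ?_⟩
    have h1 := hA.comp g⁻¹ g x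
    rw [inv_mul_cancel] at h1
    have h2 := hA.one x
    have h3 := QT.tri hT (A g⁻¹ (A g x)) (A 1 x) x
    rw [T.dist_comm (u := A g⁻¹ (A g x)) (v := A 1 x)] at h3
    omega
  obtain ⟨V', T', h1, h2, h3, ρ, h4, f, M, hM, h5, h6, h7, B', h8⟩ := QT.core hX
  have hM' : (1 : ℝ) ≤ M := by exact_mod_cast hM
  refine ⟨V', T', h1, h2, h3, ρ, h4, f, M, M, hM', by linarith, ⟨?_, ?_, ?_⟩, B', ?_⟩
  · intro x y
    have h9 : (T'.dist x y : ℝ) ≤ M * T.dist (f x) (f y) + M := by exact_mod_cast h5 x y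
    unfold gdist
    have : (T'.dist x y : ℝ) / M ≤ T.dist (f x) (f y) + 1 := by
      rw [div_le_iff₀ (by linarith)]
      linarith
    linarith
  · intro x y
    unfold gdist
    exact_mod_cast h6 x y
  · intro y
    obtain ⟨x, hx⟩ := h7 y
    refine ⟨x, ?_⟩
    unfold gdist
    exact_mod_cast hx
  · intro g x
    unfold gdist
    exact_mod_cast h8 g x
end
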